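/- Let α ∈ (2,3), λ > 0, σ > 0, n ≥ 2, and let γ ∈ H^{(α+1)/2+σ,2}(ℝ/ℤ,ℝⁿ) be injective, parametrized by arc-length, and a stationary point of E^α + λL, i.e. δE^α(γ;h) + λ∫_{ℝ/ℤ} ⟨γ'(u),h'(u)⟩ du = 0 for all h ∈ H^{(1+α)/2,2}(ℝ/ℤ,ℝⁿ). Then γ ∈ H^{α−1/2+σ̂,2}(ℝ/ℤ,ℝⁿ) for every σ̂ with 0 < σ̂ < σ. -/

import Mathlib

open MeasureTheory Filter Set
open scoped RealInnerProductSpace ENNReal Topology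

noncomputable section

/-- `ℝⁿ` -/
abbrev Rn (n : ℕ) := EuclideanSpace ℝ (Fin n)

variable {n : ℕ}

/-- A 1-periodic curve is injective as a map on `ℝ/ℤ`. -/
def PerInjective (γ : ℝ → Rn n) : Prop :=
  ∀ u v : ℝ, γ u = γ v → ∃ k : ℤ, v = u + k

/-- `γ` is a regular curve: `γ'(u) ≠ 0` for all `u`. -/
def RegularCurve (γ : ℝ → Rn n) : Prop := ∀ u : ℝ, deriv γ u ≠ 0

/-- `γ` is parametrized by arc-length: `|γ'(u)| = 1` for all `u`. -/
def ArcLengthParam (γ : ℝ → Rn n) : Prop := ∀ u : ℝ, ‖deriv γ u‖ = 1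

/-- The length `L(γ) = ∫₀¹ |γ'(θ)| dθ` of the closed curve `γ`. -/
def curveLen (γ : ℝ → Rn n) : ℝ := ∫ θ in (0:ℝ)..1, ‖deriv γ θ‖

/-- The arc length `L(γ|_{[u,u+w]}) = |∫_u^{u+w} |γ'(θ)| dθ|`. -/
def arcLen (γ : ℝ → Rn n) (u w : ℝ) : ℝ := |∫ θ in u..(u + w), ‖deriv γ θ‖|

/-- The intrinsic distance `d_γ(u+w,u)`. -/
def idist (γ : ℝ → Rn n) (u w : ℝ) : ℝ :=
  min (arcLen γ u w) (curveLen γ - arcLen γ u w)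

/-- The integrand of the O'Hara energy `E^α`. -/
def ohIntegrand (α : ℝ) (γ : ℝ → Rn n) (u w : ℝ) : ℝ :=
  (1 / ‖γ (u + w) - γ u‖ ^ α - 1 / idist γ u w ^ α) * ‖deriv γ (u + w)‖ * ‖deriv γ u‖

/-- The O'Hara energy `E^α`, with values in `[0,∞]`. -/
def oharaE (α : ℝ) (γ : ℝ → Rn n) : ℝ≥0∞ :=
  ∫⁻ u in Ioc (0:ℝ) 1, ∫⁻ w in Ioo (-(1:ℝ)/2) (1/2), ENNReal.ofReal (ohIntegrand α γ u w)

/-- The O'Hara energy `E^α` as a real number. -/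
def oharaER (α : ℝ) (γ : ℝ → Rn n) : ℝ := (oharaE α γ).toReal

/-- `[−1/2,−ε] ∪ [ε,1/2]`, the `w`-section of `U_ε`. -/
def Wset (ε : ℝ) : Set ℝ := Icc (-(1:ℝ)/2) (-ε) ∪ Icc ε (1/2)

/-- The truncated O'Hara energy `E^α_ε`, an integral over `U_ε`. -/
def oharaEeps (α ε : ℝ) (γ : ℝ → Rn n) : ℝ :=
  ∫ u in Ioc (0:ℝ) 1, ∫ w in Wset ε, ohIntegrand α γ u w

/-- `F` has directional (Gâteaux) derivative `d` at `γ` in direction `h`. -/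
def HasDirDeriv (F : (ℝ → Rn n) → ℝ) (γ h : ℝ → Rn n) (d : ℝ) : Prop :=
  Tendsto (fun τ : ℝ => (F (γ + τ • h) - F γ) / τ) (𝓝[≠] (0:ℝ)) (𝓝 d)

/-- Squared Gagliardo seminorm `[f]²_{H^{s,2}}` of a 1-periodic map. -/
def gagliardoSq (s : ℝ) {E : Type*} [NormedAddCommGroup E] (f : ℝ → E) : ℝ≥0∞ :=
  ∫⁻ u in Ioc (0:ℝ) 1, ∫⁻ w in Ioo (-(1:ℝ)/2) (1/2),
    ENNReal.ofReal (‖f (u + w) - f u‖ ^ 2 / |w| ^ (1 + 2 * s))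

/-- Membership in the fractional Sobolev space `H^{1+σ,2}(ℝ/ℤ,ℝⁿ)`, `σ ∈ (0,1)`:
a 1-periodic `C¹` function whose derivative has finite Gagliardo seminorm of order `σ`. -/
def MemH1 (σ : ℝ) (γ : ℝ → Rn n) : Prop :=
  Function.Periodic γ 1 ∧ ContDiff ℝ 1 γ ∧ gagliardoSq σ (deriv γ) < ⊤

/-- The norm of `H^{1+σ,2}(ℝ/ℤ,ℝⁿ)`. -/
def H1Norm (σ : ℝ) (γ : ℝ → Rn n) : ℝ :=
  Real.sqrt (∫ u in Ioc (0:ℝ) 1, (‖γ u‖ ^ 2 + ‖deriv γ u‖ ^ 2)) +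
    Real.sqrt ((gagliardoSq σ (deriv γ)).toReal)

/-- Membership of a 1-periodic map in `L²(ℝ/ℤ)`. -/
def MemL2per {E : Type*} [NormedAddCommGroup E] (f : ℝ → E) : Prop :=
  Function.Periodic f 1 ∧ AEStronglyMeasurable f (volume : Measure ℝ) ∧
    IntegrableOn (fun u => ‖f u‖ ^ 2) (Ioc (0:ℝ) 1) volume

/-- Membership in the fractional Sobolev space `H^{s,2}(ℝ/ℤ)`, `s ∈ (0,1)`. -/
def MemHs0 (s : ℝ) {E : Type*} [NormedAddCommGroup E] (f : ℝ → E) : Prop :=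
  MemL2per f ∧ gagliardoSq s f < ⊤

/-- The norm of `H^{s,2}(ℝ/ℤ)` for `s ∈ (0,1)`: `‖f‖_{L²} + [f]_{H^{s,2}}`. -/
def Hs0Norm (s : ℝ) {E : Type*} [NormedAddCommGroup E] (f : ℝ → E) : ℝ :=
  Real.sqrt (∫ u in Ioc (0:ℝ) 1, ‖f u‖ ^ 2) + Real.sqrt ((gagliardoSq s f).toReal)

/-- The `k`-th Fourier coefficient (`j`-th component) of a 1-periodic curve. -/
def fCoef (γ : ℝ → Rn n) (k : ℤ) (j : Fin n) : ℂ :=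
  ∫ u in (0:ℝ)..1, (γ u j : ℂ) * Complex.exp ((-2) * (Real.pi : ℂ) * Complex.I * (k : ℂ) * (u : ℂ))

/-- Membership in `H^{s,2}(ℝ/ℤ,ℝⁿ)` via the Fourier characterization:
`((1+|k|²)^{s/2} γ̂(k))_k ∈ ℓ²`. -/
def MemHF (s : ℝ) (γ : ℝ → Rn n) : Prop :=
  Function.Periodic γ 1 ∧ Continuous γ ∧
    Summable (fun k : ℤ => (1 + (k : ℝ) ^ 2) ^ s * ∑ j, ‖fCoef γ k j‖ ^ 2)

/-- The squared Fourier norm of `H^{s,2}(ℝ/ℤ,ℝⁿ)`. -/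
def fNormSq (s : ℝ) (γ : ℝ → Rn n) : ℝ :=
  ∑' k : ℤ, (1 + (k : ℝ) ^ 2) ^ s * ∑ j, ‖fCoef γ k j‖ ^ 2

/-- C¹-norm of a 1-periodic map. -/
def c1Norm (f : ℝ → Rn n) : ℝ := ⨆ u : Icc (0:ℝ) 1, (‖f u.1‖ + ‖deriv f u.1‖)

/-- The integrand of `Q(γ,h)`. -/
def Qintegrand (α : ℝ) (γ h : ℝ → Rn n) (u w : ℝ) : ℝ :=
  ⟪deriv γ u, deriv h u⟫ / |w| ^ α
    - ⟪γ (u + w) - γ u, h (u + w) - h u⟫ / |w| ^ (α + 2)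

/-- The integrand of `R(γ,h)`. -/
def Rintegrand (α : ℝ) (γ h : ℝ → Rn n) (u w : ℝ) : ℝ :=
  2 * ⟪deriv γ u, deriv h u⟫ * (1 / ‖γ (u + w) - γ u‖ ^ α - 1 / |w| ^ α)
    - α * ⟪γ (u + w) - γ u, h (u + w) - h u⟫ *
        (1 / ‖γ (u + w) - γ u‖ ^ (α + 2) - 1 / |w| ^ (α + 2))

/-- `R(γ,h)`, an absolutely convergent double integral over `(ℝ/ℤ) × [−1/2,1/2]`. -/
def Rval (α : ℝ) (γ h : ℝ → Rn n) : ℝ :=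
  ∫ p in (Ioc (0:ℝ) 1) ×ˢ (Icc (-(1:ℝ)/2) (1/2)), Rintegrand α γ h p.1 p.2

/-- Coefficients of the binomial series of `(1 - x)^(-p)`. -/
theorem exists_binomial_coeffs (p : ℝ) : ∃ c : ℕ → ℝ, c 0 = 1 ∧
    (∀ x : ℝ, |x| < 1 → HasSum (fun m => c m * x ^ m) ((1 - x) ^ (-p))) ∧
    ∀ r : ℝ, 0 ≤ r → r < 1 → Summable (fun m => |c m| * r ^ m) := by
  have hs : ∀ x : ℝ, |x| < 1 →
      HasSum (fun m => (Ring.choose (-p) m * (-1) ^ m) * x ^ m) ((1 - x) ^ (-p)) := by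
    intro x hx
    have h := (Real.one_add_rpow_hasFPowerSeriesOnBall_zero (a := -p)).hasSum (y := -x) (by
      simp [← ofReal_norm, hx])
    simp only [binomialSeries_apply, List.ofFn_const, List.prod_replicate, smul_eq_mul,
      zero_add] at h
    rw [← sub_eq_add_neg] at h
    refine h.congr_fun ?_
    intro m
    rw [neg_pow x]; ring
  refine ⟨_, ?_, hs, ?_⟩
  · simp
  · intro r hr hr1
    have := (hs r (by rwa [abs_of_nonneg hr])).summable.abs
    simpa [abs_mul, abs_of_nonneg hr] using this

theorem ENNReal.rpow_le_rpow_of_nonpos {x y : ℝ≥0∞} {s : ℝ} (h : x ≤ y) (hs : s ≤ 0) :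
    y ^ s ≤ x ^ s := by
  have h' := ENNReal.inv_le_inv.2 (ENNReal.rpow_le_rpow h (neg_nonneg.2 hs))
  rwa [← ENNReal.rpow_neg, ← ENNReal.rpow_neg, neg_neg] at h'

/-- The weight `1 + |k|`. -/
def wt (k : ℤ) : ℝ≥0∞ := 1 + (k.natAbs : ℝ≥0∞)

theorem wt_ne_zero (k : ℤ) : wt k ≠ 0 := by simp [wt]

theorem wt_ne_top (k : ℤ) : wt k ≠ ⊤ := by simp [wt]

theorem one_le_wt (k : ℤ) : 1 ≤ wt k := by simp [wt]

theorem wt_eq_ofReal (k : ℤ) : wt k = ENNReal.ofReal (1 + |(k : ℝ)|) := by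
  rw [ENNReal.ofReal_add zero_le_one (abs_nonneg _), ENNReal.ofReal_one, wt, ← Int.cast_abs,
    Int.abs_eq_natAbs, Int.cast_natCast, ENNReal.ofReal_natCast]

theorem wt_add_le (k l : ℤ) : wt (k + l) ≤ wt k * wt l := by
  have h : ((k + l).natAbs : ℝ≥0∞) ≤ k.natAbs + l.natAbs := by
    exact_mod_cast Int.natAbs_add_le k l
  calc wt (k + l) ≤ 1 + ((k.natAbs : ℝ≥0∞) + l.natAbs) := by unfold wt; gcongr
    _ ≤ 1 + ((k.natAbs : ℝ≥0∞) + l.natAbs) + k.natAbs * l.natAbs := le_self_add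
    _ = wt k * wt l := by unfold wt; ring

theorem wt_le_mul_sub (k l : ℤ) : wt k ≤ wt l * wt (k - l) := by
  simpa using wt_add_le l (k - l)

theorem tsum_wt_rpow_lt_top {t : ℝ} (ht : t < -1) : ∑' k, wt k ^ t < ⊤ := by
  have hs : Summable fun k : ℤ => (1 + |(k : ℝ)|) ^ t := by
    have h0 : Summable fun k : ℤ => |(k : ℝ)| ^ t := by
      simpa using Real.summable_abs_int_rpow (b := -t) (by linarith)
    have h1 : Summable fun k : ℤ => |(k : ℝ)| ^ t + if k = 0 then (1 : ℝ) else 0 :=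
      h0.add (summable_of_hasFiniteSupport ((Set.finite_singleton (0 : ℤ)).subset (by
        intro k hk; by_contra h; simp_all)))
    refine Summable.of_nonneg_of_le (fun k => by positivity) (fun k => ?_) h1
    by_cases hk : k = 0
    · subst hk; simp; positivity
    · simp only [hk, if_false, add_zero]
      exact Real.rpow_le_rpow_of_nonpos (by positivity) (by linarith) (by linarith)
  have : ∀ k, wt k ^ t = ENNReal.ofReal ((1 + |(k : ℝ)|) ^ t) := fun k => by
    rw [wt_eq_ofReal, ENNReal.ofReal_rpow_of_pos (by positivity)]
  simp_rw [this, ← ENNReal.ofReal_tsum_of_nonneg (fun k => by positivity) hs]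
  exact ENNReal.ofReal_lt_top

/-- Cauchy–Schwarz for sums in `[0,∞]`. -/
theorem ENNReal.sq_tsum_mul_le {ι : Type*} (f g : ι → ℝ≥0∞) :
    (∑' i, f i * g i) ^ 2 ≤ (∑' i, f i ^ 2) * ∑' i, g i ^ 2 := by
  let _ : MeasurableSpace ι := ⊤
  have h := ENNReal.lintegral_mul_le_Lp_mul_Lq (Measure.count : Measure ι)
    Real.HolderConjugate.two_two (f := f) (g := g) measurable_from_top.aemeasurable
    measurable_from_top.aemeasurable
  simp only [Pi.mul_apply, lintegral_count, ENNReal.rpow_two] at h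
  calc _ ≤ ((∑' i, f i ^ 2) ^ (1 / 2 : ℝ) * (∑' i, g i ^ 2) ^ (1 / 2 : ℝ)) ^ 2 := by gcongr
    _ = _ := by
      rw [mul_pow, ← ENNReal.rpow_two, ← ENNReal.rpow_mul, ← ENNReal.rpow_two, ← ENNReal.rpow_mul]
      norm_num

/-- Convolution of nonnegative sequences on `ℤ`. -/
def conv (A B : ℤ → ℝ≥0∞) (k : ℤ) : ℝ≥0∞ := ∑' l, A l * B (k - l)

/-- Weighted `ℓ¹` norm. -/
def wsum (s : ℝ) (A : ℤ → ℝ≥0∞) : ℝ≥0∞ := ∑' k, wt k ^ s * A k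

/-- Squared weighted `ℓ²` norm. -/
def hsum (s : ℝ) (A : ℤ → ℝ≥0∞) : ℝ≥0∞ := ∑' k, (wt k ^ s * A k) ^ 2

theorem conv_assoc (A B C : ℤ → ℝ≥0∞) : conv (conv A B) C = conv A (conv B C) := by
  funext k
  simp only [conv, ← ENNReal.tsum_mul_left, ← ENNReal.tsum_mul_right]
  rw [ENNReal.tsum_comm]
  refine tsum_congr fun l => ?_
  rw [← (Equiv.addRight l).tsum_eq]
  refine tsum_congr fun m => ?_
  simp only [Equiv.coe_addRight, add_sub_cancel_right, mul_assoc]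
  congr 3; ring

theorem conv_mono {A A' B B' : ℤ → ℝ≥0∞} (hA : A ≤ A') (hB : B ≤ B') :
    conv A B ≤ conv A' B' := fun _ =>
  ENNReal.tsum_le_tsum fun l => mul_le_mul' (hA l) (hB _)

theorem tsum_conv_eq (f : ℤ → ℤ → ℝ≥0∞) : ∑' k, ∑' l, f l (k - l) = ∑' l, ∑' m, f l m := by
  rw [ENNReal.tsum_comm]
  exact tsum_congr fun l => (Equiv.subRight l).tsum_eq (f l)

theorem wsum_conv_le {s : ℝ} (hs : 0 ≤ s) (A B : ℤ → ℝ≥0∞) :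
    wsum s (conv A B) ≤ wsum s A * wsum s B := by
  have h : ∀ k l, wt k ^ s * (A l * B (k - l)) ≤
      (wt l ^ s * A l) * (wt (k - l) ^ s * B (k - l)) := by
    intro k l
    calc _ ≤ (wt l * wt (k - l)) ^ s * (A l * B (k - l)) := by
          gcongr; exact wt_le_mul_sub k l
      _ = _ := by rw [ENNReal.mul_rpow_of_nonneg _ _ hs]; ring
  calc wsum s (conv A B) ≤ ∑' k, ∑' l, (wt l ^ s * A l) * (wt (k - l) ^ s * B (k - l)) := by
        refine ENNReal.tsum_le_tsum fun k => ?_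
        rw [conv, ← ENNReal.tsum_mul_left]
        exact ENNReal.tsum_le_tsum fun l => h k l
    _ = wsum s A * wsum s B := by
        rw [tsum_conv_eq (fun l m => (wt l ^ s * A l) * (wt m ^ s * B m))]
        simp only [ENNReal.tsum_mul_left, ENNReal.tsum_mul_right, wsum]

theorem tsum_le_wsum {s : ℝ} (hs : 0 ≤ s) (A : ℤ → ℝ≥0∞) : ∑' k, A k ≤ wsum s A :=
  ENNReal.tsum_le_tsum fun k => by
    simpa using mul_le_mul_left (ENNReal.rpow_le_rpow (one_le_wt k) hs) (A k)

theorem wsum_const_mul (s : ℝ) (c : ℝ≥0∞) (A : ℤ → ℝ≥0∞) :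
    wsum s (fun k => c * A k) = c * wsum s A := by
  rw [wsum, wsum, ← ENNReal.tsum_mul_left]
  exact tsum_congr fun k => by ring

/-- Young's inequality `ℓ² * ℓ¹ ⊂ ℓ²` with a kernel. -/
theorem hsum_conv_wsum_le {s : ℝ} (hs : 0 ≤ s) (A B : ℤ → ℝ≥0∞) :
    hsum s (conv A B) ≤ hsum s A * wsum s B ^ 2 := by
  set a : ℤ → ℝ≥0∞ := fun k => wt k ^ s * A k
  set b : ℤ → ℝ≥0∞ := fun k => wt k ^ s * B k
  have hk : ∀ k, (wt k ^ s * conv A B k) ^ 2 ≤ (∑' l, a l ^ 2 * b (k - l)) * wsum s B := by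
    intro k
    have h1 : wt k ^ s * conv A B k ≤
        ∑' l, (a l * b (k - l) ^ (1 / 2 : ℝ)) * b (k - l) ^ (1 / 2 : ℝ) := by
      rw [conv, ← ENNReal.tsum_mul_left]
      refine ENNReal.tsum_le_tsum fun l => ?_
      rw [mul_assoc, ← ENNReal.rpow_add_of_nonneg _ _ (by norm_num) (by norm_num)]
      calc _ ≤ (wt l * wt (k - l)) ^ s * (A l * B (k - l)) := by
            gcongr; exact wt_le_mul_sub k l
        _ = _ := by
          rw [ENNReal.mul_rpow_of_nonneg _ _ hs]; simp only [a, b]; norm_num; ring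
    calc _ ≤ _ := pow_le_pow_left' h1 2
      _ ≤ _ := ENNReal.sq_tsum_mul_le _ _
      _ = _ := by
        have h2 : ∀ x : ℝ≥0∞, (x ^ (1 / 2 : ℝ)) ^ 2 = x := fun x => by
          rw [← ENNReal.rpow_two, ← ENNReal.rpow_mul]; norm_num
        simp only [mul_pow, h2]
        congr 1
        exact (Equiv.subLeft k).tsum_eq b
  calc hsum s (conv A B) ≤ ∑' k, (∑' l, a l ^ 2 * b (k - l)) * wsum s B :=
        ENNReal.tsum_le_tsum hk
    _ = (∑' l, ∑' m, a l ^ 2 * b m) * wsum s B := by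
        rw [ENNReal.tsum_mul_right, tsum_conv_eq (fun l m => a l ^ 2 * b m)]
    _ = _ := by
        simp only [ENNReal.tsum_mul_left, ENNReal.tsum_mul_right, a, b]
        rw [hsum, ← wsum]; ring

theorem hsum_mono_exp {s t : ℝ} (h : s ≤ t) (A : ℤ → ℝ≥0∞) : hsum s A ≤ hsum t A :=
  ENNReal.tsum_le_tsum fun k => by
    gcongr
    exact one_le_wt k

theorem hsum_const_mul (s : ℝ) (c : ℝ≥0∞) (A : ℤ → ℝ≥0∞) :
    hsum s (fun k => c * A k) = c ^ 2 * hsum s A := by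
  rw [hsum, hsum, ← ENNReal.tsum_mul_left]
  exact tsum_congr fun k => by ring

/-- Cauchy–Schwarz embedding of weighted `ℓ²` into weighted `ℓ¹`. -/
theorem wsum_lt_top_of_hsum {s t : ℝ} (h : s + 1 / 2 < t) {A : ℤ → ℝ≥0∞} (hA : hsum t A < ⊤) :
    wsum s A < ⊤ := by
  have h1 : wsum s A ^ 2 ≤ (∑' k, wt k ^ (2 * (s - t))) * hsum t A := by
    have : wsum s A = ∑' k, wt k ^ (s - t) * (wt k ^ t * A k) := tsum_congr fun k => by
      rw [← mul_assoc, ← ENNReal.rpow_add _ _ (wt_ne_zero k) (wt_ne_top k)]; simp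
    rw [this]
    refine (ENNReal.sq_tsum_mul_le _ _).trans_eq ?_
    congr 1
    exact tsum_congr fun k => by
      rw [← ENNReal.rpow_two, ← ENNReal.rpow_mul]; ring_nf
  have h2 := (ENNReal.mul_lt_top (tsum_wt_rpow_lt_top (t := 2 * (s - t)) (by linarith)) hA)
  have h3 := h1.trans_lt h2
  by_contra hc
  simp only [not_lt, top_le_iff] at hc
  simp [hc] at h3

/-- Product estimate `h^{max s 0} * h^μ ⊂ h^s` for `μ > max (s + 1/2) 0`. -/
theorem hsum_conv_hsum_lt_top {s μ : ℝ} (hμ : 0 < μ) (hs : s + 1 / 2 < μ) {A B : ℤ → ℝ≥0∞}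
    (hA : hsum (max s 0) A < ⊤) (hB : hsum μ B < ⊤) : hsum s (conv A B) < ⊤ := by
  rcases le_or_gt 0 s with h0 | h0
  · rw [max_eq_left h0] at hA
    exact (hsum_conv_wsum_le h0 A B).trans_lt
      (ENNReal.mul_lt_top hA (ENNReal.pow_lt_top (wsum_lt_top_of_hsum hs hB)))
  rw [max_eq_right h0.le] at hA
  simp only [hsum, ENNReal.rpow_zero, one_mul] at hA
  set d : ℤ → ℝ≥0∞ := fun k => wt k ^ μ * B k with hd
  set K : ℤ → ℤ → ℝ≥0∞ := fun k l => wt k ^ s * wt (k - l) ^ (-μ)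
  set S := ∑' k, wt k ^ (2 * (s - μ)) with hS
  have hStop : S < ⊤ := tsum_wt_rpow_lt_top (by linarith)
  have hK : ∀ l, ∑' k, K k l ^ 2 ≤ 2 * S := by
    intro l
    have hsh : ∑' k, wt (k - l) ^ (2 * (s - μ)) = S :=
      (Equiv.subRight l).tsum_eq fun k => wt k ^ (2 * (s - μ))
    rw [two_mul]
    nth_rw 2 [← hsh]
    rw [hS, ← ENNReal.tsum_add]
    refine ENNReal.tsum_le_tsum fun k => ?_
    have key : ∀ x y z : ℝ≥0∞, z ≤ x → z ≤ y → z ≠ 0 → z ≠ ⊤ →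
        (x ^ s * y ^ (-μ)) ^ 2 ≤ z ^ (2 * (s - μ)) := by
      intro x y z hzx hzy hz hz'
      calc (x ^ s * y ^ (-μ)) ^ 2 ≤ (z ^ s * z ^ (-μ)) ^ 2 := by
            exact pow_le_pow_left' (mul_le_mul' (ENNReal.rpow_le_rpow_of_nonpos hzx h0.le)
              (ENNReal.rpow_le_rpow_of_nonpos hzy (by linarith))) 2
        _ = z ^ (2 * (s - μ)) := by
            rw [← ENNReal.rpow_add _ _ hz hz', ← ENNReal.rpow_two, ← ENNReal.rpow_mul]
            ring_nf
    rcases le_total (wt k) (wt (k - l)) with h | h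
    · exact (key _ _ _ le_rfl h (wt_ne_zero k) (wt_ne_top k)).trans
        le_self_add
    · exact (key _ _ _ h le_rfl (wt_ne_zero _) (wt_ne_top _)).trans
        le_add_self
  have hk : ∀ k, (wt k ^ s * conv A B k) ^ 2 ≤ (∑' l, (K k l * A l) ^ 2) * ∑' l, d l ^ 2 := by
    intro k
    have h1 : wt k ^ s * conv A B k = ∑' l, (K k l * A l) * d (k - l) := by
      rw [conv, ← ENNReal.tsum_mul_left]
      refine tsum_congr fun l => ?_
      have : wt (k - l) ^ (-μ) * wt (k - l) ^ μ = 1 := by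
        rw [← ENNReal.rpow_add _ _ (wt_ne_zero _) (wt_ne_top _)]; simp
      calc _ = wt k ^ s * 1 * (A l * B (k - l)) := by ring
        _ = _ := by rw [← this]; simp only [K, hd]; ring
    rw [h1, ← (Equiv.subLeft k).tsum_eq (fun l => d l ^ 2)]
    exact ENNReal.sq_tsum_mul_le _ _
  calc hsum s (conv A B) ≤ ∑' k, (∑' l, (K k l * A l) ^ 2) * ∑' l, d l ^ 2 :=
        ENNReal.tsum_le_tsum hk
    _ = (∑' l, (∑' k, K k l ^ 2) * A l ^ 2) * hsum μ B := by
        rw [ENNReal.tsum_mul_right, ENNReal.tsum_comm]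
        simp only [mul_pow, ENNReal.tsum_mul_right]
        simp only [hsum, hd, mul_pow]
    _ ≤ (∑' l, 2 * S * A l ^ 2) * hsum μ B := by
        gcongr with l
        exact hK l
    _ < ⊤ := by
        rw [ENNReal.tsum_mul_left]
        exact ENNReal.mul_lt_top (ENNReal.mul_lt_top (ENNReal.mul_lt_top (by simp) hStop) hA) hB

/-- The character `u ↦ e^{2πiku}`. -/
def ex (k : ℤ) (u : ℝ) : ℂ := Complex.exp (2 * Real.pi * Complex.I * k * u)

theorem ex_continuous (k : ℤ) : Continuous (ex k) := by unfold ex; fun_prop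

theorem norm_ex (k : ℤ) (u : ℝ) : ‖ex k u‖ = 1 := by
  have : ex k u = Complex.exp (((2 * Real.pi * k * u : ℝ) : ℂ) * Complex.I) := by
    unfold ex; congr 1; push_cast; ring
  rw [this, Complex.norm_exp_ofReal_mul_I]

theorem ex_add (k : ℤ) (u w : ℝ) : ex k (u + w) = ex k u * ex k w := by
  unfold ex; rw [← Complex.exp_add]; congr 1; push_cast; ring

theorem ex_add_left (k l : ℤ) (u : ℝ) : ex (k + l) u = ex k u * ex l u := by
  unfold ex; rw [← Complex.exp_add]; congr 1; push_cast; ring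

theorem ex_zero (k : ℤ) : ex k 0 = 1 := by simp [ex]

theorem ex_zero_left (u : ℝ) : ex 0 u = 1 := by simp [ex]

theorem ex_one (k : ℤ) : ex k 1 = 1 := by
  rw [ex, Complex.exp_eq_one_iff]; exact ⟨k, by push_cast; ring⟩

theorem ex_periodic (k : ℤ) : Function.Periodic (ex k) 1 := fun u => by
  rw [ex_add, ex_one, mul_one]

theorem ex_mul_neg (k : ℤ) (u : ℝ) : ex k u * ex (-k) u = 1 := by
  rw [← ex_add_left]; simp [ex]

theorem hasDerivAt_ex (k : ℤ) (u : ℝ) :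
    HasDerivAt (ex k) (2 * Real.pi * Complex.I * k * ex k u) u := by
  have h : HasDerivAt (fun u : ℝ => 2 * Real.pi * Complex.I * k * (u : ℂ))
      (2 * Real.pi * Complex.I * k) u := by
    simpa using (Complex.ofRealCLM.hasDerivAt (x := u)).const_mul (2 * Real.pi * Complex.I * k)
  exact h.cexp.congr_deriv (mul_comm _ _)

/-- A continuous `1`-periodic function. -/
structure ContPer {E : Type*} [TopologicalSpace E] (F : ℝ → E) : Prop where
  cont : Continuous F
  per : Function.Periodic F 1

theorem ContPer.ex (k : ℤ) : ContPer (ex k) := ⟨ex_continuous k, ex_periodic k⟩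

theorem ContPer.mul {F G : ℝ → ℂ} (hF : ContPer F) (hG : ContPer G) :
    ContPer (fun u => F u * G u) :=
  ⟨hF.cont.mul hG.cont, fun u => by simp only [hF.per u, hG.per u]⟩

theorem ContPer.add {F G : ℝ → ℂ} (hF : ContPer F) (hG : ContPer G) :
    ContPer (fun u => F u + G u) :=
  ⟨hF.cont.add hG.cont, fun u => by simp only [hF.per u, hG.per u]⟩

theorem ContPer.sub {F G : ℝ → ℂ} (hF : ContPer F) (hG : ContPer G) :
    ContPer (fun u => F u - G u) :=
  ⟨hF.cont.sub hG.cont, fun u => by simp only [hF.per u, hG.per u]⟩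

theorem ContPer.const (c : ℂ) : ContPer (fun _ : ℝ => c) := ⟨continuous_const, fun _ => rfl⟩

theorem ContPer.pow {F : ℝ → ℂ} (hF : ContPer F) (m : ℕ) : ContPer (fun u => F u ^ m) :=
  ⟨hF.cont.pow m, fun u => by simp only [hF.per u]⟩

theorem ContPer.sum {ι : Type*} (t : Finset ι) {F : ι → ℝ → ℂ} (hF : ∀ i, ContPer (F i)) :
    ContPer (fun u => ∑ i ∈ t, F i u) :=
  ⟨continuous_finsetSum _ fun i _ => (hF i).cont, fun u => by
    simp only [fun i => (hF i).per u]⟩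

theorem ContPer.shift {E : Type*} [TopologicalSpace E] {F : ℝ → E} (hF : ContPer F) (w : ℝ) :
    ContPer (fun u => F (u + w)) :=
  ⟨hF.cont.comp (by fun_prop), fun u => by
    rw [show u + 1 + w = u + w + 1 by ring, hF.per]⟩

/-- The `k`-th Fourier coefficient of a `1`-periodic function. -/
def fc (F : ℝ → ℂ) (k : ℤ) : ℂ := ∫ u in (0:ℝ)..1, F u * ex (-k) u

theorem ContPer.intervalIntegrable {F : ℝ → ℂ} (hF : ContPer F) (k : ℤ) :
    IntervalIntegrable (fun u => F u * _root_.ex k u) volume 0 1 :=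
  (hF.mul (ContPer.ex k)).cont.intervalIntegrable _ _

theorem fc_add {F G : ℝ → ℂ} (hF : ContPer F) (hG : ContPer G) (k : ℤ) :
    fc (fun u => F u + G u) k = fc F k + fc G k := by
  simp only [fc, add_mul]
  exact intervalIntegral.integral_add (hF.intervalIntegrable _) (hG.intervalIntegrable _)

theorem fc_sub {F G : ℝ → ℂ} (hF : ContPer F) (hG : ContPer G) (k : ℤ) :
    fc (fun u => F u - G u) k = fc F k - fc G k := by
  simp only [fc, sub_mul]
  exact intervalIntegral.integral_sub (hF.intervalIntegrable _) (hG.intervalIntegrable _)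

theorem fc_const_mul (c : ℂ) (F : ℝ → ℂ) (k : ℤ) :
    fc (fun u => c * F u) k = c * fc F k := by
  simp only [fc, mul_assoc]
  exact intervalIntegral.integral_const_mul _ _

theorem fc_sum {ι : Type*} (t : Finset ι) {F : ι → ℝ → ℂ} (hF : ∀ i, ContPer (F i)) (k : ℤ) :
    fc (fun u => ∑ i ∈ t, F i u) k = ∑ i ∈ t, fc (F i) k := by
  simp only [fc, Finset.sum_mul]
  exact intervalIntegral.integral_finsetSum fun i _ => (hF i).intervalIntegrable _

theorem integral_ex (k : ℤ) : ∫ u in (0:ℝ)..1, ex k u = if k = 0 then 1 else 0 := by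
  split_ifs with h
  · subst h; simp [ex]
  · have h2 : (2 * Real.pi * Complex.I * k : ℂ) ≠ 0 := by
      simp [h, Real.pi_ne_zero, Complex.I_ne_zero]
    have : ∫ u in (0:ℝ)..1, 2 * Real.pi * Complex.I * k * ex k u = ex k 1 - ex k 0 :=
      intervalIntegral.integral_eq_sub_of_hasDerivAt (fun u _ => hasDerivAt_ex k u)
        ((continuous_const.mul (ex_continuous k)).intervalIntegrable _ _)
    rw [intervalIntegral.integral_const_mul, ex_one, ex_zero, sub_self] at this
    exact (mul_eq_zero.1 this).resolve_left h2

theorem fc_ex (l k : ℤ) : fc (ex l) k = if l = k then 1 else 0 := by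
  simp only [fc, ← ex_add_left, integral_ex]
  congr 1; rw [← sub_eq_add_neg, sub_eq_zero]

theorem fc_const (c : ℂ) (k : ℤ) : fc (fun _ => c) k = if k = 0 then c else 0 := by
  simp only [fc, intervalIntegral.integral_const_mul, integral_ex]; simp

theorem norm_fc_le {F : ℝ → ℂ} {C : ℝ} (hF : ∀ u, ‖F u‖ ≤ C) (k : ℤ) : ‖fc F k‖ ≤ C := by
  have := intervalIntegral.norm_integral_le_of_norm_le_const (a := (0:ℝ)) (b := 1)
    (f := fun u => F u * ex (-k) u) (C := C)
    (fun u _ => by rw [norm_mul, norm_ex, mul_one]; exact hF u)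
  simpa [fc] using this

theorem fc_shift {F : ℝ → ℂ} (hF : ContPer F) (w : ℝ) (k : ℤ) :
    fc (fun u => F (u + w)) k = ex k w * fc F k := by
  have h1 : ∀ u, F (u + w) * ex (-k) u = ex k w * (F (u + w) * ex (-k) (u + w)) := fun u => by
    rw [ex_add]; linear_combination (-F (u + w) * ex (-k) u) * ex_mul_neg k w
  simp only [fc, h1, intervalIntegral.integral_const_mul]
  congr 1
  rw [intervalIntegral.integral_comp_add_right (fun u => F u * ex (-k) u)]
  have := (hF.mul (ContPer.ex (-k))).per.intervalIntegral_add_eq w 0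
  simpa [add_comm] using this

theorem fc_deriv {F F' : ℝ → ℂ} (hF : ContPer F) (hF' : Continuous F')
    (hd : ∀ u, HasDerivAt F (F' u) u) (k : ℤ) :
    fc F' k = 2 * Real.pi * Complex.I * k * fc F k := by
  have h := intervalIntegral.integral_eq_sub_of_hasDerivAt (a := (0:ℝ)) (b := 1)
    (fun u _ => (hd u).mul (hasDerivAt_ex (-k) u))
    (Continuous.intervalIntegrable (by
      have := ex_continuous (-k); have := hF.cont; fun_prop) _ _)
  have h2 : F 1 = F 0 := by simpa using hF.per 0
  simp only [Pi.mul_apply, h2, ex_one, ex_zero, sub_self] at h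
  rw [intervalIntegral.integral_add (f := fun u => F' u * ex (-k) u)
    (g := fun u => F u * (2 * Real.pi * Complex.I * ((-k : ℤ) : ℂ) * ex (-k) u))
    ((hF'.mul (ex_continuous _)).intervalIntegrable _ _)
    (Continuous.intervalIntegrable (by
      have := ex_continuous (-k); have := hF.cont; fun_prop) _ _)] at h
  have h3 : ∫ u in (0:ℝ)..1, F u * (2 * Real.pi * Complex.I * ((-k : ℤ) : ℂ) * ex (-k) u) =
      -(2 * Real.pi * Complex.I * k) * fc F k := by
    rw [fc, ← intervalIntegral.integral_const_mul]
    congr 1; funext u; push_cast; ring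
  rw [h3] at h
  rw [fc]; linear_combination h

instance : Fact ((0 : ℝ) < 1) := ⟨zero_lt_one⟩

theorem hasSum_fc {F : ℝ → ℂ} (hF : ContPer F) (hs : Summable (fc F)) (u : ℝ) :
    HasSum (fun k => fc F k * ex k u) (F u) := by
  let f : C(AddCircle (1:ℝ), ℂ) := ⟨hF.per.lift, continuous_coinduced_dom.2 hF.cont⟩
  have hf : ∀ u : ℝ, f (u : AddCircle (1:ℝ)) = F u := fun u => rfl
  have hc : ∀ k, fourierCoeff f k = fc F k := by
    intro k
    rw [fourierCoeff_eq_intervalIntegral _ _ 0, fc]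
    simp only [hf, fourier_coe_apply, zero_add, smul_eq_mul, one_smul,
      Complex.ofReal_one, div_one, ex]
    congr 1; funext u; ring
  have h := has_pointwise_sum_fourier_series_of_summable (f := f)
    (by rw [show fourierCoeff f = fc F from funext hc]; exact hs) (u : AddCircle (1:ℝ))
  simp only [hf, hc, smul_eq_mul, fourier_coe_apply, Complex.ofReal_one, div_one] at h
  exact h

theorem hasSum_fc_mul {F G : ℝ → ℂ} (hF : ContPer F) (hG : ContPer G) (hs : Summable (fc F))
    (k : ℤ) : HasSum (fun l => fc F l * fc G (k - l)) (fc (fun u => F u * G u) k) := by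
  obtain ⟨C, hC⟩ := (isCompact_Icc (a := (0:ℝ)) (b := 1)).exists_bound_of_continuousOn
    hG.cont.continuousOn
  have h := intervalIntegral.hasSum_integral_of_dominated_convergence (a := (0:ℝ)) (b := 1)
    (μ := volume)
    (F := fun l u => fc F l * (G u * ex (-(k - l)) u)) (f := fun u => F u * G u * ex (-k) u)
    (fun l _ => ‖fc F l‖ * C)
    (fun l => (continuous_const.mul (hG.mul (ContPer.ex _)).cont).aestronglyMeasurable)
    (fun l => Eventually.of_forall fun u hu => by
      rw [uIoc_of_le zero_le_one] at hu
      simp only [norm_mul, norm_ex, mul_one]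
      gcongr
      exact hC u ⟨hu.1.le, hu.2⟩)
    (Eventually.of_forall fun u _ => hs.norm.mul_right C)
    (by simp)
    (Eventually.of_forall fun u _ => by
      have := (hasSum_fc hF hs u).mul_right (G u * ex (-k) u)
      rw [← mul_assoc] at this
      refine this.congr_fun fun l => ?_
      rw [show -(k - l) = -k + l by ring, ex_add_left]; ring)
  simpa only [intervalIntegral.integral_const_mul] using! h

/-- The sequence `A` dominates the Fourier coefficients of `F`. -/
def Maj (F : ℝ → ℂ) (A : ℤ → ℝ≥0∞) : Prop := ∀ k, ‖fc F k‖ₑ ≤ A k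

theorem Maj.summable {F : ℝ → ℂ} {A : ℤ → ℝ≥0∞} (h : Maj F A) (hA : ∑' k, A k ≠ ⊤) :
    Summable (fc F) := by
  refine Summable.of_norm ?_
  have h2 : ∑' k, ‖fc F k‖ₑ ≠ ⊤ := ne_top_of_le_ne_top hA (ENNReal.tsum_le_tsum h)
  simpa [enorm, Function.comp_def] using ENNReal.summable_toReal h2

theorem Maj.mul_of_summable {F G : ℝ → ℂ} {A B : ℤ → ℝ≥0∞} (hF : ContPer F) (hG : ContPer G)
    (hA : Maj F A) (hB : Maj G B) (hs : Summable (fc F)) :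
    Maj (fun u => F u * G u) (conv A B) := by
  intro k
  have h := hasSum_fc_mul hF hG hs k
  rw [← h.tsum_eq]
  refine enorm_tsum_le_tsum_enorm.trans (ENNReal.tsum_le_tsum fun l => ?_)
  rw [enorm_mul]
  exact mul_le_mul' (hA l) (hB _)

theorem Maj.mul {F G : ℝ → ℂ} {A B : ℤ → ℝ≥0∞} (hF : ContPer F) (hG : ContPer G)
    (hA : Maj F A) (hB : Maj G B) (hs : ∑' k, A k ≠ ⊤) :
    Maj (fun u => F u * G u) (conv A B) :=
  Maj.mul_of_summable hF hG hA hB (hA.summable hs)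

theorem Maj.mono {F : ℝ → ℂ} {A B : ℤ → ℝ≥0∞} (h : Maj F A) (hAB : A ≤ B) : Maj F B :=
  fun k => (h k).trans (hAB k)

theorem Maj.const_mul {F : ℝ → ℂ} {A : ℤ → ℝ≥0∞} (h : Maj F A) (c : ℂ) :
    Maj (fun u => c * F u) (fun k => ‖c‖ₑ * A k) := fun k => by
  rw [fc_const_mul, enorm_mul]; exact mul_le_mul_right (h k) _

theorem Maj.add {F G : ℝ → ℂ} {A B : ℤ → ℝ≥0∞} (hF : ContPer F) (hG : ContPer G)
    (hA : Maj F A) (hB : Maj G B) : Maj (fun u => F u + G u) (fun k => A k + B k) := fun k => by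
  rw [fc_add hF hG]; exact (enorm_add_le _ _).trans (add_le_add (hA k) (hB k))

theorem Maj.sum {ι : Type*} (t : Finset ι) {F : ι → ℝ → ℂ} {A : ι → ℤ → ℝ≥0∞}
    (hF : ∀ i, ContPer (F i)) (hA : ∀ i, Maj (F i) (A i)) :
    Maj (fun u => ∑ i ∈ t, F i u) (fun k => ∑ i ∈ t, A i k) := fun k => by
  rw [fc_sum t hF]; exact (enorm_sum_le _ _).trans (Finset.sum_le_sum fun i _ => hA i k)

theorem Maj.shift {F : ℝ → ℂ} {A : ℤ → ℝ≥0∞} (hF : ContPer F) (hA : Maj F A) (w : ℝ) :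
    Maj (fun u => F (u + w)) A := fun k => by
  rw [fc_shift hF, enorm_mul, ← ofReal_norm (ex k w), norm_ex, ENNReal.ofReal_one, one_mul]
  exact hA k

/-- Domination of Fourier coefficients passes to averages. -/
theorem fc_average {G : ℝ → ℝ → ℂ} (hG : Continuous (Function.uncurry G)) (k : ℤ) :
    fc (fun u => ∫ s in (0:ℝ)..1, G s u) k = ∫ s in (0:ℝ)..1, fc (G s) k := by
  simp only [fc, ← intervalIntegral.integral_mul_const]
  refine intervalIntegral_intervalIntegral_swap ?_
  have hc : Continuous (Function.uncurry fun u s : ℝ => G s u * ex (-k) u) := by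
    have := ex_continuous (-k)
    have h2 : Continuous fun p : ℝ × ℝ => G p.2 p.1 := hG.comp continuous_swap
    exact h2.mul (this.comp continuous_fst)
  rw [uIoc_of_le zero_le_one]
  exact (hc.continuousOn.integrableOn_compact (isCompact_Icc.prod isCompact_Icc)).mono_set
    (Set.prod_mono Ioc_subset_Icc_self Ioc_subset_Icc_self)

theorem Maj.average {G : ℝ → ℝ → ℂ} {A : ℤ → ℝ≥0∞} (hG : Continuous (Function.uncurry G))
    (hA : ∀ s ∈ Icc (0:ℝ) 1, Maj (G s) A) : Maj (fun u => ∫ s in (0:ℝ)..1, G s u) A := by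
  intro k
  have h1 := fc_average hG k
  by_cases hk : A k = ⊤
  · simp [hk]
  have h2 : ‖∫ s in (0:ℝ)..1, fc (G s) k‖ ≤ (A k).toReal * |1 - 0| :=
    intervalIntegral.norm_integral_le_of_norm_le_const fun s hs => by
      rw [uIoc_of_le zero_le_one] at hs
      have := ENNReal.toReal_mono hk (hA s ⟨hs.1.le, hs.2⟩ k)
      simpa using this
  rw [h1, ← ofReal_norm]
  refine ENNReal.ofReal_le_of_le_toReal (by simpa using h2)

/-- Domination of Fourier coefficients passes to uniformly convergent series. -/
theorem Maj.tsum {F : ℝ → ℂ} {G : ℕ → ℝ → ℂ} {Y : ℕ → ℤ → ℝ≥0∞} {g : ℕ → ℝ}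
    (hG : ∀ m, ContPer (G m)) (hg : ∀ m u, ‖G m u‖ ≤ g m) (hs : Summable g)
    (hF : ∀ u, HasSum (fun m => G m u) (F u)) (hY : ∀ m, Maj (G m) (Y m)) :
    Maj F (fun k => ∑' m, Y m k) := by
  intro k
  have h := intervalIntegral.hasSum_integral_of_dominated_convergence (a := (0:ℝ)) (b := 1)
    (μ := volume) (F := fun m u => G m u * ex (-k) u) (f := fun u => F u * ex (-k) u)
    (fun m _ => g m)
    (fun m => ((hG m).mul (ContPer.ex _)).cont.aestronglyMeasurable)
    (fun m => Eventually.of_forall fun u _ => by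
      simp only [norm_mul, norm_ex, mul_one]; exact hg m u)
    (Eventually.of_forall fun u _ => hs) (by simp)
    (Eventually.of_forall fun u _ => (hF u).mul_right _)
  rw [fc, ← h.tsum_eq]
  exact enorm_tsum_le_tsum_enorm.trans (ENNReal.tsum_le_tsum fun m => hY m k)

theorem conv_comm (A B : ℤ → ℝ≥0∞) : conv A B = conv B A := by
  funext k
  rw [conv, conv, ← (Equiv.subLeft k).tsum_eq]
  exact tsum_congr fun l => by simp [mul_comm]

theorem Maj.enorm_le {F : ℝ → ℂ} {A : ℤ → ℝ≥0∞} (hF : ContPer F) (h : Maj F A)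
    (hA : ∑' k, A k ≠ ⊤) (u : ℝ) : ‖F u‖ₑ ≤ ∑' k, A k := by
  rw [← (hasSum_fc hF (h.summable hA) u).tsum_eq]
  refine enorm_tsum_le_tsum_enorm.trans (ENNReal.tsum_le_tsum fun k => ?_)
  rw [enorm_mul, ← ofReal_norm (ex k u), norm_ex, ENNReal.ofReal_one, mul_one]
  exact h k

/-- Convolution powers. -/
def cpow (A : ℤ → ℝ≥0∞) : ℕ → ℤ → ℝ≥0∞
  | 0 => fun k => if k = 0 then 1 else 0
  | m + 1 => conv A (cpow A m)

theorem wsum_cpow_le {s : ℝ} (hs : 0 ≤ s) (A : ℤ → ℝ≥0∞) (m : ℕ) :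
    wsum s (cpow A m) ≤ wsum s A ^ m := by
  induction m with
  | zero =>
    rw [wsum, tsum_eq_single 0]
    · simp [cpow, wt]
    · intro k hk; simp [cpow, hk]
  | succ m ih =>
    rw [pow_succ']
    exact (wsum_conv_le hs _ _).trans (mul_le_mul_right ih _)

theorem cpow_eq_zero {A : ℤ → ℝ≥0∞} {D : ℕ} (hA : ∀ k : ℤ, D < k.natAbs → A k = 0) (m : ℕ) :
    ∀ k : ℤ, m * D < k.natAbs → cpow A m k = 0 := by
  induction m with
  | zero => intro k hk; simp [cpow]; rintro rfl; simp at hk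
  | succ m ih =>
    intro k hk
    refine ENNReal.tsum_eq_zero.2 fun l => ?_
    rcases lt_or_ge D l.natAbs with h | h
    · simp [hA l h]
    · rw [ih (k - l) (by rw [add_mul, one_mul] at hk; omega), mul_zero]

theorem Maj.pow {F : ℝ → ℂ} {A : ℤ → ℝ≥0∞} (hF : ContPer F) (h : Maj F A)
    (hA : ∑' k, A k ≠ ⊤) (m : ℕ) : Maj (fun u => F u ^ m) (cpow A m) := by
  induction m with
  | zero =>
    intro k
    simp only [pow_zero, fc_const, cpow]
    split_ifs <;> simp
  | succ m ih =>
    simp only [pow_succ']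
    exact Maj.mul hF (hF.pow m) h ih hA

/-- The majorant `Q^j` on the frequency band `|k| ≤ jD`. -/
def bandPow (Q : ℝ) (D j : ℕ) (k : ℤ) : ℝ≥0∞ :=
  if k.natAbs ≤ j * D then ENNReal.ofReal (Q ^ j) else 0

theorem Maj.pow_band {F : ℝ → ℂ} {A : ℤ → ℝ≥0∞} {Q : ℝ} {D : ℕ} (hF : ContPer F) (h : Maj F A)
    (hA : ∑' k, A k ≠ ⊤) (hD : ∀ k : ℤ, D < k.natAbs → A k = 0) (hQ : ∀ u, ‖F u‖ ≤ Q) (j : ℕ) :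
    Maj (fun u => F u ^ j) (bandPow Q D j) := by
  intro k
  rw [bandPow]
  split_ifs with hk
  · rw [← ofReal_norm]
    refine ENNReal.ofReal_le_ofReal (norm_fc_le (fun u => ?_) k)
    rw [norm_pow]
    exact pow_le_pow_left₀ (norm_nonneg _) (hQ u) j
  · rw [← cpow_eq_zero hD j k (by omega)]
    exact Maj.pow hF h hA j k

theorem exists_poly_mul_geom_le (K D : ℕ) {Q Q' : ℝ} (hQ : 0 ≤ Q) (hQQ : Q < Q') :
    ∃ C : ℝ, 0 ≤ C ∧ ∀ j : ℕ, (1 + 2 * (j * D : ℝ)) ^ K * Q ^ j ≤ C * Q' ^ j := by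
  have hQ' : 0 < Q' := hQ.trans_lt hQQ
  have hr : |Q / Q'| < 1 := by
    rw [abs_of_nonneg (by positivity), div_lt_one hQ']; exact hQQ
  obtain ⟨B, hB⟩ := (tendsto_pow_const_mul_const_pow_of_abs_lt_one K hr).bddAbove_range
  have hB' : ∀ j : ℕ, (j : ℝ) ^ K * (Q / Q') ^ j ≤ B := fun j => hB ⟨j, rfl⟩
  have hB0 : 0 ≤ B := by
    refine le_trans ?_ (hB' 0); positivity
  refine ⟨(1 + 2 * (D : ℝ)) ^ K * (B + 1), by positivity, fun j => ?_⟩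
  have h1 : (Q / Q') ^ j * Q' ^ j = Q ^ j := by
    rw [← mul_pow, div_mul_cancel₀ _ hQ'.ne']
  rcases Nat.eq_zero_or_pos j with rfl | hj
  · simp
    have : (1:ℝ) ≤ (1 + 2 * (D : ℝ)) ^ K := one_le_pow₀ (by linarith [Nat.cast_nonneg (α := ℝ) D])
    nlinarith
  · have hj1 : (1 : ℝ) ≤ j := by exact_mod_cast hj
    have h2 : 1 + 2 * (j * D : ℝ) ≤ (1 + 2 * D) * j := by
      nlinarith [Nat.cast_nonneg (α := ℝ) D]
    calc (1 + 2 * (j * D : ℝ)) ^ K * Q ^ j ≤ ((1 + 2 * D) * j) ^ K * Q ^ j := by gcongr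
      _ = (1 + 2 * (D : ℝ)) ^ K * ((j : ℝ) ^ K * (Q / Q') ^ j) * Q' ^ j := by
        rw [mul_pow, ← h1]; ring
      _ ≤ (1 + 2 * (D : ℝ)) ^ K * (B + 1) * Q' ^ j := by
        gcongr; linarith [hB' j]

theorem wsum_bandPow_le {s : ℝ} (hs : 0 ≤ s) (Q : ℝ) (D j K : ℕ) (hK : s + 1 ≤ K) :
    wsum s (bandPow Q D j) ≤
      ENNReal.ofReal ((1 + 2 * (j * D : ℝ)) ^ K) * ENNReal.ofReal (Q ^ j) := by
  set N : ℕ := j * D with hN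
  have h0 : ((1:ℝ≥0∞) + 2 * (N : ℝ≥0∞)) = ENNReal.ofReal (1 + 2 * (j * D : ℝ)) := by
    rw [ENNReal.ofReal_add (by positivity) (by positivity), ENNReal.ofReal_mul (by positivity),
      hN, ← Nat.cast_mul, ENNReal.ofReal_natCast]
    simp
  have h1 : wsum s (bandPow Q D j) =
      ∑ k ∈ Finset.Icc (-(N : ℤ)) N, wt k ^ s * bandPow Q D j k := by
    refine tsum_eq_sum fun k hk => ?_
    rw [bandPow, if_neg, mul_zero]
    simp only [Finset.mem_Icc, not_and, not_le] at hk
    omega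
  have h2 : ∀ k ∈ Finset.Icc (-(N : ℤ)) N, wt k ^ s * bandPow Q D j k ≤
      (1 + 2 * (N : ℝ≥0∞)) ^ s * ENNReal.ofReal (Q ^ j) := by
    intro k hk
    rw [Finset.mem_Icc] at hk
    gcongr
    · have : (k.natAbs : ℝ≥0∞) ≤ N := by exact_mod_cast (by omega : k.natAbs ≤ N)
      calc wt k ≤ 1 + (N : ℝ≥0∞) := by unfold wt; gcongr
        _ ≤ 1 + 2 * (N : ℝ≥0∞) := by
          gcongr
          exact le_mul_of_one_le_left' (by norm_num)
    · rw [bandPow]; split_ifs <;> simp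
  rw [h1]
  refine (Finset.sum_le_card_nsmul _ _ _ h2).trans ?_
  have hcard : (Finset.Icc (-(N : ℤ)) N).card = 1 + 2 * N := by
    rw [Int.card_Icc]; omega
  rw [hcard, nsmul_eq_mul, ← mul_assoc,
    ENNReal.ofReal_pow (p := 1 + 2 * (j * D : ℝ)) (by positivity), ← h0]
  gcongr
  push_cast
  have hone : (1:ℝ≥0∞) ≤ 1 + 2 * (N : ℝ≥0∞) := le_self_add
  calc (1 + 2 * (N : ℝ≥0∞)) * (1 + 2 * (N : ℝ≥0∞)) ^ s
      = (1 + 2 * (N : ℝ≥0∞)) ^ (1 + s) := by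
        rw [ENNReal.rpow_add_of_nonneg _ _ zero_le_one hs, ENNReal.rpow_one]
    _ ≤ (1 + 2 * (N : ℝ≥0∞)) ^ (K : ℝ) := ENNReal.rpow_le_rpow_of_exponent_le hone (by linarith)
    _ = _ := ENNReal.rpow_natCast _ _

/-- The majorant of `(p + r)^m` for `p` band limited and bounded by `Q` and `r` majorized
by `R`. -/
def powMaj (Q : ℝ) (D : ℕ) (R : ℤ → ℝ≥0∞) (m : ℕ) (k : ℤ) : ℝ≥0∞ :=
  ∑ j ∈ Finset.range (m + 1), conv (bandPow Q D j) (cpow R (m - j)) k * (m.choose j : ℝ≥0∞)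

theorem tsum_bandPow_ne_top (Q : ℝ) (D j : ℕ) : ∑' k, bandPow Q D j k ≠ ⊤ := by
  have h := (tsum_le_wsum le_rfl _).trans (wsum_bandPow_le le_rfl Q D j 1 (by norm_num))
  exact ne_top_of_le_ne_top (ENNReal.mul_ne_top ENNReal.ofReal_ne_top ENNReal.ofReal_ne_top) h

theorem Maj.pow_add {p r : ℝ → ℂ} {A R : ℤ → ℝ≥0∞} {Q : ℝ} {D : ℕ} (hp : ContPer p)
    (hr : ContPer r) (hA : Maj p A) (hAs : ∑' k, A k ≠ ⊤) (hD : ∀ k : ℤ, D < k.natAbs → A k = 0)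
    (hQ : ∀ u, ‖p u‖ ≤ Q) (hR : Maj r R) (hRs : ∑' k, R k ≠ ⊤) (m : ℕ) :
    Maj (fun u => (p u + r u) ^ m) (powMaj Q D R m) := by
  simp only [_root_.add_pow]
  refine Maj.sum _ (fun j => ((hp.pow j).mul (hr.pow _)).mul (ContPer.const _)) fun j k => ?_
  have h := (Maj.mul (hp.pow j) (hr.pow (m - j)) (Maj.pow_band hp hA hAs hD hQ j)
    (Maj.pow hr hR hRs (m - j)) (tsum_bandPow_ne_top _ _ _)).const_mul (m.choose j : ℂ) k
  simp only [mul_comm (m.choose j : ℂ)] at h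
  rw [mul_comm]
  simpa [← ofReal_norm] using h

theorem wsum_sum {ι : Type*} (s : ℝ) (t : Finset ι) (A : ι → ℤ → ℝ≥0∞) :
    wsum s (fun k => ∑ i ∈ t, A i k) = ∑ i ∈ t, wsum s (A i) := by
  simp only [wsum, Finset.mul_sum]
  exact Summable.tsum_finsetSum fun _ _ => ENNReal.summable

theorem exists_wsum_powMaj_le {s : ℝ} (hs : 0 ≤ s) {Q Q' ε : ℝ} (hQ : 0 ≤ Q) (hQQ : Q < Q')
    (hε : 0 ≤ ε) (D : ℕ) {R : ℤ → ℝ≥0∞} (hR : wsum s R ≤ ENNReal.ofReal ε) :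
    ∃ C : ℝ, 0 ≤ C ∧ ∀ m, wsum s (powMaj Q D R m) ≤ ENNReal.ofReal (C * (Q' + ε) ^ m) := by
  obtain ⟨K, hK⟩ := exists_nat_ge (s + 1)
  obtain ⟨C, hC0, hC⟩ := exists_poly_mul_geom_le K D hQ hQQ
  have hQ' : 0 ≤ Q' := hQ.trans hQQ.le
  refine ⟨C, hC0, fun m => ?_⟩
  have hterm : ∀ j ∈ Finset.range (m + 1),
      wsum s (fun k => conv (bandPow Q D j) (cpow R (m - j)) k * (m.choose j : ℝ≥0∞)) ≤
        ENNReal.ofReal (C * (Q' ^ j * ε ^ (m - j) * m.choose j)) := by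
    intro j _
    simp only [mul_comm _ (m.choose j : ℝ≥0∞)]
    rw [wsum_const_mul]
    calc (m.choose j : ℝ≥0∞) * wsum s (conv (bandPow Q D j) (cpow R (m - j)))
        ≤ m.choose j * (wsum s (bandPow Q D j) * wsum s (cpow R (m - j))) := by
          gcongr; exact wsum_conv_le hs _ _
      _ ≤ m.choose j * (ENNReal.ofReal (C * Q' ^ j) * ENNReal.ofReal (ε ^ (m - j))) := by
          gcongr
          · refine (wsum_bandPow_le hs Q D j K hK).trans ?_
            rw [← ENNReal.ofReal_mul (by positivity)]
            exact ENNReal.ofReal_le_ofReal (hC j)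
          · refine (wsum_cpow_le hs R _).trans ?_
            rw [ENNReal.ofReal_pow hε]
            gcongr
      _ = _ := by
          rw [← ENNReal.ofReal_natCast, ← ENNReal.ofReal_mul (by positivity),
            ← ENNReal.ofReal_mul (by positivity)]
          congr 1; ring
  have : wsum s (powMaj Q D R m) = ∑ j ∈ Finset.range (m + 1),
      wsum s (fun k => conv (bandPow Q D j) (cpow R (m - j)) k * (m.choose j : ℝ≥0∞)) :=
    wsum_sum s _ _
  rw [this]
  refine (Finset.sum_le_sum hterm).trans ?_
  rw [← ENNReal.ofReal_sum_of_nonneg (fun j _ => by positivity), ← Finset.mul_sum, ← _root_.add_pow]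

/-- A power series applied to `p + r`, with a majorant depending only on the majorants of
`p` and `r`. -/
theorem exists_maj_comp {s : ℝ} (hs : 0 ≤ s) {Q ε : ℝ} (hQ : 0 ≤ Q) (hε : 0 ≤ ε)
    (hQε : Q + ε < 1) {A R : ℤ → ℝ≥0∞} (hAs : ∑' k, A k ≠ ⊤) {D : ℕ}
    (hD : ∀ k : ℤ, D < k.natAbs → A k = 0) (hR : wsum s R ≤ ENNReal.ofReal ε) {c : ℕ → ℝ}
    (hc : ∀ r : ℝ, 0 ≤ r → r < 1 → Summable (fun m => |c m| * r ^ m)) :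
    ∃ Y : ℤ → ℝ≥0∞, wsum s Y < ⊤ ∧ ∀ p r H : ℝ → ℂ, ContPer p → ContPer r → Maj p A → Maj r R →
      (∀ u, ‖p u‖ ≤ Q) → (∀ u, HasSum (fun m => (c m : ℂ) * (p u + r u) ^ m) (H u)) →
      Maj H Y := by
  set Q' := (Q + (1 - ε)) / 2 with hQ'
  obtain ⟨C, hC0, hC⟩ := exists_wsum_powMaj_le hs hQ (show Q < Q' by linarith) hε D hR
  have hRs : ∑' k, R k ≤ ENNReal.ofReal ε := (tsum_le_wsum hs R).trans hR
  refine ⟨fun k => ∑' m, ‖(c m : ℂ)‖ₑ * powMaj Q D R m k, ?_, ?_⟩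
  · have h1 : wsum s (fun k => ∑' m, ‖(c m : ℂ)‖ₑ * powMaj Q D R m k) =
        ∑' m, ‖(c m : ℂ)‖ₑ * wsum s (powMaj Q D R m) := by
      simp only [wsum, ← ENNReal.tsum_mul_left]
      rw [ENNReal.tsum_comm]
      exact tsum_congr fun m => tsum_congr fun k => by ring
    rw [h1]
    have h2 : ∀ m, ‖(c m : ℂ)‖ₑ * wsum s (powMaj Q D R m) ≤
        ENNReal.ofReal (C * (|c m| * (Q' + ε) ^ m)) := fun m => by
      calc _ ≤ ‖(c m : ℂ)‖ₑ * ENNReal.ofReal (C * (Q' + ε) ^ m) := by gcongr; exact hC m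
        _ = _ := by
          rw [← ofReal_norm, ← ENNReal.ofReal_mul (norm_nonneg _), Complex.norm_real,
            Real.norm_eq_abs]
          congr 1; ring
    exact (ENNReal.tsum_le_tsum h2).trans_lt
      ((hc _ (by linarith) (by linarith)).mul_left C).tsum_ofReal_lt_top
  · intro p r H hp hr hpA hrR hpQ hH
    have hRt : ∑' k, R k ≠ ⊤ := ne_top_of_le_ne_top ENNReal.ofReal_ne_top hRs
    have hrε : ∀ u, ‖r u‖ ≤ ε := fun u => by
      have := (hrR.enorm_le hr hRt u).trans hRs
      rwa [← ofReal_norm, ENNReal.ofReal_le_ofReal_iff hε] at this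
    refine Maj.tsum (G := fun m u => (c m : ℂ) * (p u + r u) ^ m)
      (g := fun m => |c m| * (Q + ε) ^ m)
      (fun m => (ContPer.const _).mul ((hp.add hr).pow m)) (fun m u => ?_)
      (hc _ (by linarith) hQε) hH fun m => ?_
    · rw [norm_mul, norm_pow, Complex.norm_real, Real.norm_eq_abs]
      gcongr
      exact (norm_add_le _ _).trans (add_le_add (hpQ u) (hrε u))
    · exact (Maj.pow_add hp hr hpA hAs hD hpQ hrR hRt m).const_mul _

/-- The average of `F` over the segment from `u` to `u + w`. -/
def avg {E : Type*} [NormedAddCommGroup E] [NormedSpace ℝ E] (F : ℝ → E) (w u : ℝ) : E :=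
  ∫ t in (0:ℝ)..1, F (u + t * w)

theorem ContPer.avg {E : Type*} [NormedAddCommGroup E] [NormedSpace ℝ E] {F : ℝ → E}
    (hF : ContPer F) (w : ℝ) : ContPer (avg F w) := by
  refine ⟨?_, fun u => ?_⟩
  · have := hF.cont
    exact intervalIntegral.continuous_parametric_intervalIntegral_of_continuous'
      (f := fun u t => F (u + t * w)) (by fun_prop) 0 1
  · simp only [_root_.avg]
    congr 1; funext t
    rw [show u + 1 + t * w = u + t * w + 1 by ring, hF.per]

theorem Maj.avg {F : ℝ → ℂ} {A : ℤ → ℝ≥0∞} (hF : ContPer F) (hA : Maj F A) (w : ℝ) :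
    Maj (avg F w) A := by
  have := hF.cont
  exact Maj.average (G := fun s u => F (u + s * w)) (by fun_prop) fun s _ => hA.shift hF _

theorem norm_ex_sub_ex_le (k : ℤ) (x y : ℝ) :
    ‖ex k x - ex k y‖ ≤ 2 * Real.pi * |(k : ℝ)| * |x - y| := by
  have h := (convex_univ (𝕜 := ℝ)).norm_image_sub_le_of_norm_hasDerivWithin_le
    (f := ex k) (C := 2 * Real.pi * |(k : ℝ)|) (x := y) (y := x)
    (fun u _ => (hasDerivAt_ex k u).hasDerivWithinAt) (fun u _ => by
      rw [norm_mul, norm_ex, mul_one]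
      simp [abs_of_pos Real.pi_pos]) (mem_univ _) (mem_univ _)
  simpa using h

theorem norm_ex_sub_ex_le_rpow {θ : ℝ} (h0 : 0 ≤ θ) (h1 : θ ≤ 1) (k : ℤ) (x y : ℝ) :
    ‖ex k x - ex k y‖ ≤ 2 * Real.pi * |(k : ℝ)| ^ θ * |x - y| ^ θ := by
  rw [mul_assoc, ← Real.mul_rpow (abs_nonneg _) (abs_nonneg _)]
  rcases le_total (|(k : ℝ)| * |x - y|) 1 with h | h
  · refine (norm_ex_sub_ex_le k x y).trans ?_
    rw [mul_assoc]
    gcongr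
    exact Real.self_le_rpow_of_le_one (by positivity) h h1
  · have h2 : ‖ex k x - ex k y‖ ≤ 2 := by
      refine (norm_sub_le _ _).trans ?_
      rw [norm_ex, norm_ex]; norm_num
    have h3 : 1 ≤ (|(k : ℝ)| * |x - y|) ^ θ := Real.one_le_rpow h h0
    nlinarith [Real.pi_gt_three]

/-- The majorant of order-`θ` differences of a function majorized by `a`. -/
def fracMaj (θ : ℝ) (a : ℤ → ℝ≥0∞) (k : ℤ) : ℝ≥0∞ :=
  ENNReal.ofReal (2 * Real.pi) * (ENNReal.ofReal (|(k : ℝ)| ^ θ) * a k)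

theorem Maj.sub_avg {F : ℝ → ℂ} {a : ℤ → ℝ≥0∞} {θ : ℝ} (h0 : 0 ≤ θ) (h1 : θ ≤ 1)
    (hF : ContPer F) (ha : Maj F a) {s : ℝ} (hs : s ∈ Icc (0:ℝ) 1) (w : ℝ) :
    Maj (fun u => F (u + s * w) - _root_.avg F w u)
      (fun k => ENNReal.ofReal (|w| ^ θ) * fracMaj θ a k) := by
  have hc := hF.cont
  have : (fun u => F (u + s * w) - _root_.avg F w u) =
      fun u => ∫ t in (0:ℝ)..1, (F (u + s * w) - F (u + t * w)) := by
    funext u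
    rw [intervalIntegral.integral_sub (by simp)
      (Continuous.intervalIntegrable (by fun_prop) _ _)]
    simp [_root_.avg]
  rw [this]
  refine Maj.average (G := fun t u => F (u + s * w) - F (u + t * w)) (by fun_prop)
    fun t ht k => ?_
  rw [fc_sub (hF.shift _) (hF.shift _), fc_shift hF, fc_shift hF, ← sub_mul, enorm_mul, fracMaj,
    ← mul_assoc, ← mul_assoc, ← ENNReal.ofReal_mul (by positivity),
    ← ENNReal.ofReal_mul (by positivity), ← ofReal_norm (ex _ _ - _)]
  gcongr
  · refine (norm_ex_sub_ex_le_rpow h0 h1 k _ _).trans ?_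
    rw [mul_comm (|w| ^ θ), mul_right_comm]
    have : |s * w - t * w| ≤ |w| := by
      rw [← sub_mul, abs_mul]
      refine mul_le_of_le_one_left (abs_nonneg _) (abs_le.2 ⟨?_, ?_⟩) <;>
        linarith [hs.1, hs.2, ht.1, ht.2]
    gcongr 2 * Real.pi * ?_ * |(k : ℝ)| ^ θ
    gcongr
  · exact ha k

theorem one_sub_sum_avg_sq {n : ℕ} {F : Fin n → ℝ → ℂ} (hF : ∀ j, ContPer (F j))
    (hunit : ∀ u, ∑ j, F j u ^ 2 = 1) (w u : ℝ) :
    1 - ∑ j, avg (F j) w u ^ 2 =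
      ∫ s in (0:ℝ)..1, ∑ j,
        (F j (u + s * w) - avg (F j) w u) * (F j (u + s * w) - avg (F j) w u) := by
  have hc := fun j => (hF j).cont
  have h1 : ∀ s : ℝ, ∑ j, (F j (u + s * w) - avg (F j) w u) * (F j (u + s * w) - avg (F j) w u) =
      1 + ∑ j, avg (F j) w u ^ 2 - ∑ j, 2 * avg (F j) w u * F j (u + s * w) := by
    intro s
    rw [← hunit (u + s * w), ← Finset.sum_add_distrib, ← Finset.sum_sub_distrib]
    exact Finset.sum_congr rfl fun j _ => by ring
  simp only [h1]
  rw [intervalIntegral.integral_sub (by simp) (Continuous.intervalIntegrable (by fun_prop) _ _),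
    intervalIntegral.integral_finsetSum
      (fun j _ => Continuous.intervalIntegrable (by have := hc j; fun_prop) _ _)]
  simp only [intervalIntegral.integral_const_mul]
  have : ∀ j, 2 * avg (F j) w u * ∫ s in (0:ℝ)..1, F j (u + s * w) = 2 * avg (F j) w u ^ 2 := by
    intro j; rw [← avg]; ring
  simp only [this, ← Finset.mul_sum]
  simp; ring

theorem maj_one_sub_sum_avg_sq {n : ℕ} {F : Fin n → ℝ → ℂ} (hF : ∀ j, ContPer (F j))
    (hunit : ∀ u, ∑ j, F j u ^ 2 = 1) {a : ℤ → ℝ≥0∞} (ha : ∀ j, Maj (F j) a) {θ : ℝ}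
    (h0 : 0 ≤ θ) (h1 : θ ≤ 1) (hat : ∑' k, a k ≠ ⊤) (w : ℝ) :
    Maj (fun u => 1 - ∑ j, avg (F j) w u ^ 2)
      (fun k => ENNReal.ofReal (|w| ^ (2 * θ)) * (n * conv (fracMaj θ a) (fracMaj θ a) k)) := by
  simp only [one_sub_sum_avg_sq hF hunit]
  have hc := fun j => (hF j).cont
  have hcm := fun j => ((hF j).avg w).cont
  refine Maj.average (G := fun s u => ∑ j, (F j (u + s * w) - avg (F j) w u) *
    (F j (u + s * w) - avg (F j) w u)) ?_ fun s hs => ?_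
  · refine continuous_finsetSum _ fun j _ => ?_
    have := hc j; have := hcm j
    fun_prop
  · have hcp : ∀ j, ContPer (fun u => F j (u + s * w) - avg (F j) w u) := fun j =>
      ((hF j).shift _).sub ((hF j).avg w)
    have hm := fun j => Maj.sub_avg h0 h1 (hF j) (ha j) hs w
    refine (Maj.sum Finset.univ (fun j => (hcp j).mul (hcp j)) fun j =>
      Maj.mul_of_summable (hcp j) (hcp j) (hm j) (hm j) ?_).mono fun k => ?_
    · have h2 : fc (fun u => F j (u + s * w) - avg (F j) w u) =
          fun k => fc (fun u => F j (u + s * w)) k - fc (avg (F j) w) k :=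
        funext fun k => fc_sub ((hF j).shift _) ((hF j).avg w) k
      rw [h2]
      exact (((ha j).shift (hF j) _).summable hat).sub (((ha j).avg (hF j) w).summable hat)
    · simp only [Finset.sum_const, Finset.card_univ, Fintype.card_fin, nsmul_eq_mul, conv]
      rw [← ENNReal.tsum_mul_left, ← ENNReal.tsum_mul_left, ← ENNReal.tsum_mul_left]
      refine ENNReal.tsum_le_tsum fun l => le_of_eq ?_
      rw [two_mul, Real.rpow_add_of_nonneg (abs_nonneg _) h0 h0, ENNReal.ofReal_mul (by positivity)]
      ring

/-- The Fourier partial sum. -/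
def partSum (F : ℝ → ℂ) (N : ℕ) (u : ℝ) : ℂ := ∑ l ∈ Finset.Icc (-(N : ℤ)) N, fc F l * ex l u

theorem contPer_partSum (F : ℝ → ℂ) (N : ℕ) : ContPer (partSum F N) :=
  ContPer.sum _ fun l => (ContPer.const _).mul (ContPer.ex l)

theorem fc_partSum (F : ℝ → ℂ) (N : ℕ) (k : ℤ) :
    fc (partSum F N) k = if k.natAbs ≤ N then fc F k else 0 := by
  unfold partSum
  rw [fc_sum _ fun l => (ContPer.const _).mul (ContPer.ex l)]
  simp only [fc_const_mul, fc_ex, mul_ite, mul_one, mul_zero, Finset.sum_ite_eq', Finset.mem_Icc]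
  congr 1
  rw [eq_iff_iff]; omega

/-- Low-frequency part of a sequence. -/
def lowPart (a : ℤ → ℝ≥0∞) (N : ℕ) (k : ℤ) : ℝ≥0∞ := if k.natAbs ≤ N then a k else 0

/-- High-frequency part of a sequence. -/
def highPart (a : ℤ → ℝ≥0∞) (N : ℕ) (k : ℤ) : ℝ≥0∞ := if k.natAbs ≤ N then 0 else a k

theorem Maj.partSum {F : ℝ → ℂ} {a : ℤ → ℝ≥0∞} (ha : Maj F a) (N : ℕ) :
    Maj (partSum F N) (lowPart a N) := fun k => by
  rw [fc_partSum, lowPart]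
  split_ifs
  · exact ha k
  · simp

theorem Maj.sub_partSum {F : ℝ → ℂ} {a : ℤ → ℝ≥0∞} (hF : ContPer F) (ha : Maj F a) (N : ℕ) :
    Maj (fun u => F u - _root_.partSum F N u) (highPart a N) := fun k => by
  rw [fc_sub hF (contPer_partSum F N), fc_partSum, highPart]
  split_ifs
  · simp
  · simpa using ha k

theorem exists_wsum_highPart_le {s : ℝ} {a : ℤ → ℝ≥0∞} (ha : wsum s a < ⊤) {δ : ℝ≥0∞}
    (hδ : 0 < δ) : ∃ N, wsum s (highPart a N) ≤ δ := by
  have h := (ENNReal.tendsto_tsum_compl_atTop_zero ha.ne).eventually (ge_mem_nhds hδ)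
  obtain ⟨t, ht⟩ := h.exists
  have hsub := tsum_subtype {x | x ∉ t} (fun k => wt k ^ s * a k)
  refine ⟨t.sup Int.natAbs, le_trans ?_ (hsub.symm.le.trans ht)⟩
  refine ENNReal.tsum_le_tsum fun k => ?_
  rw [highPart]
  split_ifs with hk
  · simp
  · rw [Set.indicator_of_mem]
    intro hkt
    exact hk (Finset.le_sup (f := Int.natAbs) hkt)

theorem lowPart_le (a : ℤ → ℝ≥0∞) (N : ℕ) : lowPart a N ≤ a := fun k => by
  rw [lowPart]; split_ifs <;> simp

theorem avg_add_avg {F G H : ℝ → ℂ} (hG : ContPer G) (hH : ContPer H)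
    (h : ∀ u, F u = G u + H u) (w u : ℝ) : avg F w u = avg G w u + avg H w u := by
  have := hG.cont; have := hH.cont
  simp only [avg, h]
  exact intervalIntegral.integral_add (Continuous.intervalIntegrable (by fun_prop) _ _)
    (Continuous.intervalIntegrable (by fun_prop) _ _)

theorem summable_shift_coeffs {c : ℕ → ℝ}
    (hc : ∀ r : ℝ, 0 ≤ r → r < 1 → Summable (fun m => |c m| * r ^ m)) (r : ℝ) (h0 : 0 ≤ r)
    (h1 : r < 1) : Summable (fun m => |c (m + 1)| * r ^ m) := by
  set r' := (r + 1) / 2 with hr'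
  have h2 := ((summable_nat_add_iff 1).2 (hc r' (by linarith) (by linarith))).mul_right r'⁻¹
  refine h2.of_nonneg_of_le (fun m => by positivity) fun m => ?_
  have : r' ≠ 0 := by intro h; linarith
  rw [pow_succ, mul_assoc, mul_assoc, mul_inv_cancel₀ this, mul_one]
  gcongr
  linarith

theorem ContPer.tsum {G : ℕ → ℝ → ℂ} {g : ℕ → ℝ} (hG : ∀ m, ContPer (G m))
    (hg : ∀ m u, ‖G m u‖ ≤ g m) (hs : Summable g) : ContPer (fun u => ∑' m, G m u) :=
  ⟨continuous_tsum (fun m => (hG m).cont) hs hg, fun u => tsum_congr fun m => (hG m).per u⟩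

/-- The function `x ↦ ((1 - x)^(-p) - 1) / x`, evaluated at `x = 1 - ∑ avg²`, has Fourier
coefficients dominated by a fixed weighted-summable sequence, uniformly in `w`. -/
theorem exists_maj_series {n : ℕ} {F : Fin n → ℝ → ℂ} (hF : ∀ j, ContPer (F j))
    {a : ℤ → ℝ≥0∞} (ha : ∀ j, Maj (F j) a) {s q : ℝ} (hs : 0 ≤ s) (has : wsum s a < ⊤)
    (hq0 : 0 ≤ q) (hq : q < 1) {c : ℕ → ℝ}
    (hc : ∀ r : ℝ, 0 ≤ r → r < 1 → Summable (fun m => |c m| * r ^ m)) :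
    ∃ Y : ℤ → ℝ≥0∞, wsum s Y < ⊤ ∧ ∀ w : ℝ,
      (∀ u, ‖1 - ∑ j, avg (F j) w u ^ 2‖ ≤ q) → ∀ H : ℝ → ℂ,
      (∀ u, HasSum (fun m => (c m : ℂ) * (1 - ∑ j, avg (F j) w u ^ 2) ^ m) (H u)) → Maj H Y := by
  set ε := (1 - q) / 3 with hε
  have hε0 : 0 < ε := by linarith
  obtain ⟨N, hN⟩ := exists_wsum_highPart_le has
    (δ := ENNReal.ofReal ε / (n * (2 * wsum s a) + 1)) (ENNReal.div_pos
      (by simpa using hε0) (by finiteness))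
  set R : ℤ → ℝ≥0∞ := fun k => n * conv (highPart a N) (fun k => 2 * a k) k with hRdef
  set A : ℤ → ℝ≥0∞ := fun k => (if k = 0 then 1 else 0) + n * conv (lowPart a N) (lowPart a N) k
    with hAdef
  have hat : ∑' k, a k ≠ ⊤ := ((tsum_le_wsum hs a).trans_lt has).ne
  have hlt : ∑' k, lowPart a N k ≠ ⊤ :=
    ne_top_of_le_ne_top hat (ENNReal.tsum_le_tsum (lowPart_le a N))
  have hR : wsum s R ≤ ENNReal.ofReal ε := by
    rw [hRdef, wsum_const_mul]
    calc (n : ℝ≥0∞) * wsum s (conv (highPart a N) fun k => 2 * a k)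
        ≤ n * (wsum s (highPart a N) * wsum s (fun k => 2 * a k)) := by
          gcongr; exact wsum_conv_le hs _ _
      _ ≤ wsum s (highPart a N) * (n * (2 * wsum s a) + 1) := by
          rw [wsum_const_mul, mul_left_comm]
          gcongr; exact le_self_add
      _ ≤ ENNReal.ofReal ε / (n * (2 * wsum s a) + 1) * (n * (2 * wsum s a) + 1) := by gcongr
      _ = _ := ENNReal.div_mul_cancel (by simp) (by finiteness)
  have hconvt : ∀ B C : ℤ → ℝ≥0∞, ∑' k, B k ≠ ⊤ → ∑' k, C k ≠ ⊤ → ∑' k, conv B C k ≠ ⊤ := by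
    intro B C hB hC
    have := wsum_conv_le le_rfl B C
    simp only [wsum, ENNReal.rpow_zero, one_mul] at this
    exact ne_top_of_le_ne_top (ENNReal.mul_ne_top hB hC) this
  have hAs : ∑' k, A k ≠ ⊤ := by
    rw [ENNReal.tsum_add, ENNReal.tsum_mul_left]
    refine ENNReal.add_ne_top.2 ⟨by rw [tsum_ite_eq]; simp,
      ENNReal.mul_ne_top (by simp) (hconvt _ _ hlt hlt)⟩
  have hRt : ∑' k, R k ≠ ⊤ :=
    ne_top_of_le_ne_top ENNReal.ofReal_ne_top ((tsum_le_wsum hs R).trans hR)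
  have hD : ∀ k : ℤ, 2 * N < k.natAbs → A k = 0 := by
    intro k hk
    have h1 : k ≠ 0 := by rintro rfl; simp at hk
    have h2 : conv (lowPart a N) (lowPart a N) k = 0 := by
      refine ENNReal.tsum_eq_zero.2 fun l => ?_
      simp only [lowPart]
      split_ifs <;> first | omega | simp
    simp [hAdef, h1, h2]
  obtain ⟨Y, hY, hmaj⟩ := exists_maj_comp hs (Q := q + ε) (ε := ε) (by linarith) hε0.le
    (by linarith) hAs (D := 2 * N) hD hR hc
  refine ⟨Y, hY, fun w hw H hH => ?_⟩
  have hlow := fun j => (contPer_partSum (F j) N)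
  have hhigh := fun j => (hF j).sub (hlow j)
  have hsplit : ∀ j u, avg (F j) w u = avg (partSum (F j) N) w u +
      avg (fun u => F j u - partSum (F j) N u) w u := fun j u =>
    avg_add_avg (hlow j) (hhigh j) (fun u => by ring) w u
  set p : ℝ → ℂ := fun u => 1 - ∑ j, avg (partSum (F j) N) w u * avg (partSum (F j) N) w u
  set r : ℝ → ℂ := fun u => -1 * ∑ j, avg (fun u => F j u - partSum (F j) N u) w u *
    (avg (F j) w u + avg (partSum (F j) N) w u)
  have hpr : ∀ u, p u + r u = 1 - ∑ j, avg (F j) w u ^ 2 := by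
    intro u
    have : ∀ j, avg (F j) w u ^ 2 = avg (partSum (F j) N) w u * avg (partSum (F j) N) w u +
        avg (fun u => F j u - partSum (F j) N u) w u *
          (avg (F j) w u + avg (partSum (F j) N) w u) := fun j => by
      rw [hsplit j u]; ring
    simp only [p, r, this, Finset.sum_add_distrib]
    ring
  have hpc : ContPer p := (ContPer.const 1).sub
    (ContPer.sum _ fun j => ((hlow j).avg w).mul ((hlow j).avg w))
  have hrc : ContPer r := (ContPer.const _).mul
    (ContPer.sum _ fun j => ((hhigh j).avg w).mul (((hF j).avg w).add ((hlow j).avg w)))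
  have hpA : Maj p A := by
    intro k
    have h2 := Maj.sum Finset.univ (fun j => ((hlow j).avg w).mul ((hlow j).avg w))
      (fun j => Maj.mul ((hlow j).avg w) ((hlow j).avg w) (((ha j).partSum N).avg (hlow j) w)
        (((ha j).partSum N).avg (hlow j) w) hlt) k
    simp only [Finset.sum_const, Finset.card_univ, Fintype.card_fin, nsmul_eq_mul] at h2
    simp only [p]
    rw [fc_sub (ContPer.const 1)
      (ContPer.sum _ fun j => ((hlow j).avg w).mul ((hlow j).avg w)), fc_const]
    refine (enorm_sub_le).trans (add_le_add ?_ h2)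
    split_ifs <;> simp
  have hrR : Maj r R := by
    have hht : ∑' k, highPart a N k ≠ ⊤ := by
      refine ne_top_of_le_ne_top hat (ENNReal.tsum_le_tsum fun k => ?_)
      rw [highPart]; split_ifs <;> simp
    have h2 := (Maj.sum Finset.univ
      (fun j => ((hhigh j).avg w).mul (((hF j).avg w).add ((hlow j).avg w)))
      (fun j => Maj.mul ((hhigh j).avg w) (((hF j).avg w).add ((hlow j).avg w))
        (((ha j).sub_partSum (hF j) N).avg (hhigh j) w)
        (Maj.add ((hF j).avg w) ((hlow j).avg w) ((ha j).avg (hF j) w)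
          (((ha j).partSum N).avg (hlow j) w)) hht)).const_mul (-1)
    refine h2.mono fun k => ?_
    simp only [Finset.sum_const, Finset.card_univ, Fintype.card_fin, nsmul_eq_mul, hRdef]
    rw [enorm_neg, enorm_one, one_mul]
    gcongr
    refine conv_mono le_rfl (fun k => ?_) k
    rw [two_mul]
    gcongr
    exact lowPart_le a N k
  have hrε : ∀ u, ‖r u‖ ≤ ε := fun u => by
    have := ((hrR.enorm_le hrc hRt u).trans (tsum_le_wsum hs R)).trans hR
    rwa [← ofReal_norm, ENNReal.ofReal_le_ofReal_iff hε0.le] at this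
  refine hmaj p r H hpc hrc hpA hrR (fun u => ?_) fun u => ?_
  · have : p u = (1 - ∑ j, avg (F j) w u ^ 2) - r u := by rw [← hpr]; ring
    rw [this]
    exact (norm_sub_le _ _).trans (add_le_add (hw u) (hrε u))
  · simpa only [hpr] using hH u

/-- Fourier decay of `G · (ρ_w^{-p} - 1)` with `ρ_w = ∑ avg²`, uniformly in `w`. -/
theorem exists_maj_rpow {n : ℕ} {F : Fin n → ℝ → ℂ} (hF : ∀ j, ContPer (F j))
    (hunit : ∀ u, ∑ j, F j u ^ 2 = 1) {a : ℤ → ℝ≥0∞} (ha : ∀ j, Maj (F j) a)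
    {s μ θ q : ℝ} (hμ : 0 < μ) (hsμ : s + 1 / 2 < μ) (h0 : 0 ≤ θ) (h1 : θ ≤ 1)
    (has : wsum (max s 0) a < ⊤) (hb : hsum μ (fracMaj θ a) < ⊤) (hq0 : 0 ≤ q) (hq : q < 1)
    {S : Set ℝ} {ρ : ℝ → ℝ → ℝ} (hρ : ∀ w ∈ S, ∀ u, (ρ w u : ℂ) = ∑ j, avg (F j) w u ^ 2)
    (hρq : ∀ w ∈ S, ∀ u, |1 - ρ w u| ≤ q) (p : ℝ) :
    ∃ M : ℤ → ℝ≥0∞, hsum s M < ⊤ ∧ ∀ w ∈ S, ∀ G : ℝ → ℂ, ContPer G → Maj G a →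
      Maj (fun u => G u * ((ρ w u ^ (-p) - 1 : ℝ) : ℂ))
        (fun k => ENNReal.ofReal (|w| ^ (2 * θ)) * M k) := by
  have hs0 : 0 ≤ max s 0 := le_max_right _ _
  obtain ⟨c, hc0, hcs, hcr⟩ := exists_binomial_coeffs p
  have hcr' := summable_shift_coeffs hcr
  obtain ⟨Y, hY, hmaj⟩ := exists_maj_series hF ha hs0 has hq0 hq
    (c := fun m => c (m + 1)) hcr'
  set b := fracMaj θ a with hbdef
  have hb0 : hsum (max s 0) b < ⊤ :=
    (hsum_mono_exp (max_le (by linarith) hμ.le) b).trans_lt hb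
  have hat : ∑' k, a k ≠ ⊤ := ((tsum_le_wsum hs0 a).trans_lt has).ne
  have hc := fun w => fun j => (hF j).avg w
  set M : ℤ → ℝ≥0∞ := fun k => n * conv (conv (conv a Y) b) b k with hM
  have hMs : hsum s M < ⊤ := by
    rw [hM, hsum_const_mul]
    refine ENNReal.mul_lt_top (by finiteness) (hsum_conv_hsum_lt_top hμ hsμ ?_ hb)
    rw [conv_comm]
    refine (hsum_conv_wsum_le hs0 _ _).trans_lt (ENNReal.mul_lt_top hb0 (ENNReal.pow_lt_top ?_))
    exact (wsum_conv_le hs0 _ _).trans_lt (ENNReal.mul_lt_top has hY)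
  refine ⟨M, hMs, fun w hw G hG hGa => ?_⟩
  set x : ℝ → ℝ := fun u => 1 - ρ w u with hx
  have hxC : ∀ u, ((x u : ℝ) : ℂ) = 1 - ∑ j, avg (F j) w u ^ 2 := fun u => by
    rw [← hρ w hw u]; simp [hx]
  have hxc : ContPer (fun u => ((x u : ℝ) : ℂ)) := by
    simp only [hxC]
    exact (ContPer.const 1).sub (ContPer.sum _ fun j => (hc w j).pow 2)
  have hxn : ∀ u, ‖((x u : ℝ) : ℂ)‖ ≤ q := fun u => by
    rw [Complex.norm_real]; exact hρq w hw u
  have hbound : ∀ m u, ‖(c (m + 1) : ℂ) * (x u : ℂ) ^ m‖ ≤ |c (m + 1)| * q ^ m := fun m u => by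
    rw [norm_mul, norm_pow, Complex.norm_real, Real.norm_eq_abs]
    gcongr
    exact hxn u
  have hsum := hcr' q hq0 hq
  set H : ℝ → ℂ := fun u => ∑' m, (c (m + 1) : ℂ) * (x u : ℂ) ^ m with hH
  have hHs : ∀ u, HasSum (fun m => (c (m + 1) : ℂ) * (x u : ℂ) ^ m) (H u) := fun u =>
    (Summable.of_norm_bounded hsum fun m => hbound m u).hasSum
  have hHc : ContPer H :=
    ContPer.tsum (fun m => (ContPer.const _).mul (hxc.pow m)) hbound hsum
  have hHY : Maj H Y := hmaj w (fun u => by rw [← hxC]; exact hxn u) H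
    (fun u => by simpa only [← hxC] using hHs u)
  have hval : ∀ u, ((ρ w u ^ (-p) - 1 : ℝ) : ℂ) = H u * (x u : ℂ) := fun u => by
    have h2 := hcs (x u) ((hρq w hw u).trans_lt hq)
    have h3 : HasSum (fun m => c (m + 1) * x u ^ (m + 1)) ((1 - x u) ^ (-p) - 1) := by
      have := (hasSum_nat_add_iff' 1).2 h2
      simpa [hc0] using this
    have h4 : HasSum (fun m => (c (m + 1) : ℂ) * (x u : ℂ) ^ m * (x u : ℂ))
        (((1 - x u) ^ (-p) - 1 : ℝ) : ℂ) := by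
      have := Complex.hasSum_ofReal.2 h3
      refine this.congr_fun fun m => ?_
      push_cast; ring
    have h5 := h4.unique ((hHs u).mul_right _)
    rw [← h5]
    simp [hx]
  have hGH : Maj (fun u => G u * H u) (conv a Y) := Maj.mul hG hHc hGa hHY hat
  have hGHt : ∑' k, conv a Y k ≠ ⊤ := ((tsum_le_wsum hs0 _).trans_lt
    ((wsum_conv_le hs0 _ _).trans_lt (ENNReal.mul_lt_top has hY))).ne
  have hxM : Maj (fun u => (x u : ℂ))
      (fun k => ENNReal.ofReal (|w| ^ (2 * θ)) * (n * conv b b k)) := by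
    simp only [hxC]
    exact maj_one_sub_sum_avg_sq hF hunit ha h0 h1 hat w
  have hfin := Maj.mul (hG.mul hHc) hxc hGH hxM hGHt
  simp only [hval, ← mul_assoc]
  refine hfin.mono fun k => le_of_eq ?_
  simp only [hM]
  rw [conv_assoc (conv a Y) b b]
  generalize conv b b = B
  simp only [conv, ← ENNReal.tsum_mul_left]
  exact tsum_congr fun l => by ring

/-- The complexified `j`-th component of a curve. -/
def comp (f : ℝ → Rn n) (j : Fin n) (u : ℝ) : ℂ := (f u j : ℂ)

theorem ContPer.comp {f : ℝ → Rn n} (hf : ContPer f) (j : Fin n) : ContPer (comp f j) :=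
  ⟨by have := hf.cont; unfold _root_.comp; fun_prop, fun u => by simp only [_root_.comp, hf.per u]⟩

theorem fCoef_eq_fc (γ : ℝ → Rn n) (k : ℤ) (j : Fin n) : fCoef γ k j = fc (comp γ j) k := by
  simp only [fCoef, fc, comp, ex]
  congr 1; funext u; congr 2; push_cast; ring

theorem contDiff_of_summable {F : ℝ → ℂ} (hF : ContPer F)
    (hs : Summable fun k : ℤ => |(k : ℝ)| * ‖fc F k‖) (hs0 : Summable (fc F)) :
    ContDiff ℝ 1 F := by
  have hs1 : Summable fun k : ℤ => 2 * Real.pi * (|(k : ℝ)| * ‖fc F k‖) := hs.mul_left _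
  have hb : ∀ (k : ℤ) (u : ℝ), ‖fc F k * (2 * Real.pi * Complex.I * k * ex k u)‖ ≤
      2 * Real.pi * (|(k : ℝ)| * ‖fc F k‖) := fun k u => by
    simp only [norm_mul, norm_ex]
    simp [abs_of_pos Real.pi_pos]
    exact le_of_eq (by ring)
  have hFe : F = fun u => ∑' k, fc F k * ex k u := funext fun u => (hasSum_fc hF hs0 u).tsum_eq.symm
  have hd : ∀ u, HasDerivAt F (∑' k, fc F k * (2 * Real.pi * Complex.I * k * ex k u)) u := by
    intro u
    have h := hasDerivAt_tsum hs1 (fun k y => (hasDerivAt_ex k y).const_mul _) hb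
      (hasSum_fc hF hs0 0).summable u
    rwa [← hFe] at h
  rw [contDiff_one_iff_deriv]
  refine ⟨fun u => (hd u).differentiableAt, ?_⟩
  rw [funext fun u => (hd u).deriv]
  exact continuous_tsum (fun k => by have := ex_continuous k; fun_prop) hs1 hb

theorem wt_sq_le (k : ℤ) : wt k ^ 2 ≤ 2 * ENNReal.ofReal (1 + (k : ℝ) ^ 2) := by
  rw [wt_eq_ofReal, ← ENNReal.ofReal_pow (by positivity),
    show (2 : ℝ≥0∞) = ENNReal.ofReal 2 by simp, ← ENNReal.ofReal_mul zero_le_two]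
  apply ENNReal.ofReal_le_ofReal
  nlinarith [sq_nonneg (1 - |(k : ℝ)|), sq_abs (k : ℝ)]

theorem le_wt_sq (k : ℤ) : ENNReal.ofReal (1 + (k : ℝ) ^ 2) ≤ wt k ^ 2 := by
  rw [wt_eq_ofReal, ← ENNReal.ofReal_pow (by positivity)]
  apply ENNReal.ofReal_le_ofReal
  nlinarith [abs_nonneg (k : ℝ), sq_abs (k : ℝ)]

theorem ENNReal.rpow_mul_self_sq (x : ℝ≥0∞) (t : ℝ) : (x ^ t) ^ 2 = (x ^ 2) ^ t := by
  rw [← ENNReal.rpow_natCast, ← ENNReal.rpow_mul, ← ENNReal.rpow_natCast, ← ENNReal.rpow_mul,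
    mul_comm]

theorem hsum_lt_top_of_memHF {t : ℝ} (ht : 0 ≤ t) {γ : ℝ → Rn n} (h : MemHF t γ) (j : Fin n) :
    hsum t (fun k => ‖fc (comp γ j) k‖ₑ) < ⊤ := by
  have h1 := h.2.2.tsum_ofReal_lt_top
  refine lt_of_le_of_lt ?_ (ENNReal.mul_lt_top
    (ENNReal.rpow_lt_top_of_nonneg ht (by simp : (2:ℝ≥0∞) ≠ ⊤)) h1)
  rw [← ENNReal.tsum_mul_left]
  refine ENNReal.tsum_le_tsum fun k => ?_
  rw [mul_pow, ENNReal.rpow_mul_self_sq, ENNReal.ofReal_mul (by positivity),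
    ← ENNReal.ofReal_rpow_of_pos (by positivity), ← mul_assoc,
    ← ENNReal.mul_rpow_of_nonneg _ _ ht]
  gcongr
  · exact wt_sq_le k
  · beta_reduce
    rw [← ofReal_norm, ← ENNReal.ofReal_pow (norm_nonneg _)]
    apply ENNReal.ofReal_le_ofReal
    rw [← fCoef_eq_fc]
    exact Finset.single_le_sum (f := fun j => ‖fCoef γ k j‖ ^ 2) (fun _ _ => by positivity)
      (Finset.mem_univ j)

theorem memHF_of_hsum {t : ℝ} (ht : 0 ≤ t) {γ : ℝ → Rn n} (hγ : ContPer γ)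
    (h : ∀ j, hsum t (fun k => ‖fc (comp γ j) k‖ₑ) < ⊤) : MemHF t γ := by
  refine ⟨hγ.per, hγ.cont, ?_⟩
  simp only [Finset.mul_sum]
  refine summable_sum fun j _ => ?_
  have h1 := ENNReal.summable_toReal (h j).ne
  refine h1.of_nonneg_of_le (fun k => by positivity) fun k => ?_
  rw [← ENNReal.ofReal_le_iff_le_toReal (by
    have := wt_ne_zero k; have := wt_ne_top k; finiteness)]
  rw [mul_pow, ENNReal.rpow_mul_self_sq, ENNReal.ofReal_mul (by positivity),
    ← ENNReal.ofReal_rpow_of_pos (by positivity)]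
  gcongr
  · exact le_wt_sq k
  · beta_reduce
    rw [← ofReal_norm, ← ENNReal.ofReal_pow (norm_nonneg _), fCoef_eq_fc]

theorem hsum_mono {s : ℝ} {A B : ℤ → ℝ≥0∞} (h : A ≤ B) : hsum s A ≤ hsum s B :=
  ENNReal.tsum_le_tsum fun k => by gcongr; exact h k

theorem hsum_wt_mul (s t : ℝ) (A : ℤ → ℝ≥0∞) :
    hsum s (fun k => wt k ^ t * A k) = hsum (s + t) A :=
  tsum_congr fun k => by
    rw [← mul_assoc, ENNReal.rpow_add _ _ (wt_ne_zero k) (wt_ne_top k)]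

theorem hsum_add_lt_top {s : ℝ} {A B : ℤ → ℝ≥0∞} (hA : hsum s A < ⊤) (hB : hsum s B < ⊤) :
    hsum s (fun k => A k + B k) < ⊤ := by
  have h : hsum s (fun k => A k + B k) ≤ 2 * hsum s A + 2 * hsum s B := by
    rw [hsum, hsum, hsum, ← ENNReal.tsum_mul_left, ← ENNReal.tsum_mul_left, ← ENNReal.tsum_add]
    refine ENNReal.tsum_le_tsum fun k => ?_
    have h2 := ENNReal.rpow_add_le_mul_rpow_add_rpow (wt k ^ s * A k) (wt k ^ s * B k) one_le_two
    norm_num at h2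
    simpa only [mul_add] using h2
  exact h.trans_lt (by finiteness)

theorem hsum_sum_lt_top {ι : Type*} {s : ℝ} (t : Finset ι) {A : ι → ℤ → ℝ≥0∞}
    (hA : ∀ i, hsum s (A i) < ⊤) : hsum s (fun k => ∑ i ∈ t, A i k) < ⊤ := by
  classical
  induction t using Finset.induction_on with
  | empty => simp [hsum]
  | insert i t hi ih =>
    simp only [Finset.sum_insert hi]
    exact hsum_add_lt_top (hA i) ih

/-- The common majorant `∑ⱼ |f̂ⱼ(k)|` of the components of `f`. -/
def compMaj (f : ℝ → Rn n) (k : ℤ) : ℝ≥0∞ := ∑ j, ‖fc (comp f j) k‖ₑ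

theorem maj_compMaj (f : ℝ → Rn n) (j : Fin n) : Maj (comp f j) (compMaj f) := fun k =>
  Finset.single_le_sum (f := fun j => ‖fc (comp f j) k‖ₑ) (fun _ _ => zero_le) (Finset.mem_univ j)

theorem norm_int_le_wt (k : ℤ) : ENNReal.ofReal |(k : ℝ)| ≤ wt k := by
  rw [wt_eq_ofReal]; exact ENNReal.ofReal_le_ofReal (by linarith)

theorem contDiff_of_memHF {t : ℝ} (ht : 3 / 2 < t) {γ : ℝ → Rn n} (h : MemHF t γ) :
    ContDiff ℝ 1 γ := by
  have hc : ContPer γ := ⟨h.2.1, h.1⟩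
  rw [contDiff_euclidean]
  intro j
  have h1 := hsum_lt_top_of_memHF (by linarith) h j
  have h2 : wsum 1 (fun k => ‖fc (comp γ j) k‖ₑ) < ⊤ := wsum_lt_top_of_hsum (by linarith) h1
  have h3 : Summable fun k : ℤ => |(k : ℝ)| * ‖fc (comp γ j) k‖ := by
    refine (ENNReal.summable_toReal h2.ne).of_nonneg_of_le (fun k => by positivity) fun k => ?_
    rw [← ENNReal.ofReal_le_iff_le_toReal (by
      have := wt_ne_zero k; have := wt_ne_top k; finiteness), ENNReal.rpow_one,
      ENNReal.ofReal_mul (abs_nonneg _), ofReal_norm]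
    gcongr
    exact norm_int_le_wt k
  have h4 : Summable (fc (comp γ j)) := Maj.summable (A := fun k => ‖fc (comp γ j) k‖ₑ)
    (fun k => le_rfl) ((tsum_le_wsum zero_le_one _).trans_lt h2).ne
  exact Complex.reCLM.contDiff.comp (contDiff_of_summable (hc.comp j) h3 h4)

theorem contPer_deriv {γ : ℝ → Rn n} (hc : ContDiff ℝ 1 γ) (hp : Function.Periodic γ 1) :
    ContPer (deriv γ) :=
  ⟨hc.continuous_deriv le_rfl, fun u => by
    rw [← deriv_comp_add_const]; congr 1; exact funext hp⟩

theorem hasDerivAt_apply {γ γ' : ℝ → Rn n} {u : ℝ} (h : HasDerivAt γ (γ' u) u) (j : Fin n) :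
    HasDerivAt (fun u => γ u j) (γ' u j) u :=
  ((EuclideanSpace.proj (𝕜 := ℝ) j).hasFDerivAt.comp_hasDerivAt u h)

theorem hasDerivAt_comp {γ γ' : ℝ → Rn n} {u : ℝ} (h : HasDerivAt γ (γ' u) u) (j : Fin n) :
    HasDerivAt (comp γ j) (comp γ' j u) u := (hasDerivAt_apply h j).ofReal_comp

theorem fc_comp_deriv {γ : ℝ → Rn n} (hc : ContDiff ℝ 1 γ) (hp : Function.Periodic γ 1)
    (j : Fin n) (k : ℤ) :
    fc (comp (deriv γ) j) k = 2 * Real.pi * Complex.I * k * fc (comp γ j) k :=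
  fc_deriv (ContPer.comp ⟨hc.continuous, hp⟩ j) ((contPer_deriv hc hp).comp j).cont
    (fun u => hasDerivAt_comp ((hc.differentiable one_ne_zero) u).hasDerivAt j) k

theorem hsum_compMaj_deriv_lt_top {t : ℝ} (ht : 0 ≤ t + 1) {γ : ℝ → Rn n}
    (hc : ContDiff ℝ 1 γ) (h : MemHF (t + 1) γ) : hsum t (compMaj (deriv γ)) < ⊤ := by
  refine hsum_sum_lt_top _ fun j => ?_
  have h1 := hsum_lt_top_of_memHF ht h j
  rw [← hsum_wt_mul] at h1
  have h2 := hsum_const_mul t (ENNReal.ofReal (2 * Real.pi))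
    (fun k => wt k ^ (1:ℝ) * ‖fc (comp γ j) k‖ₑ)
  refine (hsum_mono fun k => ?_).trans_lt (h2.trans_lt (ENNReal.mul_lt_top (by finiteness) h1))
  rw [fc_comp_deriv hc h.1, ENNReal.rpow_one, enorm_mul, ← mul_assoc]
  gcongr
  rw [← ofReal_norm]
  have : ‖(2 * Real.pi * Complex.I * k : ℂ)‖ = 2 * Real.pi * |(k : ℝ)| := by
    simp [abs_of_pos Real.pi_pos]
  rw [this, ENNReal.ofReal_mul (by positivity)]
  gcongr
  exact norm_int_le_wt k

theorem hsum_fracMaj_lt_top {μ θ : ℝ} (hθ : 0 ≤ θ) {a : ℤ → ℝ≥0∞} (h : hsum (μ + θ) a < ⊤) :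
    hsum μ (fracMaj θ a) < ⊤ := by
  unfold fracMaj
  rw [hsum_const_mul]
  refine ENNReal.mul_lt_top (by finiteness) (lt_of_le_of_lt (hsum_mono fun k => ?_)
    ((hsum_wt_mul μ θ a).trans_lt h))
  gcongr
  rw [← ENNReal.ofReal_rpow_of_nonneg (abs_nonneg _) hθ]
  gcongr
  exact norm_int_le_wt k

section Averages
variable {E : Type*} [NormedAddCommGroup E] [NormedSpace ℝ E]

theorem smul_avg (F : ℝ → E) (w u : ℝ) : w • avg F w u = ∫ x in u..u + w, F x := by
  have h := intervalIntegral.smul_integral_comp_add_mul (a := 0) (b := 1) F w u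
  simp only [mul_zero, add_zero, mul_one] at h
  rw [← h, avg]
  simp only [mul_comm w]

theorem avg_one {F : ℝ → E} (hF : ContPer F) (u : ℝ) : avg F 1 u = ∫ x in (0:ℝ)..1, F x := by
  rw [← one_smul ℝ (avg F 1 u), smul_avg, hF.per.intervalIntegral_add_eq u 0, zero_add]

theorem sub_eq_smul_avg [CompleteSpace E] {γ : ℝ → E} (hγ : ContDiff ℝ 1 γ) (w u : ℝ) :
    γ (u + w) - γ u = w • avg (deriv γ) w u := by
  rw [smul_avg]
  exact (intervalIntegral.integral_deriv_eq_sub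
    (fun x _ => (hγ.differentiable one_ne_zero) x)
    ((hγ.continuous_deriv le_rfl).intervalIntegrable _ _)).symm

theorem norm_avg_le {F : ℝ → E} {C : ℝ} (h : ∀ u, ‖F u‖ ≤ C) (w u : ℝ) : ‖avg F w u‖ ≤ C := by
  have := intervalIntegral.norm_integral_le_of_norm_le_const (a := (0:ℝ)) (b := 1)
    (f := fun t => F (u + t * w)) (C := C) fun t _ => h _
  simpa [avg] using this

theorem avg_zero [CompleteSpace E] (F : ℝ → E) (u : ℝ) : avg F 0 u = F u := by simp [avg]

theorem continuous_avg {F : ℝ → E} (hF : Continuous F) :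
    Continuous fun p : ℝ × ℝ => avg F p.2 p.1 :=
  intervalIntegral.continuous_parametric_intervalIntegral_of_continuous'
    (f := fun (p : ℝ × ℝ) t => F (p.1 + t * p.2)) (by fun_prop) 0 1

theorem avg_add_smul {F G : ℝ → E} (hF : Continuous F) (hG : Continuous G) (τ w u : ℝ) :
    avg (fun x => F x + τ • G x) w u = avg F w u + τ • avg G w u := by
  simp only [avg]
  rw [intervalIntegral.integral_add (Continuous.intervalIntegrable (by fun_prop) _ _)
    (Continuous.intervalIntegrable (by fun_prop) _ _), intervalIntegral.integral_smul]

theorem norm_avg_sub_le {F G : ℝ → E} (hF : Continuous F) (hG : Continuous G) {C : ℝ}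
    (h : ∀ u, ‖F u - G u‖ ≤ C) (w u : ℝ) : ‖avg F w u - avg G w u‖ ≤ C := by
  have h2 : avg F w u - avg G w u = avg (fun x => F x - G x) w u := by
    simp only [avg]
    rw [intervalIntegral.integral_sub (Continuous.intervalIntegrable (by fun_prop) _ _)
      (Continuous.intervalIntegrable (by fun_prop) _ _)]
  rw [h2]
  exact norm_avg_le h w u

theorem norm_avg_le_avg_norm {F : ℝ → E} (w u : ℝ) :
    ‖avg F w u‖ ≤ avg (fun x => ‖F x‖) w u :=
  intervalIntegral.norm_integral_le_integral_norm zero_le_one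

end Averages

section Covariance
variable {E : Type*} [NormedAddCommGroup E] [InnerProductSpace ℝ E] [CompleteSpace E]

theorem sq_integral_le {p : ℝ → ℝ} (hp : Continuous p) :
    (∫ s in (0:ℝ)..1, p s) ^ 2 ≤ ∫ s in (0:ℝ)..1, p s ^ 2 := by
  set m := ∫ s in (0:ℝ)..1, p s with hm
  have h : 0 ≤ ∫ s in (0:ℝ)..1, (p s - m) ^ 2 :=
    intervalIntegral.integral_nonneg zero_le_one fun s _ => sq_nonneg _
  have h2 : ∫ s in (0:ℝ)..1, (p s - m) ^ 2 =
      (∫ s in (0:ℝ)..1, p s ^ 2) - 2 * m * m + m ^ 2 := by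
    have h3 : ∀ s, (p s - m) ^ 2 = p s ^ 2 - 2 * m * p s + m ^ 2 := fun s => by ring
    simp only [h3]
    rw [intervalIntegral.integral_add (Continuous.intervalIntegrable (by fun_prop) _ _)
      (Continuous.intervalIntegrable (by fun_prop) _ _),
      intervalIntegral.integral_sub (Continuous.intervalIntegrable (by fun_prop) _ _)
      (Continuous.intervalIntegrable (by fun_prop) _ _), intervalIntegral.integral_const_mul, ← hm]
    simp
  nlinarith

theorem integral_inner_const_left {A : ℝ → E} (hA : Continuous A) (b : E) :
    ∫ s in (0:ℝ)..1, ⟪A s, b⟫ = ⟪∫ s in (0:ℝ)..1, A s, b⟫ := by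
  simp only [real_inner_comm b]
  exact ((innerSL ℝ b).intervalIntegral_comp_comm (hA.intervalIntegrable 0 1))

theorem integral_inner_const_right {A : ℝ → E} (hA : Continuous A) (b : E) :
    ∫ s in (0:ℝ)..1, ⟪b, A s⟫ = ⟪b, ∫ s in (0:ℝ)..1, A s⟫ :=
  ((innerSL ℝ b).intervalIntegral_comp_comm (hA.intervalIntegrable 0 1))

/-- Bound for the covariance of two functions on `[0,1]` by their deviations from constants. -/
theorem abs_covariance_le {A B : ℝ → E} (hA : Continuous A) (hB : Continuous B) (A0 B0 : E)
    {p : ℝ → ℝ} (hp : Continuous p) {a b : ℝ}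
    (hAp : ∀ s ∈ Icc (0:ℝ) 1, ‖A s - A0‖ ≤ a * p s)
    (hBp : ∀ s ∈ Icc (0:ℝ) 1, ‖B s - B0‖ ≤ b * p s) :
    |(∫ s in (0:ℝ)..1, ⟪A s, B s⟫) - ⟪∫ s in (0:ℝ)..1, A s, ∫ s in (0:ℝ)..1, B s⟫| ≤
      2 * (a * b * ∫ s in (0:ℝ)..1, p s ^ 2) := by
  set P := ∫ s in (0:ℝ)..1, p s ^ 2 with hP
  have hA1 : ∫ s in (0:ℝ)..1, (A s - A0) = (∫ s in (0:ℝ)..1, A s) - A0 := by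
    rw [intervalIntegral.integral_sub (hA.intervalIntegrable _ _) (by simp)]; simp
  have hB1 : ∫ s in (0:ℝ)..1, (B s - B0) = (∫ s in (0:ℝ)..1, B s) - B0 := by
    rw [intervalIntegral.integral_sub (hB.intervalIntegrable _ _) (by simp)]; simp
  have hAB : ∫ s in (0:ℝ)..1, ⟪A s - A0, B s - B0⟫ = (∫ s in (0:ℝ)..1, ⟪A s, B s⟫)
      - ⟪∫ s in (0:ℝ)..1, A s, B0⟫ - ⟪A0, (∫ s in (0:ℝ)..1, B s) - B0⟫ := by
    rw [← hB1, ← integral_inner_const_left hA, ← integral_inner_const_right (by fun_prop),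
      ← intervalIntegral.integral_sub (Continuous.intervalIntegrable (by fun_prop) _ _)
      (Continuous.intervalIntegrable (by fun_prop) _ _),
      ← intervalIntegral.integral_sub (Continuous.intervalIntegrable (by fun_prop) _ _)
      (Continuous.intervalIntegrable (by fun_prop) _ _)]
    congr 1; funext s
    simp only [inner_sub_left, inner_sub_right]
    ring
  have key : (∫ s in (0:ℝ)..1, ⟪A s, B s⟫) - ⟪∫ s in (0:ℝ)..1, A s, ∫ s in (0:ℝ)..1, B s⟫ =
      (∫ s in (0:ℝ)..1, ⟪A s - A0, B s - B0⟫) -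
        ⟪∫ s in (0:ℝ)..1, (A s - A0), ∫ s in (0:ℝ)..1, (B s - B0)⟫ := by
    rw [hAB, hA1, hB1]
    simp only [inner_sub_left, inner_sub_right]
    ring
  have hmono : ∀ {F : ℝ → E} {F0 : E} {c : ℝ}, Continuous F →
      (∀ s ∈ Icc (0:ℝ) 1, ‖F s - F0‖ ≤ c * p s) →
      ‖∫ s in (0:ℝ)..1, (F s - F0)‖ ≤ c * ∫ s in (0:ℝ)..1, p s := by
    intro F F0 c hF h
    rw [← intervalIntegral.integral_const_mul]
    refine (intervalIntegral.norm_integral_le_integral_norm zero_le_one).trans ?_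
    exact intervalIntegral.integral_mono_on zero_le_one
      (Continuous.intervalIntegrable (by fun_prop) _ _)
      (Continuous.intervalIntegrable (by fun_prop) _ _) h
  have h1 : |∫ s in (0:ℝ)..1, ⟪A s - A0, B s - B0⟫| ≤ a * b * P := by
    rw [hP, ← intervalIntegral.integral_const_mul, ← Real.norm_eq_abs]
    refine (intervalIntegral.norm_integral_le_integral_norm zero_le_one).trans ?_
    refine intervalIntegral.integral_mono_on zero_le_one
      (Continuous.intervalIntegrable (by fun_prop) _ _)
      (Continuous.intervalIntegrable (by fun_prop) _ _) fun s hs => ?_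
    have e1 := hAp s hs
    calc ‖⟪A s - A0, B s - B0⟫‖ ≤ ‖A s - A0‖ * ‖B s - B0‖ := norm_inner_le_norm _ _
      _ ≤ (a * p s) * (b * p s) := mul_le_mul e1 (hBp s hs) (norm_nonneg _)
          ((norm_nonneg _).trans e1)
      _ = _ := by ring
  have h2 : |⟪∫ s in (0:ℝ)..1, (A s - A0), ∫ s in (0:ℝ)..1, (B s - B0)⟫| ≤ a * b * P := by
    have eA := hmono hA hAp
    have eB := hmono hB hBp
    have hab : 0 ≤ a * b ∨ P = 0 := by
      by_cases hpz : ∀ s ∈ Icc (0:ℝ) 1, p s = 0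
      · right
        rw [hP, intervalIntegral.integral_congr (g := fun _ => 0)]
        · simp
        · intro s hs
          rw [uIcc_of_le zero_le_one] at hs
          simp [hpz s hs]
      · left
        push Not at hpz
        obtain ⟨s, hs, hps⟩ := hpz
        have e1 := (norm_nonneg _).trans (hAp s hs)
        have e2 := (norm_nonneg _).trans (hBp s hs)
        have : 0 ≤ a * b * p s ^ 2 := by nlinarith
        exact nonneg_of_mul_nonneg_left this (by positivity)
    have hsq := sq_integral_le hp
    rw [← hP] at hsq
    refine (abs_real_inner_le_norm _ _).trans ((mul_le_mul eA eB (norm_nonneg _)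
      ((norm_nonneg _).trans eA)).trans ?_)
    rcases hab with h | h
    · nlinarith
    · rw [h] at hsq ⊢
      have : ∫ s in (0:ℝ)..1, p s = 0 := by nlinarith [sq_nonneg (∫ s in (0:ℝ)..1, p s)]
      simp [this]
  rw [key]
  refine (abs_sub _ _).trans ?_
  linarith

end Covariance

section Powers

theorem abs_rpow_neg_sub_le {p m x y : ℝ} (hp : 0 < p) (hm : 0 < m) (hx : m ≤ x) (hy : m ≤ y) :
    |x ^ (-p) - y ^ (-p)| ≤ p * m ^ (-p - 1) * |x - y| := by
  have h := (convex_Ici m).norm_image_sub_le_of_norm_hasDerivWithin_le (x := y) (y := x)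
    (f := fun x => x ^ (-p)) (f' := fun x => (-p) * x ^ (-p - 1)) (C := p * m ^ (-p - 1))
    (fun z hz => (Real.hasDerivAt_rpow_const
      (Or.inl (hm.trans_le hz).ne')).hasDerivWithinAt) (fun z hz => ?_) hy hx
  · simpa only [Real.norm_eq_abs] using h
  · have hz0 : 0 < z := hm.trans_le hz
    rw [norm_mul, norm_neg, Real.norm_of_nonneg hp.le, Real.norm_of_nonneg (by positivity)]
    gcongr 1
    exact Real.rpow_le_rpow_of_nonpos hm hz (by linarith)

theorem abs_rpow_neg_sub_shift_le {p m y : ℝ} (hp : 0 < p) (hm : 0 < m) (hy : 0 ≤ y)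
    {x x' : ℝ} (hx : m ≤ x) (hx' : m ≤ x') :
    |(x ^ (-p) - (x + y) ^ (-p)) - (x' ^ (-p) - (x' + y) ^ (-p))| ≤
      p * ((p + 1) * m ^ (-(p + 1) - 1)) * (y * |x - x'|) := by
  have h := (convex_Ici m).norm_image_sub_le_of_norm_hasDerivWithin_le (x := x') (y := x)
    (f := fun x => x ^ (-p) - (x + y) ^ (-p))
    (f' := fun x => (-p) * x ^ (-p - 1) - (-p) * (x + y) ^ (-p - 1))
    (C := p * ((p + 1) * m ^ (-(p + 1) - 1) * y))
    (fun z hz => ?_) (fun z hz => ?_) hx' hx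
  · simp only [Real.norm_eq_abs] at h
    refine h.trans (le_of_eq (by ring))
  · have hz0 : 0 < z := hm.trans_le hz
    refine HasDerivAt.hasDerivWithinAt ?_
    refine (Real.hasDerivAt_rpow_const (Or.inl hz0.ne')).sub ?_
    have := (Real.hasDerivAt_rpow_const (p := -p)
      (Or.inl (by positivity : z + y ≠ 0))).comp_add_const z y
    exact this
  · have hz : m ≤ z := hz
    have e := abs_rpow_neg_sub_le (p := p + 1) (by linarith) hm hz (by linarith : m ≤ z + y)
    rw [show z - (z + y) = -y by ring, abs_neg, abs_of_nonneg hy] at e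
    rw [← mul_sub, norm_mul, norm_neg, Real.norm_of_nonneg hp.le, Real.norm_eq_abs]
    rw [show -p - 1 = -(p + 1) by ring]
    gcongr

/-- Lipschitz estimate for `M ^ (-p) - (M + Y) ^ (-p)`, which vanishes to first order in `Y`. -/
theorem exists_rpow_gap_le {p m : ℝ} (hp : 0 < p) (hm : 0 < m) :
    ∃ C, 0 ≤ C ∧ ∀ M₁ M₂ Y₁ Y₂ : ℝ, m ≤ M₁ → m ≤ M₂ → 0 ≤ Y₁ → 0 ≤ Y₂ →
      |M₁ ^ (-p) - (M₁ + Y₁) ^ (-p)| ≤ C * Y₁ ∧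
      |(M₁ ^ (-p) - (M₁ + Y₁) ^ (-p)) - (M₂ ^ (-p) - (M₂ + Y₂) ^ (-p))| ≤
        C * (Y₁ * |M₁ - M₂| + |Y₁ - Y₂|) := by
  set A := p * m ^ (-p - 1) with hA
  set B := p * ((p + 1) * m ^ (-(p + 1) - 1)) with hB
  have hA0 : 0 ≤ A := by positivity
  have hB0 : 0 ≤ B := by positivity
  refine ⟨A + B, by positivity, fun M₁ M₂ Y₁ Y₂ h1 h2 h3 h4 => ⟨?_, ?_⟩⟩
  · have e := abs_rpow_neg_sub_le hp hm h1 (by linarith : m ≤ M₁ + Y₁)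
    rw [show M₁ - (M₁ + Y₁) = -Y₁ by ring, abs_neg, abs_of_nonneg h3] at e
    nlinarith
  · have e1 := abs_rpow_neg_sub_shift_le hp hm h3 h1 h2
    have e2 := abs_rpow_neg_sub_le hp hm (by linarith : m ≤ M₂ + Y₂) (by linarith : m ≤ M₂ + Y₁)
    rw [show M₂ + Y₂ - (M₂ + Y₁) = -(Y₁ - Y₂) by ring, abs_neg] at e2
    have e3 := abs_add_le ((M₁ ^ (-p) - (M₁ + Y₁) ^ (-p)) - (M₂ ^ (-p) - (M₂ + Y₁) ^ (-p)))
      ((M₂ + Y₂) ^ (-p) - (M₂ + Y₁) ^ (-p))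
    rw [show (M₁ ^ (-p) - (M₁ + Y₁) ^ (-p)) - (M₂ ^ (-p) - (M₂ + Y₂) ^ (-p)) =
      ((M₁ ^ (-p) - (M₁ + Y₁) ^ (-p)) - (M₂ ^ (-p) - (M₂ + Y₁) ^ (-p))) +
      ((M₂ + Y₂) ^ (-p) - (M₂ + Y₁) ^ (-p)) by ring]
    refine e3.trans ((add_le_add e1 e2).trans ?_)
    have : 0 ≤ A * (Y₁ * |M₁ - M₂|) := by positivity
    have : 0 ≤ B * |Y₁ - Y₂| := by positivity
    linarith

end Powers

section LengthGap
variable {E : Type*} [NormedAddCommGroup E] [InnerProductSpace ℝ E]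

theorem real_inner_sub_add (x y : E) : ⟪x - y, x + y⟫ = ‖x‖ ^ 2 - ‖y‖ ^ 2 := by
  rw [inner_sub_left, inner_add_right, inner_add_right, real_inner_comm x y,
    real_inner_self_eq_norm_sq, real_inner_self_eq_norm_sq]
  ring

/-- The gap between the squared length and the squared chord. -/
def lengthGap (F : ℝ → E) : ℝ := (∫ s in (0:ℝ)..1, ‖F s‖) ^ 2 - ‖∫ s in (0:ℝ)..1, F s‖ ^ 2

theorem lengthGap_nonneg (F : ℝ → E) : 0 ≤ lengthGap F := by
  have := intervalIntegral.norm_integral_le_integral_norm (f := F) (μ := volume) zero_le_one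
  have h0 := norm_nonneg (∫ s in (0:ℝ)..1, F s)
  unfold lengthGap
  nlinarith

theorem lengthGap_eq (F : ℝ → E) :
    lengthGap F = ((∫ s in (0:ℝ)..1, ⟪F s, F s⟫) - ⟪∫ s in (0:ℝ)..1, F s, ∫ s in (0:ℝ)..1, F s⟫) -
      ((∫ s in (0:ℝ)..1, ‖F s‖ ^ 2) - (∫ s in (0:ℝ)..1, ‖F s‖) ^ 2) := by
  simp only [lengthGap, real_inner_self_eq_norm_sq]
  ring

theorem norm_add_smul_bounds {a b : E} {K τ : ℝ} (ha : ‖a‖ = 1)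
    (hb : ‖b‖ ≤ K) (hτ : |τ| * K ≤ 1 / 8) :
    7 / 8 ≤ ‖a + τ • b‖ ∧ ‖a + τ • b‖ ≤ 9 / 8 := by
  have h : ‖τ • b‖ ≤ 1 / 8 := by
    rw [norm_smul, Real.norm_eq_abs]
    exact (mul_le_mul_of_nonneg_left hb (abs_nonneg _)).trans hτ
  have h1 := norm_add_le a (τ • b)
  have h2 := norm_sub_le_norm_add a (τ • b)
  constructor <;> linarith

/-- A unit field `f` and a field `g` bounded by `K` whose deviations on `[0,1]` from the constants
`f0` and `g0` are controlled by `p`. -/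
structure DevBound (f g : ℝ → E) (f0 g0 : E) (K : ℝ) (p : ℝ → ℝ) : Prop where
  cont_f : Continuous f
  cont_g : Continuous g
  cont_p : Continuous p
  norm_f : ∀ s, ‖f s‖ = 1
  norm_g : ∀ s, ‖g s‖ ≤ K
  norm_f0 : ‖f0‖ = 1
  norm_g0 : ‖g0‖ ≤ K
  dev_f : ∀ s ∈ Icc (0:ℝ) 1, ‖f s - f0‖ ≤ p s
  dev_g : ∀ s ∈ Icc (0:ℝ) 1, ‖g s - g0‖ ≤ K * p s

namespace DevBound
variable {f g : ℝ → E} {f0 g0 : E} {K : ℝ} {p : ℝ → ℝ}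

theorem norm_add_smul_sub_le (H : DevBound f g f0 g0 K p) {τ : ℝ} (hτ : |τ| * K ≤ 1 / 8)
    {s : ℝ} (hs : s ∈ Icc (0:ℝ) 1) :
    ‖(f s + τ • g s) - (f0 + τ • g0)‖ ≤ 9 / 8 * p s := by
  have h0 := (norm_nonneg _).trans (H.dev_f s hs)
  have h : ‖τ • (g s - g0)‖ ≤ 1 / 8 * p s := by
    rw [norm_smul, Real.norm_eq_abs]
    refine (mul_le_mul_of_nonneg_left (H.dev_g s hs) (abs_nonneg _)).trans ?_
    rw [← mul_assoc]
    gcongr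
  rw [show (f s + τ • g s) - (f0 + τ • g0) = (f s - f0) + τ • (g s - g0) by module]
  refine (norm_add_le _ _).trans ?_
  linarith [H.dev_f s hs]

theorem lengthGap_le [CompleteSpace E] (H : DevBound f g f0 g0 K p) {τ : ℝ}
    (hτ : |τ| * K ≤ 1 / 8) :
    lengthGap (fun s => f s + τ • g s) ≤ 8 * ∫ s in (0:ℝ)..1, p s ^ 2 := by
  have hF : Continuous (fun s => f s + τ • g s) := by
    have := H.cont_f; have := H.cont_g; fun_prop
  rw [lengthGap_eq]
  have h1 := sq_integral_le hF.norm
  have h2 := abs_covariance_le hF hF (f0 + τ • g0) (f0 + τ • g0) H.cont_p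
    (fun s hs => H.norm_add_smul_sub_le hτ hs) (fun s hs => H.norm_add_smul_sub_le hτ hs)
  have h3 : 0 ≤ ∫ s in (0:ℝ)..1, p s ^ 2 :=
    intervalIntegral.integral_nonneg zero_le_one fun s _ => sq_nonneg _
  have h4 := (abs_le.1 h2).2
  linarith

theorem norm_sub_norm_dev (H : DevBound f g f0 g0 K p) {τ₁ τ₂ : ℝ}
    (h₁ : |τ₁| * K ≤ 1 / 8) (h₂ : |τ₂| * K ≤ 1 / 8) {s : ℝ} (hs : s ∈ Icc (0:ℝ) 1) :
    |(‖f s + τ₁ • g s‖ - ‖f s + τ₂ • g s‖) - (‖f0 + τ₁ • g0‖ - ‖f0 + τ₂ • g0‖)| ≤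
      7 * K * |τ₁ - τ₂| * p s := by
  have hp0 := (norm_nonneg _).trans (H.dev_f s hs)
  have hK := (norm_nonneg _).trans H.norm_g0
  set r := p s
  have key : ∀ {a b : E}, ‖a‖ = 1 → ‖b‖ ≤ K → ‖a + τ₁ • b‖ - ‖a + τ₂ • b‖ =
      (τ₁ - τ₂) * (⟪b, (a + τ₁ • b) + (a + τ₂ • b)⟫ / (‖a + τ₁ • b‖ + ‖a + τ₂ • b‖)) := by
    intro a b ha hb
    have b1 := (norm_add_smul_bounds ha hb h₁).1
    have b2 := (norm_add_smul_bounds ha hb h₂).1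
    have hS : ‖a + τ₁ • b‖ + ‖a + τ₂ • b‖ ≠ 0 := by linarith
    rw [← mul_div_assoc, eq_div_iff hS, mul_comm, ← sq_sub_sq, ← real_inner_self_eq_norm_sq,
      ← real_inner_self_eq_norm_sq]
    simp only [inner_add_left, inner_add_right, inner_smul_left, inner_smul_right,
      real_inner_comm a b, RCLike.conj_to_real]
    ring
  rw [key (H.norm_f s) (H.norm_g s), key H.norm_f0 H.norm_g0, ← mul_sub, abs_mul]
  obtain ⟨a1, a2⟩ := norm_add_smul_bounds (H.norm_f s) (H.norm_g s) h₁
  obtain ⟨a3, a4⟩ := norm_add_smul_bounds (H.norm_f s) (H.norm_g s) h₂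
  obtain ⟨b1, b2⟩ := norm_add_smul_bounds H.norm_f0 H.norm_g0 h₁
  obtain ⟨b3, b4⟩ := norm_add_smul_bounds H.norm_f0 H.norm_g0 h₂
  have d1 := H.norm_add_smul_sub_le h₁ hs
  have d2 := H.norm_add_smul_sub_le h₂ hs
  have dg := H.dev_g s hs
  have hgs := H.norm_g s
  have hg0 := H.norm_g0
  set F₁ := f s + τ₁ • g s
  set F₂ := f s + τ₂ • g s
  set G₁ := f0 + τ₁ • g0
  set G₂ := f0 + τ₂ • g0
  have dS : |(‖F₁‖ + ‖F₂‖) - (‖G₁‖ + ‖G₂‖)| ≤ 9 / 4 * r := by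
    have e1 := (abs_norm_sub_norm_le F₁ G₁).trans d1
    have e2 := (abs_norm_sub_norm_le F₂ G₂).trans d2
    rw [abs_le] at *
    constructor <;> linarith [e1.1, e1.2, e2.1, e2.2]
  have dV : ‖(F₁ + F₂) - (G₁ + G₂)‖ ≤ 9 / 4 * r := by
    rw [add_sub_add_comm]
    exact (norm_add_le _ _).trans (by linarith)
  have nV : ‖F₁ + F₂‖ ≤ 9 / 4 := (norm_add_le _ _).trans (by linarith)
  have nW : ‖G₁ + G₂‖ ≤ 9 / 4 := (norm_add_le _ _).trans (by linarith)
  have dA : |⟪g s, F₁ + F₂⟫ - ⟪g0, G₁ + G₂⟫| ≤ 9 / 2 * (K * r) := by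
    have e : ⟪g s, F₁ + F₂⟫ - ⟪g0, G₁ + G₂⟫ =
        ⟪g s - g0, F₁ + F₂⟫ + ⟪g0, (F₁ + F₂) - (G₁ + G₂)⟫ := by
      rw [inner_sub_left, inner_sub_right]; ring
    rw [e]
    have e1 := (abs_real_inner_le_norm (g s - g0) (F₁ + F₂)).trans
      (mul_le_mul dg nV (norm_nonneg _) (by positivity))
    have e2 := (abs_real_inner_le_norm g0 ((F₁ + F₂) - (G₁ + G₂))).trans
      (mul_le_mul hg0 dV (norm_nonneg _) (by positivity))
    exact (abs_add_le _ _).trans (by linarith)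
  have nA : |⟪g0, G₁ + G₂⟫| ≤ 9 / 4 * K :=
    (abs_real_inner_le_norm _ _).trans ((mul_le_mul hg0 nW (norm_nonneg _) hK).trans
      (by linarith))
  generalize ⟪g s, F₁ + F₂⟫ = A at *
  generalize ⟪g0, G₁ + G₂⟫ = B at *
  have hS : 7 / 4 ≤ ‖F₁‖ + ‖F₂‖ := by linarith
  have hT : 7 / 4 ≤ ‖G₁‖ + ‖G₂‖ := by linarith
  generalize ‖F₁‖ + ‖F₂‖ = S at *
  generalize ‖G₁‖ + ‖G₂‖ = T at *
  have hS0 : 0 < S := by linarith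
  have hT0 : 0 < T := by linarith
  have e : A / S - B / T = (A - B) / S - B / T * ((S - T) / S) := by field_simp; ring
  have e1 : |(A - B) / S| ≤ 9 / 2 * (K * r) / (7 / 4) := by
    rw [abs_div, abs_of_pos hS0]; gcongr
  have e2 : |B / T| ≤ 9 / 4 * K / (7 / 4) := by
    rw [abs_div, abs_of_pos hT0]; gcongr
  have e3 : |(S - T) / S| ≤ 9 / 4 * r / (7 / 4) := by
    rw [abs_div, abs_of_pos hS0]; gcongr
  have e4 : |B / T * ((S - T) / S)| ≤ (9 / 4 * K / (7 / 4)) * (9 / 4 * r / (7 / 4)) := by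
    rw [abs_mul]; gcongr
  have hKr : 0 ≤ K * r := by positivity
  have e5 : |A / S - B / T| ≤ 7 * K * r := by
    rw [e]
    refine (abs_sub _ _).trans ?_
    nlinarith
  calc |τ₁ - τ₂| * |A / S - B / T| ≤ |τ₁ - τ₂| * (7 * K * r) := by gcongr
    _ = _ := by ring

theorem abs_lengthGap_sub_le [CompleteSpace E] (H : DevBound f g f0 g0 K p) {τ₁ τ₂ : ℝ}
    (h₁ : |τ₁| * K ≤ 1 / 8) (h₂ : |τ₂| * K ≤ 1 / 8) :
    |lengthGap (fun s => f s + τ₁ • g s) - lengthGap (fun s => f s + τ₂ • g s)| ≤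
      48 * K * |τ₁ - τ₂| * ∫ s in (0:ℝ)..1, p s ^ 2 := by
  have hf := H.cont_f
  have hg := H.cont_g
  have c1 := abs_covariance_le (A := fun s => (τ₁ - τ₂) • g s)
    (B := fun s => (f s + τ₁ • g s) + (f s + τ₂ • g s)) (by fun_prop) (by fun_prop)
    ((τ₁ - τ₂) • g0) ((f0 + τ₁ • g0) + (f0 + τ₂ • g0)) H.cont_p (a := K * |τ₁ - τ₂|) (b := 9 / 4)
    (fun s hs => ?_) (fun s hs => ?_)
  · have c2 := abs_covariance_le (A := fun s => ‖f s + τ₁ • g s‖ - ‖f s + τ₂ • g s‖)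
      (B := fun s => ‖f s + τ₁ • g s‖ + ‖f s + τ₂ • g s‖) (by fun_prop) (by fun_prop)
      (‖f0 + τ₁ • g0‖ - ‖f0 + τ₂ • g0‖) (‖f0 + τ₁ • g0‖ + ‖f0 + τ₂ • g0‖) H.cont_p
      (a := 7 * K * |τ₁ - τ₂|) (b := 9 / 4)
      (fun s hs => H.norm_sub_norm_dev h₁ h₂ hs) (fun s hs => ?_)
    · have hP : 0 ≤ ∫ s in (0:ℝ)..1, p s ^ 2 :=
        intervalIntegral.integral_nonneg zero_le_one fun s _ => sq_nonneg _
      have hK := (norm_nonneg _).trans H.norm_g0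
      set X₁ := fun s => f s + τ₁ • g s with hX₁
      set X₂ := fun s => f s + τ₂ • g s with hX₂
      have hc1 : Continuous X₁ := by fun_prop
      have hc2 : Continuous X₂ := by fun_prop
      have hd : ∀ s, (τ₁ - τ₂) • g s = X₁ s - X₂ s := fun s => by simp only [hX₁, hX₂]; module
      simp only [hd] at c1
      have i1 : ∫ s in (0:ℝ)..1, (X₁ s - X₂ s) =
          (∫ s in (0:ℝ)..1, X₁ s) - ∫ s in (0:ℝ)..1, X₂ s :=
        intervalIntegral.integral_sub (hc1.intervalIntegrable _ _) (hc2.intervalIntegrable _ _)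
      have i2 : ∫ s in (0:ℝ)..1, (X₁ s + X₂ s) =
          (∫ s in (0:ℝ)..1, X₁ s) + ∫ s in (0:ℝ)..1, X₂ s :=
        intervalIntegral.integral_add (hc1.intervalIntegrable _ _) (hc2.intervalIntegrable _ _)
      have i3 : ∫ s in (0:ℝ)..1, (‖X₁ s‖ - ‖X₂ s‖) =
          (∫ s in (0:ℝ)..1, ‖X₁ s‖) - ∫ s in (0:ℝ)..1, ‖X₂ s‖ :=
        intervalIntegral.integral_sub (hc1.norm.intervalIntegrable _ _)
          (hc2.norm.intervalIntegrable _ _)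
      have i4 : ∫ s in (0:ℝ)..1, (‖X₁ s‖ + ‖X₂ s‖) =
          (∫ s in (0:ℝ)..1, ‖X₁ s‖) + ∫ s in (0:ℝ)..1, ‖X₂ s‖ :=
        intervalIntegral.integral_add (hc1.norm.intervalIntegrable _ _)
          (hc2.norm.intervalIntegrable _ _)
      have i5 : ∫ s in (0:ℝ)..1, ⟪X₁ s - X₂ s, X₁ s + X₂ s⟫ =
          ∫ s in (0:ℝ)..1, ⟪‖X₁ s‖ - ‖X₂ s‖, ‖X₁ s‖ + ‖X₂ s‖⟫ := by
        congr 1; funext s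
        rw [real_inner_sub_add]
        simp only [RCLike.inner_apply, RCLike.conj_to_real]
        ring
      have e : lengthGap X₁ - lengthGap X₂ =
          ((∫ s in (0:ℝ)..1, ⟪X₁ s - X₂ s, X₁ s + X₂ s⟫) -
            ⟪∫ s in (0:ℝ)..1, (X₁ s - X₂ s), ∫ s in (0:ℝ)..1, (X₁ s + X₂ s)⟫) -
          ((∫ s in (0:ℝ)..1, ⟪‖X₁ s‖ - ‖X₂ s‖, ‖X₁ s‖ + ‖X₂ s‖⟫) -
            ⟪∫ s in (0:ℝ)..1, (‖X₁ s‖ - ‖X₂ s‖), ∫ s in (0:ℝ)..1, (‖X₁ s‖ + ‖X₂ s‖)⟫) := by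
        rw [i5, i1, i2, i3, i4, real_inner_sub_add]
        simp only [RCLike.inner_apply, RCLike.conj_to_real, lengthGap]
        ring
      rw [e]
      refine (abs_sub _ _).trans ((add_le_add c1 c2).trans ?_)
      have : 0 ≤ K * |τ₁ - τ₂| * ∫ s in (0:ℝ)..1, p s ^ 2 := by positivity
      linarith
    · have e1 := (abs_norm_sub_norm_le (f s + τ₁ • g s) (f0 + τ₁ • g0)).trans
        (H.norm_add_smul_sub_le h₁ hs)
      have e2 := (abs_norm_sub_norm_le (f s + τ₂ • g s) (f0 + τ₂ • g0)).trans
        (H.norm_add_smul_sub_le h₂ hs)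
      rw [Real.norm_eq_abs]
      rw [abs_le] at *
      constructor <;> linarith [e1.1, e1.2, e2.1, e2.2]
  · rw [← smul_sub, norm_smul, Real.norm_eq_abs]
    refine (mul_le_mul_of_nonneg_left (H.dev_g s hs) (abs_nonneg _)).trans (le_of_eq (by ring))
  · rw [add_sub_add_comm]
    refine (norm_add_le _ _).trans ?_
    linarith [H.norm_add_smul_sub_le h₁ hs, H.norm_add_smul_sub_le h₂ hs]

end DevBound
end LengthGap

theorem exists_chord_lower_bound {γ : ℝ → Rn n} (hc : ContDiff ℝ 1 γ)
    (hp : Function.Periodic γ 1) (hinj : PerInjective γ) (harc : ArcLengthParam γ) :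
    ∃ c, 0 < c ∧ ∀ w ∈ Icc (-(1/2):ℝ) (1/2), ∀ u, c ≤ ‖avg (deriv γ) w u‖ := by
  have hcont := (continuous_avg (hc.continuous_deriv le_rfl)).norm
  obtain ⟨x, hxm, hx⟩ := (isCompact_Icc (a := (0:ℝ)) (b := 1)).prod
    (isCompact_Icc (a := (-(1/2):ℝ)) (b := 1/2)) |>.exists_isMinOn
    ⟨(0, 0), by simp⟩ hcont.continuousOn
  refine ⟨‖avg (deriv γ) x.2 x.1‖, ?_, fun w hw u => ?_⟩
  · rw [norm_pos_iff]
    intro h0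
    have h1 := sub_eq_smul_avg hc x.2 x.1
    rw [h0, smul_zero, sub_eq_zero] at h1
    obtain ⟨k, hk⟩ := hinj _ _ h1.symm
    have hk : x.2 = k := by linarith
    have hk0 : k = 0 := by
      have h2 := hxm.2.1; have h3 := hxm.2.2
      rw [hk] at h2 h3
      have h2 : (-1:ℝ) < k := by linarith
      have h3 : (k:ℝ) < 1 := by linarith
      have : -1 < k := by exact_mod_cast h2
      have : k < 1 := by exact_mod_cast h3
      lia
    rw [hk, hk0, Int.cast_zero, avg_zero] at h0
    have := harc x.1
    simp [h0] at this
  · obtain ⟨y, hy, hyu⟩ := ((contPer_deriv hc hp).avg w).per.exists_mem_Ico₀ one_pos u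
    rw [hyu]
    exact isMinOn_iff.1 hx (y, w) (mk_mem_prod (Ico_subset_Icc_self hy) hw)

structure Variation (γ h : ℝ → Rn n) (c K : ℝ) : Prop where
  contDiff : ContDiff ℝ 1 γ
  per : Function.Periodic γ 1
  arc : ArcLengthParam γ
  contDiff_dir : ContDiff ℝ 1 h
  per_dir : Function.Periodic h 1
  norm_dir : ∀ u, ‖deriv h u‖ ≤ K
  lip_dir : ∀ x y, ‖deriv h x - deriv h y‖ ≤ K * |x - y|
  pos : 0 < c
  chord : ∀ w ∈ Icc (-(1/2):ℝ) (1/2), ∀ u, c ≤ ‖avg (deriv γ) w u‖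

/-- The velocity of the varied curve `γ + τ h`. -/
def vel (γ h : ℝ → Rn n) (τ u : ℝ) : Rn n := deriv γ u + τ • deriv h u

/-- Mean speed of the varied curve between `u` and `u + w`. -/
def meanSpeed (γ h : ℝ → Rn n) (τ w u : ℝ) : ℝ := avg (fun x => ‖vel γ h τ x‖) w u

namespace Variation
variable {γ h : ℝ → Rn n} {c K : ℝ}

theorem continuous_deriv (V : Variation γ h c K) : Continuous (deriv γ) :=
  V.contDiff.continuous_deriv le_rfl

theorem continuous_deriv_dir (V : Variation γ h c K) : Continuous (deriv h) :=
  V.contDiff_dir.continuous_deriv le_rfl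

theorem continuous_vel (V : Variation γ h c K) (τ : ℝ) : Continuous (vel γ h τ) := by
  have := V.continuous_deriv; have := V.continuous_deriv_dir
  unfold vel; fun_prop

theorem nonneg (V : Variation γ h c K) : 0 ≤ K := (norm_nonneg _).trans (V.norm_dir 0)

theorem le_one (V : Variation γ h c K) : c ≤ 1 := by
  have := V.chord 0 (by norm_num) 0
  rwa [avg_zero, V.arc] at this

theorem deriv_add_smul (V : Variation γ h c K) (τ : ℝ) : deriv (γ + τ • h) = vel γ h τ := by
  funext u
  exact (((V.contDiff.differentiable one_ne_zero) u).hasDerivAt.add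
    (((V.contDiff_dir.differentiable one_ne_zero) u).hasDerivAt.const_smul τ)).deriv

theorem contDiff_add_smul (V : Variation γ h c K) (τ : ℝ) : ContDiff ℝ 1 (γ + τ • h) :=
  V.contDiff.add (V.contDiff_dir.const_smul τ)

theorem per_add_smul (V : Variation γ h c K) (τ : ℝ) : Function.Periodic (γ + τ • h) 1 :=
  fun u => by simp [V.per u, V.per_dir u]

theorem per_vel (V : Variation γ h c K) (τ : ℝ) : Function.Periodic (vel γ h τ) 1 := by
  rw [← V.deriv_add_smul τ]
  exact (contPer_deriv (V.contDiff_add_smul τ) (V.per_add_smul τ)).per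

theorem norm_vel_bounds (V : Variation γ h c K) {τ : ℝ} (hτ : |τ| * K ≤ c / 8) (u : ℝ) :
    7 / 8 ≤ ‖vel γ h τ u‖ ∧ ‖vel γ h τ u‖ ≤ 9 / 8 :=
  norm_add_smul_bounds (V.arc u) (V.norm_dir u) (hτ.trans (by linarith [V.le_one]))

theorem norm_vel_sub_le (V : Variation γ h c K) (τ₁ τ₂ u : ℝ) :
    ‖vel γ h τ₁ u - vel γ h τ₂ u‖ ≤ K * |τ₁ - τ₂| := by
  rw [vel, vel, show deriv γ u + τ₁ • deriv h u - (deriv γ u + τ₂ • deriv h u) =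
    (τ₁ - τ₂) • deriv h u by module, norm_smul, mul_comm, Real.norm_eq_abs]
  gcongr
  exact V.norm_dir u

theorem chord_eq (V : Variation γ h c K) (τ u w : ℝ) :
    (γ + τ • h) (u + w) - (γ + τ • h) u = w • avg (vel γ h τ) w u := by
  rw [sub_eq_smul_avg (V.contDiff_add_smul τ), V.deriv_add_smul]

theorem arcLen_eq (V : Variation γ h c K) (τ u w : ℝ) :
    arcLen (γ + τ • h) u w = |w| * |meanSpeed γ h τ w u| := by
  rw [arcLen, V.deriv_add_smul, ← smul_avg, smul_eq_mul, abs_mul, meanSpeed]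

theorem curveLen_eq (V : Variation γ h c K) (τ u : ℝ) :
    curveLen (γ + τ • h) = meanSpeed γ h τ 1 u := by
  rw [curveLen, V.deriv_add_smul, meanSpeed, avg_one
    ⟨(V.continuous_vel τ).norm, fun u => by simp only [V.per_vel τ u]⟩]

theorem meanSpeed_bounds (V : Variation γ h c K) {τ : ℝ} (hτ : |τ| * K ≤ c / 8) (w u : ℝ) :
    7 / 8 ≤ meanSpeed γ h τ w u ∧ meanSpeed γ h τ w u ≤ 9 / 8 := by
  have hc := V.continuous_vel τ
  have h1 : ∫ _ in (0:ℝ)..1, (7/8:ℝ) = 7 / 8 := by simp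
  have h2 : ∫ _ in (0:ℝ)..1, (9/8:ℝ) = 9 / 8 := by simp
  constructor
  · rw [← h1]
    exact intervalIntegral.integral_mono_on zero_le_one (by simp)
      (Continuous.intervalIntegrable (by fun_prop) _ _) fun s _ => (V.norm_vel_bounds hτ _).1
  · rw [← h2]
    exact intervalIntegral.integral_mono_on zero_le_one
      (Continuous.intervalIntegrable (by fun_prop) _ _) (by simp)
      fun s _ => (V.norm_vel_bounds hτ _).2

theorem abs_meanSpeed_sub_le (V : Variation γ h c K) (τ₁ τ₂ w u : ℝ) :
    |meanSpeed γ h τ₁ w u - meanSpeed γ h τ₂ w u| ≤ K * |τ₁ - τ₂| :=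
  norm_avg_sub_le (V.continuous_vel τ₁).norm (V.continuous_vel τ₂).norm
    (fun u => (abs_norm_sub_norm_le _ _).trans (V.norm_vel_sub_le τ₁ τ₂ u)) w u

theorem norm_avg_vel_sub_le (V : Variation γ h c K) (τ₁ τ₂ w u : ℝ) :
    ‖avg (vel γ h τ₁) w u - avg (vel γ h τ₂) w u‖ ≤ K * |τ₁ - τ₂| :=
  norm_avg_sub_le (V.continuous_vel τ₁) (V.continuous_vel τ₂)
    (fun u => (V.norm_vel_sub_le τ₁ τ₂ u)) w u

theorem vel_zero : vel γ h 0 = deriv γ := by funext u; simp [vel]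

theorem meanSpeed_zero (V : Variation γ h c K) (w u : ℝ) : meanSpeed γ h 0 w u = 1 := by
  simp [meanSpeed, vel_zero, avg, V.arc _]

theorem norm_avg_vel_bounds (V : Variation γ h c K) {τ : ℝ} (hτ : |τ| * K ≤ c / 8) {w : ℝ}
    (hw : w ∈ Icc (-(1/2):ℝ) (1/2)) (u : ℝ) :
    c / 2 ≤ ‖avg (vel γ h τ) w u‖ ∧ ‖avg (vel γ h τ) w u‖ ≤ 9 / 8 := by
  have h1 := V.norm_avg_vel_sub_le 0 τ w u
  have h2 := V.chord w hw u
  have h3 := norm_le_norm_add_norm_sub' (avg (deriv γ) w u) (avg (vel γ h τ) w u)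
  rw [vel_zero, zero_sub, abs_neg] at h1
  refine ⟨by linarith [V.pos], norm_avg_le (fun u => (V.norm_vel_bounds hτ u).2) w u⟩

theorem norm_avg_vel_le_meanSpeed (τ w u : ℝ) :
    ‖avg (vel γ h τ) w u‖ ≤ meanSpeed γ h τ w u := norm_avg_le_avg_norm w u

theorem idist_eq (V : Variation γ h c K) {τ : ℝ} (hτ : |τ| * K ≤ c / 8) (u w : ℝ) :
    idist (γ + τ • h) u w = min (|w| * meanSpeed γ h τ w u)
      (meanSpeed γ h τ 1 u - |w| * meanSpeed γ h τ w u) := by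
  rw [idist, V.arcLen_eq, V.curveLen_eq τ u,
    abs_of_nonneg (by linarith [(V.meanSpeed_bounds hτ w u).1] : 0 ≤ meanSpeed γ h τ w u)]

theorem chord_le_idist (V : Variation γ h c K) {τ : ℝ} (hτ : |τ| * K ≤ c / 8) (u : ℝ) {w : ℝ}
    (hw : |w| ≤ 1 / 2) : |w| * ‖avg (vel γ h τ) w u‖ ≤ idist (γ + τ • h) u w := by
  rw [V.idist_eq hτ]
  refine le_min ?_ ?_
  · gcongr; exact norm_avg_vel_le_meanSpeed τ w u
  · obtain ⟨ε, hε, hεw⟩ : ∃ ε : ℤ, |(ε:ℝ)| = 1 ∧ w = ε * |w| := by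
      rcases le_total 0 w with h | h
      · exact ⟨1, by simp, by simp [abs_of_nonneg h]⟩
      · exact ⟨-1, by simp, by simp [abs_of_nonpos h]⟩
    have e1 : |w| * ‖avg (vel γ h τ) w u‖ = ‖∫ x in u..u + w - ε, vel γ h τ x‖ := by
      rw [← Real.norm_eq_abs w, ← norm_smul, ← V.chord_eq, ← V.deriv_add_smul,
        intervalIntegral.integral_deriv_eq_sub
        (fun x _ => ((V.contDiff_add_smul τ).differentiable one_ne_zero) x)
        (((V.contDiff_add_smul τ).continuous_deriv le_rfl).intervalIntegrable _ _)]
      have := (V.per_add_smul τ).sub_zsmul_eq (x := u + w) ε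
      rw [zsmul_one] at this
      rw [this]
    have hN : Continuous fun x => ‖vel γ h τ x‖ := (V.continuous_vel τ).norm
    have hNp : Function.Periodic (fun x => ‖vel γ h τ x‖) 1 := fun u => by
      simp only [V.per_vel τ u]
    have e2 : ∫ x in u..u + w - ε, ‖vel γ h τ x‖ =
        w * meanSpeed γ h τ w u - ε * meanSpeed γ h τ 1 u := by
      rw [← intervalIntegral.integral_add_adjacent_intervals (b := u + w)
        (hN.intervalIntegrable _ _) (hN.intervalIntegrable _ _), ← smul_avg, smul_eq_mul,
        meanSpeed, sub_eq_add_neg, meanSpeed, avg_one ⟨hN, hNp⟩]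
      congr 1
      have := hNp.intervalIntegral_add_zsmul_eq (-ε) (u + w)
        (fun a b => hN.intervalIntegrable a b)
      simp only [zsmul_eq_mul, mul_one, Int.cast_neg] at this
      rw [this, hNp.intervalIntegral_add_eq _ 0, zero_add]
      ring
    have b1 := V.meanSpeed_bounds hτ w u
    have b2 := V.meanSpeed_bounds hτ 1 u
    rw [e1]
    refine (intervalIntegral.norm_integral_le_abs_integral_norm).trans (le_of_eq ?_)
    rw [e2]
    nth_rewrite 1 [hεw]
    rw [mul_assoc, ← mul_sub, abs_mul, hε, one_mul, abs_sub_comm, abs_of_nonneg]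
    nlinarith [abs_nonneg w]

end Variation

/-- Mean square oscillation of `F` between `u` and `u + w`. -/
def meanOsc (F : ℝ → Rn n) (w u : ℝ) : ℝ := ∫ s in (0:ℝ)..1, ‖F (u + s * w) - F u‖ ^ 2

theorem meanOsc_nonneg (F : ℝ → Rn n) (w u : ℝ) : 0 ≤ meanOsc F w u :=
  intervalIntegral.integral_nonneg zero_le_one fun _ _ => sq_nonneg _

theorem one_div_mul_rpow {a x α : ℝ} (ha : 0 ≤ a) (hx : 0 ≤ x) :
    1 / (a * x) ^ α = a ^ (-α) * (x ^ 2) ^ (-(α / 2)) := by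
  rw [Real.mul_rpow ha hx, ← Real.rpow_natCast, ← Real.rpow_mul hx, Real.rpow_neg ha,
    show ((2:ℕ):ℝ) * -(α / 2) = -α by push_cast; ring, Real.rpow_neg hx, one_div, mul_inv]

theorem abs_mul_sub_mul_le {a a' b b' A B dA dB : ℝ} (ha : |a| ≤ A)
    (hb : |b'| ≤ B) (hda : |a - a'| ≤ dA) (hdb : |b - b'| ≤ dB) :
    |a * b - a' * b'| ≤ A * dB + dA * B := by
  rw [show a * b - a' * b' = a * (b - b') + (a - a') * b' by ring]
  refine (abs_add_le _ _).trans ?_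
  rw [abs_mul, abs_mul]
  exact add_le_add (mul_le_mul ha hdb (abs_nonneg _) ((abs_nonneg _).trans ha))
    (mul_le_mul hda hb (abs_nonneg _) ((abs_nonneg _).trans hda))

namespace Variation
variable {γ h : ℝ → Rn n} {c K : ℝ}

theorem devBound (V : Variation γ h c K) (u w : ℝ) :
    DevBound (fun s => deriv γ (u + s * w)) (fun s => deriv h (u + s * w)) (deriv γ u) (deriv h u)
      K (fun s => ‖deriv γ (u + s * w) - deriv γ u‖ + |w|) where
  cont_f := by have := V.continuous_deriv; fun_prop
  cont_g := by have := V.continuous_deriv_dir; fun_prop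
  cont_p := by have := V.continuous_deriv; fun_prop
  norm_f _ := V.arc _
  norm_g _ := V.norm_dir _
  norm_f0 := V.arc _
  norm_g0 := V.norm_dir _
  dev_f s _ := by simp
  dev_g s hs := by
    refine (V.lip_dir _ _).trans ?_
    have := V.nonneg
    gcongr
    rw [add_sub_cancel_left, abs_mul, abs_of_nonneg hs.1]
    nlinarith [norm_nonneg (deriv γ (u + s * w) - deriv γ u), abs_nonneg w, hs.2]

theorem integral_dev_sq_le (V : Variation γ h c K) (u w : ℝ) :
    ∫ s in (0:ℝ)..1, (‖deriv γ (u + s * w) - deriv γ u‖ + |w|) ^ 2 ≤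
      2 * (meanOsc (deriv γ) w u + w ^ 2) := by
  have hc := V.continuous_deriv
  have e : 2 * (meanOsc (deriv γ) w u + w ^ 2) =
      ∫ s in (0:ℝ)..1, 2 * (‖deriv γ (u + s * w) - deriv γ u‖ ^ 2 + w ^ 2) := by
    rw [intervalIntegral.integral_const_mul, intervalIntegral.integral_add
      (Continuous.intervalIntegrable (by fun_prop) _ _) (by simp), meanOsc]
    simp
  rw [e]
  refine intervalIntegral.integral_mono_on zero_le_one
    (Continuous.intervalIntegrable (by fun_prop) _ _)
    (Continuous.intervalIntegrable (by fun_prop) _ _) fun s _ => ?_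
  nlinarith [sq_nonneg (‖deriv γ (u + s * w) - deriv γ u‖ - |w|), sq_abs w]

/-- Speed factor of the energy integrand. -/
theorem speed_mul (V : Variation γ h c K) {τ₁ τ₂ : ℝ} (h₁ : |τ₁| * K ≤ c / 8)
    (h₂ : |τ₂| * K ≤ c / 8) (u v : ℝ) :
    |‖vel γ h τ₁ v‖ * ‖vel γ h τ₁ u‖| ≤ 2 ∧
    |‖vel γ h τ₁ v‖ * ‖vel γ h τ₁ u‖ - ‖vel γ h τ₂ v‖ * ‖vel γ h τ₂ u‖| ≤
      3 * (K * |τ₁ - τ₂|) := by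
  have a1 := V.norm_vel_bounds h₁ u
  have a2 := V.norm_vel_bounds h₁ v
  have a3 := V.norm_vel_bounds h₂ u
  have d1 := (abs_norm_sub_norm_le _ _).trans (V.norm_vel_sub_le τ₁ τ₂ u)
  have d2 := (abs_norm_sub_norm_le _ _).trans (V.norm_vel_sub_le τ₁ τ₂ v)
  have hd : 0 ≤ K * |τ₁ - τ₂| := (abs_nonneg _).trans d1
  constructor
  · rw [abs_of_nonneg (by positivity)]
    nlinarith
  · refine (abs_mul_sub_mul_le (A := 9/8) (B := 9/8) ?_ ?_ d2 d1).trans (by linarith) <;>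
    · rw [abs_norm]; linarith

theorem ohIntegrand_eq (V : Variation γ h c K) (α τ u w : ℝ) :
    ohIntegrand α (γ + τ • h) u w =
      (1 / (|w| * ‖avg (vel γ h τ) w u‖) ^ α - 1 / idist (γ + τ • h) u w ^ α) *
        (‖vel γ h τ (u + w)‖ * ‖vel γ h τ u‖) := by
  rw [ohIntegrand, V.chord_eq, V.deriv_add_smul, norm_smul, Real.norm_eq_abs, mul_assoc]

theorem ohIntegrand_eq_of_idist (V : Variation γ h c K) (α : ℝ) {τ : ℝ} (hτ : |τ| * K ≤ c / 8)
    {u w : ℝ} (hd : idist (γ + τ • h) u w = |w| * meanSpeed γ h τ w u) :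
    ohIntegrand α (γ + τ • h) u w =
      |w| ^ (-α) * (((‖avg (vel γ h τ) w u‖ ^ 2) ^ (-(α / 2)) -
        (meanSpeed γ h τ w u ^ 2) ^ (-(α / 2))) *
        (‖vel γ h τ (u + w)‖ * ‖vel γ h τ u‖)) := by
  rw [V.ohIntegrand_eq, hd, one_div_mul_rpow (abs_nonneg _) (norm_nonneg _),
    one_div_mul_rpow (abs_nonneg _) (by linarith [(V.meanSpeed_bounds hτ w u).1])]
  ring

theorem near_estimate (V : Variation γ h c K) {α : ℝ} (hα : 0 < α) :
    ∃ C, 0 ≤ C ∧ ∀ τ₁ τ₂ : ℝ, |τ₁| * K ≤ c / 8 → |τ₂| * K ≤ c / 8 → ∀ u w : ℝ, |w| < 1 / 4 →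
      |ohIntegrand α (γ + τ₁ • h) u w| ≤ C * (|w| ^ (-α) * (meanOsc (deriv γ) w u + w ^ 2)) ∧
      |ohIntegrand α (γ + τ₁ • h) u w - ohIntegrand α (γ + τ₂ • h) u w| ≤
        C * (|w| ^ (-α) * (meanOsc (deriv γ) w u + w ^ 2)) * |τ₁ - τ₂| := by
  have hc := V.pos
  have hK := V.nonneg
  obtain ⟨C, hC, hΨ⟩ := exists_rpow_gap_le (p := α / 2) (m := (c / 2) ^ 2) (by positivity)
    (by positivity)
  refine ⟨32 * C + 336 * C * K, by positivity, fun τ₁ τ₂ h₁ h₂ u w hw => ?_⟩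
  have hw2 : w ∈ Icc (-(1/2):ℝ) (1/2) := by
    rw [abs_lt] at hw; constructor <;> linarith
  have hnear : ∀ {τ : ℝ}, |τ| * K ≤ c / 8 →
      idist (γ + τ • h) u w = |w| * meanSpeed γ h τ w u := by
    intro τ hτ
    rw [V.idist_eq hτ, min_eq_left]
    nlinarith [V.meanSpeed_bounds hτ w u, V.meanSpeed_bounds hτ 1 u, abs_nonneg w]
  have hgap : ∀ τ, meanSpeed γ h τ w u ^ 2 = ‖avg (vel γ h τ) w u‖ ^ 2 +
      lengthGap (fun s => deriv γ (u + s * w) + τ • deriv h (u + s * w)) := fun τ => by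
    simp only [lengthGap, meanSpeed, avg, vel]; ring
  rw [V.ohIntegrand_eq_of_idist α h₁ (hnear h₁), V.ohIntegrand_eq_of_idist α h₂ (hnear h₂),
    hgap, hgap, ← mul_sub]
  have h₁' : |τ₁| * K ≤ 1 / 8 := h₁.trans (by linarith [V.le_one])
  have h₂' : |τ₂| * K ≤ 1 / 8 := h₂.trans (by linarith [V.le_one])
  have D := V.devBound u w
  have y1 := lengthGap_nonneg (fun s => deriv γ (u + s * w) + τ₁ • deriv h (u + s * w))
  have y2 := lengthGap_nonneg (fun s => deriv γ (u + s * w) + τ₂ • deriv h (u + s * w))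
  have l1 := D.lengthGap_le h₁'
  have l2 := D.lengthGap_le h₂'
  have l12 := D.abs_lengthGap_sub_le h₁' h₂'
  have hP := V.integral_dev_sq_le u w
  have hP0 : 0 ≤ ∫ s in (0:ℝ)..1, (‖deriv γ (u + s * w) - deriv γ u‖ + |w|) ^ 2 :=
    intervalIntegral.integral_nonneg zero_le_one fun s _ => sq_nonneg _
  generalize lengthGap (fun s => deriv γ (u + s * w) + τ₁ • deriv h (u + s * w)) = Y₁ at *
  generalize lengthGap (fun s => deriv γ (u + s * w) + τ₂ • deriv h (u + s * w)) = Y₂ at *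
  generalize ∫ s in (0:ℝ)..1, (‖deriv γ (u + s * w) - deriv γ u‖ + |w|) ^ 2 = P at *
  generalize meanOsc (deriv γ) w u + w ^ 2 = Z at *
  obtain ⟨m1, m1'⟩ := V.norm_avg_vel_bounds h₁ hw2 u
  obtain ⟨m2, m2'⟩ := V.norm_avg_vel_bounds h₂ hw2 u
  have dM : |‖avg (vel γ h τ₁) w u‖ ^ 2 - ‖avg (vel γ h τ₂) w u‖ ^ 2| ≤
      3 * (K * |τ₁ - τ₂|) := by
    have e := (abs_norm_sub_norm_le _ _).trans (V.norm_avg_vel_sub_le τ₁ τ₂ w u)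
    rw [sq, sq]
    refine (abs_mul_sub_mul_le (A := 9/8) (B := 9/8) ?_ ?_ e e).trans ?_
    · rwa [abs_norm]
    · rwa [abs_norm]
    · linarith [(abs_nonneg _).trans e]
  obtain ⟨s1, s12⟩ := V.speed_mul h₁ h₂ u (u + w)
  obtain ⟨-, Ψ12⟩ := hΨ _ _ Y₁ Y₂ (by gcongr : (c / 2) ^ 2 ≤ ‖avg (vel γ h τ₁) w u‖ ^ 2)
    (by gcongr : (c / 2) ^ 2 ≤ ‖avg (vel γ h τ₂) w u‖ ^ 2) y1 y2
  obtain ⟨Ψ1, -⟩ := hΨ _ _ Y₁ Y₂ (by gcongr : (c / 2) ^ 2 ≤ ‖avg (vel γ h τ₁) w u‖ ^ 2)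
    (by gcongr : (c / 2) ^ 2 ≤ ‖avg (vel γ h τ₂) w u‖ ^ 2) y1 y2
  obtain ⟨s2, -⟩ := V.speed_mul h₂ h₁ u (u + w)
  have hwα : 0 ≤ |w| ^ (-α) := by positivity
  have hδ : 0 ≤ |τ₁ - τ₂| := abs_nonneg _
  generalize |τ₁ - τ₂| = δ at *
  have hZ : 0 ≤ Z := by linarith
  have hCP : 0 ≤ C * P := by positivity
  have hA : C * Y₁ ≤ 16 * (C * Z) := by
    have : C * Y₁ ≤ C * (16 * Z) := by gcongr; linarith
    linarith
  refine ⟨?_, ?_⟩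
  · rw [abs_mul, abs_of_nonneg hwα, abs_mul]
    have e1 := mul_le_mul (Ψ1.trans hA) s1 (abs_nonneg _) (by positivity)
    calc |w| ^ (-α) * _ ≤ |w| ^ (-α) * (16 * (C * Z) * 2) := by gcongr
      _ = 32 * C * (|w| ^ (-α) * Z) := by ring
      _ ≤ (32 * C + 336 * C * K) * (|w| ^ (-α) * Z) := by
        gcongr; linarith [(by positivity : 0 ≤ 336 * C * K)]
  · rw [abs_mul, abs_of_nonneg hwα]
    have e2 := abs_mul_sub_mul_le (Ψ1.trans hA) s2 Ψ12 s12
    have e3 : C * (Y₁ * |‖avg (vel γ h τ₁) w u‖ ^ 2 - ‖avg (vel γ h τ₂) w u‖ ^ 2| + |Y₁ - Y₂|) ≤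
        C * ((16 * Z) * (3 * (K * δ)) + 48 * K * δ * (2 * Z)) := by
      gcongr
      · linarith
      · exact l12.trans (by gcongr)
    calc |w| ^ (-α) * _ ≤ |w| ^ (-α) * (336 * C * K * Z * δ) := by
          gcongr
          refine e2.trans ?_
          refine (add_le_add_right (mul_le_mul_of_nonneg_right e3 zero_le_two) _).trans ?_
          refine le_of_eq ?_
          ring
      _ = (336 * C * K) * (|w| ^ (-α) * Z) * δ := by ring
      _ ≤ (32 * C + 336 * C * K) * (|w| ^ (-α) * Z) * δ := by
        gcongr; linarith [(by positivity : 0 ≤ 32 * C)]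

theorem far_estimate (V : Variation γ h c K) {α : ℝ} (hα : 0 < α) :
    ∃ C, 0 ≤ C ∧ ∀ τ₁ τ₂ : ℝ, |τ₁| * K ≤ c / 8 → |τ₂| * K ≤ c / 8 → ∀ u w : ℝ,
      1 / 4 ≤ |w| → |w| ≤ 1 / 2 →
      |ohIntegrand α (γ + τ₁ • h) u w| ≤ C ∧
      |ohIntegrand α (γ + τ₁ • h) u w - ohIntegrand α (γ + τ₂ • h) u w| ≤ C * |τ₁ - τ₂| := by
  have hc := V.pos
  have hK := V.nonneg
  set A := α * (c / 8) ^ (-α - 1) with hA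
  set B := (c / 8) ^ (-α) with hB
  have hA0 : 0 ≤ A := by positivity
  have hB0 : 0 ≤ B := by positivity
  refine ⟨4 * B + 6 * B * K + 6 * A * K, by positivity, fun τ₁ τ₂ h₁ h₂ u w hw hw' => ?_⟩
  have hw2 : w ∈ Icc (-(1/2):ℝ) (1/2) := abs_le.1 hw'
  rw [V.ohIntegrand_eq, V.ohIntegrand_eq]
  have hX : ∀ {τ : ℝ}, |τ| * K ≤ c / 8 → c / 8 ≤ |w| * ‖avg (vel γ h τ) w u‖ := by
    intro τ hτ
    nlinarith [V.norm_avg_vel_bounds hτ hw2 u]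
  have hd : ∀ {τ : ℝ}, |τ| * K ≤ c / 8 → c / 8 ≤ idist (γ + τ • h) u w := fun hτ =>
    (hX hτ).trans (V.chord_le_idist hτ u hw')
  have dX : |(|w| * ‖avg (vel γ h τ₁) w u‖) - |w| * ‖avg (vel γ h τ₂) w u‖| ≤
      K * |τ₁ - τ₂| := by
    rw [← mul_sub, abs_mul, abs_abs]
    have e := (abs_norm_sub_norm_le _ _).trans (V.norm_avg_vel_sub_le τ₁ τ₂ w u)
    nlinarith [abs_nonneg (‖avg (vel γ h τ₁) w u‖ - ‖avg (vel γ h τ₂) w u‖)]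
  have dd : |idist (γ + τ₁ • h) u w - idist (γ + τ₂ • h) u w| ≤ 2 * (K * |τ₁ - τ₂|) := by
    rw [V.idist_eq h₁, V.idist_eq h₂]
    have e1 := V.abs_meanSpeed_sub_le τ₁ τ₂ w u
    have e2 := V.abs_meanSpeed_sub_le τ₁ τ₂ 1 u
    have e3 : |(|w| * meanSpeed γ h τ₁ w u) - |w| * meanSpeed γ h τ₂ w u| ≤ K * |τ₁ - τ₂| := by
      rw [← mul_sub, abs_mul, abs_abs]
      nlinarith [abs_nonneg (meanSpeed γ h τ₁ w u - meanSpeed γ h τ₂ w u)]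
    refine (abs_min_sub_min_le_max _ _ _ _).trans (max_le ?_ ?_)
    · linarith [abs_nonneg (τ₁ - τ₂), (abs_nonneg _).trans e1]
    · rw [abs_le] at *
      constructor <;> linarith [e2.1, e2.2, e3.1, e3.2]
  have inv : ∀ {x : ℝ}, c / 8 ≤ x → 1 / x ^ α = x ^ (-α) := fun hx => by
    rw [Real.rpow_neg (by linarith), one_div]
  have bd : ∀ {x : ℝ}, c / 8 ≤ x → 0 ≤ x ^ (-α) ∧ x ^ (-α) ≤ B := fun {x} hx =>
    ⟨Real.rpow_nonneg (by linarith) _,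
      Real.rpow_le_rpow_of_nonpos (by positivity) hx (by linarith)⟩
  rw [inv (hX h₁), inv (hX h₂), inv (hd h₁), inv (hd h₂)]
  have x12 := abs_rpow_neg_sub_le hα (by positivity) (hX h₁) (hX h₂)
  have d12 := abs_rpow_neg_sub_le hα (by positivity) (hd h₁) (hd h₂)
  rw [← hA] at x12 d12
  have x12 := x12.trans (mul_le_mul_of_nonneg_left dX hA0)
  have d12 := d12.trans (mul_le_mul_of_nonneg_left dd hA0)
  have x1 := bd (hX h₁)
  have d1 := bd (hd h₁)
  obtain ⟨s1, s12⟩ := V.speed_mul h₁ h₂ u (u + w)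
  obtain ⟨s2, -⟩ := V.speed_mul h₂ h₁ u (u + w)
  have n1 : |(|w| * ‖avg (vel γ h τ₁) w u‖) ^ (-α) - idist (γ + τ₁ • h) u w ^ (-α)| ≤ B := by
    rw [abs_le]; constructor <;> linarith [x1.1, x1.2, d1.1, d1.2]
  have hδ := abs_nonneg (τ₁ - τ₂)
  generalize |τ₁ - τ₂| = δ at *
  constructor
  · rw [abs_mul]
    have := mul_le_mul n1 s1 (abs_nonneg _) hB0
    have : 0 ≤ B * K := by positivity
    have : 0 ≤ A * K := by positivity
    linarith
  · refine (abs_mul_sub_mul_le n1 s2 (dA := 3 * (A * (K * δ))) ?_ s12).trans ?_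
    · rw [abs_le] at *
      constructor <;> linarith [x12.1, x12.2, d12.1, d12.2]
    · have : 0 ≤ B * δ := by positivity
      have : 0 ≤ B * K * δ := by positivity
      linarith

/-- The energy integrand is Lipschitz along the variation, with an explicit weight. -/
theorem integrand_estimate (V : Variation γ h c K) {α : ℝ} (hα : 0 < α) :
    ∃ C, 0 ≤ C ∧ ∀ τ₁ τ₂ : ℝ, |τ₁| * K ≤ c / 8 → |τ₂| * K ≤ c / 8 → ∀ u w : ℝ, |w| ≤ 1 / 2 →
      |ohIntegrand α (γ + τ₁ • h) u w| ≤ C * (|w| ^ (-α) * (meanOsc (deriv γ) w u + w ^ 2)) ∧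
      |ohIntegrand α (γ + τ₁ • h) u w - ohIntegrand α (γ + τ₂ • h) u w| ≤
        C * (|w| ^ (-α) * (meanOsc (deriv γ) w u + w ^ 2)) * |τ₁ - τ₂| := by
  obtain ⟨C₁, hC₁, e₁⟩ := V.near_estimate hα
  obtain ⟨C₂, hC₂, e₂⟩ := V.far_estimate hα
  refine ⟨C₁ + 16 * C₂, by positivity, fun τ₁ τ₂ h₁ h₂ u w hw => ?_⟩
  have hZ := meanOsc_nonneg (deriv γ) w u
  rcases lt_or_ge |w| (1 / 4) with hw' | hw'
  · obtain ⟨a, b⟩ := e₁ τ₁ τ₂ h₁ h₂ u w hw'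
    refine ⟨a.trans ?_, b.trans ?_⟩ <;> gcongr <;> linarith
  · obtain ⟨a, b⟩ := e₂ τ₁ τ₂ h₁ h₂ u w hw' hw
    have hw0 : 0 < |w| := by linarith
    have h1 : 1 ≤ |w| ^ (-α) :=
      Real.one_le_rpow_of_pos_of_le_one_of_nonpos hw0 (by linarith) (by linarith)
    have h2 : 1 ≤ 16 * (meanOsc (deriv γ) w u + w ^ 2) := by
      rw [← sq_abs w]; nlinarith
    have h3 : 1 ≤ |w| ^ (-α) * (16 * (meanOsc (deriv γ) w u + w ^ 2)) :=
      one_le_mul_of_one_le_of_one_le h1 h2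
    have h4 : C₂ ≤ (C₁ + 16 * C₂) * (|w| ^ (-α) * (meanOsc (deriv γ) w u + w ^ 2)) := by
      have : 0 ≤ C₁ * (|w| ^ (-α) * (meanOsc (deriv γ) w u + w ^ 2)) := by positivity
      nlinarith [mul_le_mul_of_nonneg_left h3 hC₂]
    exact ⟨a.trans h4, b.trans (by gcongr)⟩

end Variation

theorem Maj.shift_sub {F : ℝ → ℂ} {a : ℤ → ℝ≥0∞} {θ : ℝ} (h0 : 0 ≤ θ) (h1 : θ ≤ 1)
    (hF : ContPer F) (ha : Maj F a) {x w : ℝ} (hx : |x| ≤ |w|) :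
    Maj (fun u => F (u + x) - F u)
      (fun k => ENNReal.ofReal (|w| ^ θ) * fracMaj θ a k) := fun k => by
  change _ ≤ ENNReal.ofReal (|w| ^ θ) * fracMaj θ a k
  have e : (fun u => F (u + x) - F u) = fun u => F (u + x) - F (u + 0) := by simp
  rw [e, fc_sub (hF.shift _) (hF.shift _), fc_shift hF, fc_shift hF, ← sub_mul, enorm_mul, fracMaj,
    ← mul_assoc, ← mul_assoc, ← ENNReal.ofReal_mul (by positivity),
    ← ENNReal.ofReal_mul (by positivity), ← ofReal_norm (ex _ _ - _)]
  gcongr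
  · refine (norm_ex_sub_ex_le_rpow h0 h1 k _ _).trans ?_
    rw [mul_comm (|w| ^ θ), mul_right_comm, sub_zero]
    gcongr 2 * Real.pi * ?_ * |(k : ℝ)| ^ θ
    gcongr
  · exact ha k

theorem conv_self_zero_le (b : ℤ → ℝ≥0∞) : conv b b 0 ≤ 2 * hsum 0 b := by
  have h1 : ∀ l : ℤ, b l * b (0 - l) ≤ b l ^ 2 + b (-l) ^ 2 := fun l => by
    rw [zero_sub]
    rcases le_total (b l) (b (-l)) with h | h
    · refine le_trans ?_ le_add_self
      rw [sq]; gcongr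
    · refine le_trans ?_ le_self_add
      rw [sq]; gcongr
  refine (ENNReal.tsum_le_tsum h1).trans ?_
  rw [ENNReal.tsum_add, show ∑' l, b (-l) ^ 2 = ∑' l, b l ^ 2 from
    (Equiv.neg ℤ).tsum_eq fun l => b l ^ 2, ← two_mul]
  simp [hsum]

theorem exists_meanOsc_le {f : ℝ → Rn n} (hf : ContPer f) {a : ℤ → ℝ≥0∞} {θ : ℝ} (h0 : 0 ≤ θ)
    (h1 : θ ≤ 1) (ha : ∀ j, Maj (comp f j) a) (hat : ∑' k, a k ≠ ⊤)
    (hb : hsum 0 (fracMaj θ a) < ⊤) :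
    ∃ C, 0 ≤ C ∧ ∀ w, ∫ u in (0:ℝ)..1, meanOsc f w u ≤ C * |w| ^ (2 * θ) := by
  have hc := hf.cont
  have hfin : conv (fracMaj θ a) (fracMaj θ a) 0 < ⊤ :=
    (conv_self_zero_le _).trans_lt (ENNReal.mul_lt_top (by simp) hb)
  set B := (conv (fracMaj θ a) (fracMaj θ a) 0).toReal with hB
  have key : ∀ (j : Fin n) (x w : ℝ), |x| ≤ |w| →
      ∫ u in (0:ℝ)..1, (f (u + x) j - f u j) ^ 2 ≤ B * |w| ^ (2 * θ) := by
    intro j x w hx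
    have hcp : ContPer (fun u => comp f j (u + x) - comp f j u) :=
      ((hf.comp j).shift _).sub (hf.comp j)
    have hm := Maj.shift_sub h0 h1 (hf.comp j) (ha j) hx
    have hs : Summable (fc (fun u => comp f j (u + x) - comp f j u)) := by
      have h2 : fc (fun u => comp f j (u + x) - comp f j u) =
          fun k => fc (fun u => comp f j (u + x)) k - fc (comp f j) k :=
        funext fun k => fc_sub ((hf.comp j).shift _) (hf.comp j) k
      rw [h2]
      exact (((ha j).shift (hf.comp j) _).summable hat).sub ((ha j).summable hat)
    have h3 := Maj.mul_of_summable hcp hcp hm hm hs 0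
    have h4 : fc (fun u => (comp f j (u + x) - comp f j u) * (comp f j (u + x) - comp f j u)) 0 =
        ((∫ u in (0:ℝ)..1, (f (u + x) j - f u j) ^ 2 : ℝ) : ℂ) := by
      rw [fc, ← intervalIntegral.integral_ofReal]
      congr 1; funext u
      simp [ex, comp, sq]
    have h5 : conv (fun k => ENNReal.ofReal (|w| ^ θ) * fracMaj θ a k)
        (fun k => ENNReal.ofReal (|w| ^ θ) * fracMaj θ a k) 0 =
        ENNReal.ofReal (|w| ^ (2 * θ)) * conv (fracMaj θ a) (fracMaj θ a) 0 := by
      simp only [conv]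
      rw [← ENNReal.tsum_mul_left]
      refine tsum_congr fun l => ?_
      rw [two_mul, Real.rpow_add_of_nonneg (abs_nonneg _) h0 h0,
        ENNReal.ofReal_mul (by positivity)]
      ring
    rw [h4, h5] at h3
    have h6 := ENNReal.toReal_mono (by finiteness) h3
    rw [ENNReal.toReal_mul, ENNReal.toReal_ofReal (by positivity), toReal_enorm,
      Complex.norm_real] at h6
    exact (le_abs_self _).trans (h6.trans_eq (mul_comm _ _))
  refine ⟨n * B, by positivity, fun w => ?_⟩
  have hcj : ∀ j, Continuous fun u => f u j := fun j => by fun_prop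
  have e1 : ∫ u in (0:ℝ)..1, meanOsc f w u =
      ∫ s in (0:ℝ)..1, ∑ j, ∫ u in (0:ℝ)..1, (f (u + s * w) j - f u j) ^ 2 := by
    unfold meanOsc
    rw [intervalIntegral_intervalIntegral_swap]
    · congr 1; funext s
      rw [← intervalIntegral.integral_finsetSum fun j _ =>
        Continuous.intervalIntegrable (by fun_prop) _ _]
      congr 1; funext u
      rw [EuclideanSpace.norm_sq_eq]
      simp
    · have hc2 : Continuous (Function.uncurry fun u s : ℝ => ‖f (u + s * w) - f u‖ ^ 2) := by
        unfold Function.uncurry; fun_prop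
      rw [uIoc_of_le zero_le_one]
      exact (hc2.continuousOn.integrableOn_compact (isCompact_Icc.prod isCompact_Icc)).mono_set
        (Set.prod_mono Ioc_subset_Icc_self Ioc_subset_Icc_self)
  have e2 : ∫ s in (0:ℝ)..1, (n * B * |w| ^ (2 * θ) : ℝ) = n * B * |w| ^ (2 * θ) := by simp
  rw [e1, ← e2]
  refine intervalIntegral.integral_mono_on zero_le_one
    (Continuous.intervalIntegrable ?_ _ _) (by simp) fun s hs => ?_
  · refine continuous_finsetSum _ fun j _ => ?_
    exact intervalIntegral.continuous_parametric_intervalIntegral_of_continuous'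
      (f := fun s u => (f (u + s * w) j - f u j) ^ 2) (by have := hcj j; fun_prop) 0 1
  · refine (Finset.sum_le_sum fun j _ => key j (s * w) w ?_).trans_eq ?_
    · rw [abs_mul, abs_of_nonneg hs.1]
      exact mul_le_of_le_one_left (abs_nonneg _) hs.2
    · simp [mul_assoc]

/-- The derivative of the O'Hara integrand at an arc-length curve `γ` in direction `h`. -/
def firstVar (α : ℝ) (γ h : ℝ → Rn n) (u w : ℝ) : ℝ :=
  |w| ^ (-α) * (((‖avg (deriv γ) w u‖ ^ 2) ^ (-(α / 2)) - 1) *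
      (⟪deriv γ (u + w), deriv h (u + w)⟫ + ⟪deriv γ u, deriv h u⟫)
    - α * (‖avg (deriv γ) w u‖ ^ 2) ^ (-(α / 2) - 1) * ⟪avg (deriv γ) w u, avg (deriv h) w u⟫
    + α * avg (fun x => ⟪deriv γ x, deriv h x⟫) w u)

theorem hasDerivAt_norm_add_smul {E : Type*} [NormedAddCommGroup E] [InnerProductSpace ℝ E]
    {a : E} (b : E) (ha : ‖a‖ = 1) : HasDerivAt (fun τ : ℝ => ‖a + τ • b‖) ⟪a, b⟫ 0 := by
  have h1 : HasDerivAt (fun τ : ℝ => a + τ • b) b 0 := by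
    simpa using ((hasDerivAt_id (0:ℝ)).smul_const b).const_add a
  have h2 := h1.norm_sq.sqrt (by simp [ha])
  simpa [ha, Real.sqrt_sq] using h2

theorem eventually_abs_mul_le (K : ℝ) {x : ℝ} (hx : 0 < x) :
    ∀ᶠ τ in 𝓝 (0:ℝ), |τ| * K ≤ x := by
  have : Tendsto (fun τ : ℝ => |τ| * K) (𝓝 0) (𝓝 0) := by
    have : Continuous fun τ : ℝ => |τ| * K := by fun_prop
    simpa using this.tendsto 0
  exact this.eventually_le_const hx

namespace Variation

variable {γ h : ℝ → Rn n} {c K : ℝ}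

theorem hasDerivAt_meanSpeed (V : Variation γ h c K) (w u : ℝ) :
    HasDerivAt (fun τ => meanSpeed γ h τ w u) (avg (fun x => ⟪deriv γ x, deriv h x⟫) w u) 0 := by
  have h1 := V.continuous_deriv; have h2 := V.continuous_deriv_dir
  refine (intervalIntegral.hasDerivAt_integral_of_dominated_loc_of_lip (s := univ)
    (bound := fun _ => K) univ_mem (.of_forall fun τ => ?_) ?_ ?_ (.of_forall fun t _ => ?_)
    (by simp) (.of_forall fun t _ => ?_)).2
  · have := V.continuous_vel τ
    exact Continuous.aestronglyMeasurable (by fun_prop)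
  · have := V.continuous_vel 0
    exact Continuous.intervalIntegrable (by fun_prop) _ _
  · exact Continuous.aestronglyMeasurable (by fun_prop)
  · refine LipschitzOnWith.of_dist_le_mul fun x _ y _ => ?_
    rw [Real.dist_eq, Real.dist_eq, Real.coe_nnabs, abs_of_nonneg V.nonneg]
    exact (abs_norm_sub_norm_le _ _).trans (V.norm_vel_sub_le x y _)
  · exact hasDerivAt_norm_add_smul _ (V.arc _)

theorem eventually_idist_eq (V : Variation γ h c K) (u : ℝ) {w : ℝ} (hw : |w| < 1 / 2) :
    ∀ᶠ τ in 𝓝 (0:ℝ), idist (γ + τ • h) u w = |w| * meanSpeed γ h τ w u := by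
  filter_upwards [eventually_abs_mul_le K (by linarith [V.pos] : 0 < c / 8),
    eventually_abs_mul_le K (by linarith : 0 < (1 - 2 * |w|) / 2)] with τ h1 h2
  rw [V.idist_eq h1, min_eq_left]
  have e1 := abs_le.1 (V.abs_meanSpeed_sub_le τ 0 w u)
  have e2 := abs_le.1 (V.abs_meanSpeed_sub_le τ 0 1 u)
  rw [V.meanSpeed_zero, sub_zero] at e1 e2
  nlinarith [abs_nonneg w, mul_nonneg (abs_nonneg τ) V.nonneg]

theorem hasDerivAt_ohIntegrand (V : Variation γ h c K) (α u : ℝ) {w : ℝ} (hw : |w| < 1 / 2) :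
    HasDerivAt (fun τ : ℝ => ohIntegrand α (γ + τ • h) u w) (firstVar α γ h u w) 0 := by
  have hw' : w ∈ Icc (-(1/2):ℝ) (1/2) := abs_le.1 hw.le
  have key : HasDerivAt (fun τ : ℝ => |w| ^ (-α) * (((‖avg (vel γ h τ) w u‖ ^ 2) ^ (-(α / 2)) -
        (meanSpeed γ h τ w u ^ 2) ^ (-(α / 2))) *
        (‖vel γ h τ (u + w)‖ * ‖vel γ h τ u‖))) (firstVar α γ h u w) 0 := by
    have a1 : HasDerivAt (fun τ => ‖avg (vel γ h τ) w u‖ ^ 2)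
        (2 * ⟪avg (deriv γ) w u, avg (deriv h) w u⟫) 0 := by
      have h1 : HasDerivAt (fun τ : ℝ => avg (deriv γ) w u + τ • avg (deriv h) w u)
          (avg (deriv h) w u) 0 := by
        simpa using ((hasDerivAt_id (0:ℝ)).smul_const (avg (deriv h) w u)).const_add
          (avg (deriv γ) w u)
      have h2 := h1.norm_sq
      simp only [zero_smul, add_zero] at h2
      refine h2.congr_of_eventuallyEq (.of_forall fun τ => ?_)
      simp only [← avg_add_smul V.continuous_deriv V.continuous_deriv_dir]
      rfl
    have a2 := (V.hasDerivAt_meanSpeed w u).pow 2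
    have pos : 0 < ‖avg (vel γ h 0) w u‖ ^ 2 := by
      rw [vel_zero]
      exact pow_pos (V.pos.trans_le (V.chord w hw' u)) 2
    have b1 := a1.rpow_const (p := -(α / 2)) (Or.inl pos.ne')
    have b2 := a2.rpow_const (p := -(α / 2)) (Or.inl (by simp [V.meanSpeed_zero]))
    have d1 : HasDerivAt (fun τ => ‖vel γ h τ (u + w)‖) ⟪deriv γ (u + w), deriv h (u + w)⟫ 0 :=
      hasDerivAt_norm_add_smul _ (V.arc _)
    have d2 : HasDerivAt (fun τ => ‖vel γ h τ u‖) ⟪deriv γ u, deriv h u⟫ 0 :=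
      hasDerivAt_norm_add_smul _ (V.arc _)
    refine (((b1.sub b2).mul (d1.mul d2)).const_mul (|w| ^ (-α))).congr_deriv ?_
    simp only [Pi.mul_apply, Pi.sub_apply, Pi.pow_apply, vel_zero, V.meanSpeed_zero, V.arc _,
      one_pow, Real.one_rpow, firstVar]
    ring
  refine key.congr_of_eventuallyEq ?_
  filter_upwards [V.eventually_idist_eq u hw,
    eventually_abs_mul_le K (by linarith [V.pos] : 0 < c / 8)] with τ h1 h2 using V.ohIntegrand_eq_of_idist α h2 h1

theorem measurable_ohIntegrand (V : Variation γ h c K) (α τ : ℝ) :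
    Measurable fun p : ℝ × ℝ => ohIntegrand α (γ + τ • h) p.1 p.2 := by
  have h1 := V.continuous_vel τ
  have h2 := (V.contDiff_add_smul τ).continuous
  have h3 : Continuous fun p : ℝ × ℝ => meanSpeed γ h τ p.2 p.1 := continuous_avg h1.norm
  have h4 : Continuous fun p : ℝ × ℝ => arcLen (γ + τ • h) p.1 p.2 := by
    simp only [V.arcLen_eq]; fun_prop
  have h5 : Continuous fun p : ℝ × ℝ => idist (γ + τ • h) p.1 p.2 := by
    simp only [idist]; fun_prop
  have h6 : Continuous fun p : ℝ × ℝ => ‖(γ + τ • h) (p.1 + p.2) - (γ + τ • h) p.1‖ := by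
    fun_prop
  have h7 : Continuous fun p : ℝ × ℝ => ‖vel γ h τ (p.1 + p.2)‖ := by fun_prop
  have h8 : Continuous fun p : ℝ × ℝ => ‖vel γ h τ p.1‖ := by fun_prop
  simp only [ohIntegrand, V.deriv_add_smul]
  exact ((((h6.measurable.pow_const α).const_div 1).sub
    ((h5.measurable.pow_const α).const_div 1)).mul h7.measurable).mul h8.measurable

theorem ohIntegrand_nonneg (V : Variation γ h c K) {α : ℝ} (hα : 0 < α) {τ : ℝ}
    (hτ : |τ| * K ≤ c / 8) (u : ℝ) {w : ℝ} (hw : |w| ≤ 1 / 2) :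
    0 ≤ ohIntegrand α (γ + τ • h) u w := by
  rcases eq_or_ne w 0 with rfl | hw0
  · have : idist (γ + τ • h) u 0 = 0 := by
      have := (V.meanSpeed_bounds hτ 1 u).1
      rw [V.idist_eq hτ, abs_zero, zero_mul, sub_zero, min_eq_left (by linarith)]
    simp [ohIntegrand, this, Real.zero_rpow hα.ne']
  rw [V.ohIntegrand_eq]
  have h1 := (V.norm_avg_vel_bounds hτ (abs_le.1 hw) u).1
  have h2 : 0 < |w| * ‖avg (vel γ h τ) w u‖ :=
    mul_pos (abs_pos.2 hw0) (by linarith [V.pos])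
  refine mul_nonneg (sub_nonneg.2 ?_) (by positivity)
  exact one_div_le_one_div_of_le (Real.rpow_pos_of_pos h2 _)
    (Real.rpow_le_rpow h2.le (V.chord_le_idist hτ u hw) hα.le)

end Variation

/-- Lebesgue measure on the domain of integration `(0,1] × (-1/2,1/2)` of the energy. -/
def cellMeasure : Measure (ℝ × ℝ) :=
  (volume.restrict (Ioc (0:ℝ) 1)).prod (volume.restrict (Ioo (-(1:ℝ)/2) (1/2)))

theorem ae_cell_abs_lt : ∀ᵐ p ∂cellMeasure, |p.2| < 1 / 2 := by
  rw [cellMeasure, Measure.prod_restrict]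
  filter_upwards [ae_restrict_mem (measurableSet_Ioc.prod measurableSet_Ioo)] with p hp
  exact abs_lt.2 ⟨by linarith [hp.2.1], hp.2.2⟩

theorem integrable_abs_rpow {r : ℝ} (hr : -1 < r) :
    Integrable (fun x : ℝ => |x| ^ r) (volume.restrict (Ioo (-(1:ℝ)/2) (1/2))) := by
  have h1 : IntervalIntegrable (fun x : ℝ => |x| ^ r) volume 0 (1/2) :=
    (intervalIntegral.intervalIntegrable_rpow' hr).congr fun x hx => by
      rw [uIoc_of_le (by norm_num)] at hx
      simp only [abs_of_pos hx.1]
  have h2 : IntervalIntegrable (fun x : ℝ => |x| ^ r) volume (-(1/2)) 0 := by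
    have := (IntervalIntegrable.iff_comp_neg (by simp)).1 h1
    simpa using this.symm
  have h3 := (intervalIntegrable_iff_integrableOn_Ioc_of_le (by norm_num)).1 (h2.trans h1)
  exact h3.mono_set fun x hx => ⟨by linarith [hx.1], hx.2.le⟩

theorem continuous_meanOsc {f : ℝ → Rn n} (hf : Continuous f) :
    Continuous fun p : ℝ × ℝ => meanOsc f p.2 p.1 := by
  unfold meanOsc
  apply intervalIntegral.continuous_parametric_intervalIntegral_of_continuous'
  simp only [Function.uncurry_def]
  fun_prop

theorem integrable_weight {f : ℝ → Rn n} (hf : Continuous f) {α θ C : ℝ} (hα : α < 3)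
    (hθ : α - 2 * θ < 1)
    (hC : ∀ w, ∫ u in (0:ℝ)..1, meanOsc f w u ≤ C * |w| ^ (2 * θ)) :
    Integrable (fun p : ℝ × ℝ => |p.2| ^ (-α) * (meanOsc f p.2 p.1 + p.2 ^ 2)) cellMeasure := by
  have hm := continuous_meanOsc hf
  have hmeas : Measurable fun p : ℝ × ℝ => |p.2| ^ (-α) * (meanOsc f p.2 p.1 + p.2 ^ 2) :=
    (measurable_snd.abs.pow_const _).mul (by fun_prop : Continuous fun p : ℝ × ℝ =>
      meanOsc f p.2 p.1 + p.2 ^ 2).measurable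
  have hi : ∀ w, IntegrableOn (fun u => meanOsc f w u) (Ioc (0:ℝ) 1) := fun w =>
    (hm.comp (by fun_prop : Continuous fun u : ℝ => (u, w))).integrableOn_Ioc
  have hint : ∀ w, Integrable (fun u => |w| ^ (-α) * (meanOsc f w u + w ^ 2))
      (volume.restrict (Ioc (0:ℝ) 1)) := fun w =>
    ((hi w).add (integrable_const _)).const_mul _
  refine (integrable_prod_iff' hmeas.aestronglyMeasurable).2 ⟨.of_forall hint, ?_⟩
  have hb := ((integrable_abs_rpow (r := 2 * θ - α) (by linarith)).const_mul C).add
    (integrable_abs_rpow (r := 2 - α) (by linarith))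
  refine hb.mono' hmeas.norm.stronglyMeasurable.integral_prod_left.aestronglyMeasurable ?_
  have h0 : ∀ᵐ w ∂(volume.restrict (Ioo (-(1:ℝ)/2) (1/2))), w ≠ 0 :=
    ae_restrict_of_ae (Measure.ae_ne volume 0)
  filter_upwards [h0] with w hw
  have hw := abs_pos.2 hw
  have e : ∀ u, ‖|w| ^ (-α) * (meanOsc f w u + w ^ 2)‖ =
      |w| ^ (-α) * (meanOsc f w u + w ^ 2) := fun u => by
    have := meanOsc_nonneg f w u
    exact Real.norm_of_nonneg (by positivity)
  simp only [e]
  rw [Real.norm_of_nonneg (integral_nonneg fun u => by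
    have := meanOsc_nonneg f w u
    positivity), integral_const_mul, integral_add (hi w) (integrable_const _), integral_const,
    ← intervalIntegral.integral_of_le zero_le_one]
  have h2 : |w| ^ (2 * θ - α) = |w| ^ (-α) * |w| ^ (2 * θ) := by
    rw [← Real.rpow_add hw]; ring_nf
  have h3 : |w| ^ (2 - α) = |w| ^ (-α) * w ^ 2 := by
    rw [← sq_abs w, ← Real.rpow_natCast, ← Real.rpow_add hw]; push_cast; ring_nf
  simp only [Pi.add_apply]
  rw [h2, h3]
  have := mul_le_mul_of_nonneg_left (hC w) (Real.rpow_nonneg (abs_nonneg w) (-α))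
  simp
  linarith

namespace Variation

variable {γ h : ℝ → Rn n} {c K : ℝ}

theorem measurable_firstVar (V : Variation γ h c K) (α : ℝ) :
    Measurable fun p : ℝ × ℝ => firstVar α γ h p.1 p.2 := by
  have h1 := V.continuous_deriv
  have h2 := V.continuous_deriv_dir
  have h3 := continuous_avg h1
  have h4 := continuous_avg h2
  have h5 : Continuous fun p : ℝ × ℝ => avg (fun x => ⟪deriv γ x, deriv h x⟫) p.2 p.1 :=
    continuous_avg (h1.inner h2)
  have h6 : Continuous fun p : ℝ × ℝ => ‖avg (deriv γ) p.2 p.1‖ ^ 2 := by fun_prop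
  have h7 : Continuous fun p : ℝ × ℝ => ⟪deriv γ (p.1 + p.2), deriv h (p.1 + p.2)⟫ +
      ⟪deriv γ p.1, deriv h p.1⟫ := by fun_prop
  have h8 : Continuous fun p : ℝ × ℝ => ⟪avg (deriv γ) p.2 p.1, avg (deriv h) p.2 p.1⟫ := by
    fun_prop
  have m := h6.measurable
  exact (measurable_snd.abs.pow_const _).mul (((((m.pow_const _).sub_const 1).mul
    h7.measurable).sub (((m.pow_const _).const_mul α).mul h8.measurable)).add
    (h5.measurable.const_mul α))

theorem oharaER_eq (V : Variation γ h c K) {α : ℝ} (hα : 0 < α) {τ : ℝ}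
    (hτ : |τ| * K ≤ c / 8) : oharaER α (γ + τ • h) =
      ∫ p, ohIntegrand α (γ + τ • h) p.1 p.2 ∂cellMeasure := by
  have hm := V.measurable_ohIntegrand α τ
  rw [integral_eq_lintegral_of_nonneg_ae _ hm.aestronglyMeasurable, oharaER, oharaE, cellMeasure,
    lintegral_prod _ hm.ennreal_ofReal.aemeasurable]
  filter_upwards [ae_cell_abs_lt] with p hp using V.ohIntegrand_nonneg hα hτ p.1 hp.le

theorem hasDerivAt_oharaER (V : Variation γ h c K) {α : ℝ} (hα : 0 < α)
    (hW : Integrable (fun p : ℝ × ℝ => |p.2| ^ (-α) * (meanOsc (deriv γ) p.2 p.1 + p.2 ^ 2))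
      cellMeasure) :
    Integrable (fun p => firstVar α γ h p.1 p.2) cellMeasure ∧
      HasDerivAt (fun τ : ℝ => oharaER α (γ + τ • h))
        (∫ p, firstVar α γ h p.1 p.2 ∂cellMeasure) 0 := by
  obtain ⟨C, hC, hI⟩ := V.integrand_estimate hα
  have hs := eventually_abs_mul_le K (by linarith [V.pos] : 0 < c / 8)
  have h0 : |(0:ℝ)| * K ≤ c / 8 := by simpa using by linarith [V.pos]
  obtain ⟨h1, h2⟩ := hasDerivAt_integral_of_dominated_loc_of_lip (μ := cellMeasure)
    (F := fun (τ : ℝ) p => ohIntegrand α (γ + τ • h) p.1 p.2) (x₀ := 0)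
    (bound := fun p => C * (|p.2| ^ (-α) * (meanOsc (deriv γ) p.2 p.1 + p.2 ^ 2))) hs
    (.of_forall fun τ => (V.measurable_ohIntegrand α τ).aestronglyMeasurable)
    ((hW.const_mul C).mono' (V.measurable_ohIntegrand α 0).aestronglyMeasurable <| by
      filter_upwards [ae_cell_abs_lt] with p hp using (hI 0 0 h0 h0 p.1 p.2 hp.le).1)
    (V.measurable_firstVar α).aestronglyMeasurable
    (by
      filter_upwards [ae_cell_abs_lt] with p hp
      refine LipschitzOnWith.of_dist_le_mul fun x hx y hy => ?_
      rw [Real.dist_eq, Real.dist_eq, Real.coe_nnabs]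
      refine (hI x y hx hy p.1 p.2 hp.le).2.trans ?_
      gcongr
      exact le_abs_self _)
    (hW.const_mul C)
    (by filter_upwards [ae_cell_abs_lt] with p hp using V.hasDerivAt_ohIntegrand α p.1 hp)
  refine ⟨h1, h2.congr_of_eventuallyEq ?_⟩
  filter_upwards [hs] with τ hτ using V.oharaER_eq hα hτ

theorem eq_integral_firstVar (V : Variation γ h c K) {α : ℝ} (hα : 0 < α)
    (hW : Integrable (fun p : ℝ × ℝ => |p.2| ^ (-α) * (meanOsc (deriv γ) p.2 p.1 + p.2 ^ 2))
      cellMeasure) {d : ℝ} (hd : HasDirDeriv (oharaER α) γ h d) :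
    d = ∫ p, firstVar α γ h p.1 p.2 ∂cellMeasure := by
  have h1 := (V.hasDerivAt_oharaER hα hW).2.tendsto_slope_zero
  refine tendsto_nhds_unique hd (h1.congr fun τ => ?_)
  simp [div_eq_inv_mul]

end Variation

theorem ex_neg (k : ℤ) (u : ℝ) : ex (-k) u = starRingEnd ℂ (ex k u) := by
  have h : (ex k u)⁻¹ = ex (-k) u := inv_eq_of_mul_eq_one_right (ex_mul_neg k u)
  rw [← h, Complex.inv_def, Complex.normSq_eq_norm_sq, norm_ex]
  simp

theorem avg_ex (k : ℤ) (w u : ℝ) : avg (ex k) w u = ex k u * avg (ex k) w 0 := by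
  simp only [avg, zero_add, ← intervalIntegral.integral_const_mul, ← ex_add]

theorem avg_ex_neg (k : ℤ) (w u : ℝ) : avg (ex (-k)) w u = starRingEnd ℂ (avg (ex k) w u) := by
  simp only [avg, ex_neg, intervalIntegral]
  rw [map_sub, ← integral_conj, ← integral_conj]

theorem norm_avg_ex_le_one (k : ℤ) (w u : ℝ) : ‖avg (ex k) w u‖ ≤ 1 :=
  norm_avg_le (fun u => (norm_ex k u).le) w u

theorem norm_avg_ex_zero_mul_le (k : ℤ) (w : ℝ) : ‖avg (ex k) w 0‖ * (Real.pi * |k * w|) ≤ 1 := by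
  have h : 2 * Real.pi * Complex.I * k * (w * avg (ex k) w 0) = ex k w - 1 := by
    have h1 : (w : ℂ) * avg (ex k) w 0 = ∫ x in (0:ℝ)..w, ex k x := by
      rw [← Complex.real_smul, smul_avg, zero_add]
    rw [h1, ← intervalIntegral.integral_const_mul,
      intervalIntegral.integral_eq_sub_of_hasDerivAt (fun u _ => hasDerivAt_ex k u)
        (Continuous.intervalIntegrable (by have := ex_continuous k; fun_prop) _ _), ex_zero]
  have h2 : ‖ex k w - 1‖ ≤ 2 := by
    refine (norm_sub_le _ _).trans ?_
    rw [norm_ex]; norm_num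
  rw [← h] at h2
  simp only [norm_mul, Complex.norm_I, Complex.norm_real, Complex.norm_intCast,
    Complex.norm_ofNat, Real.norm_eq_abs, abs_of_pos Real.pi_pos] at h2
  rw [abs_mul]
  linarith

theorem fc_avg {F : ℝ → ℂ} (hF : ContPer F) (w : ℝ) (k : ℤ) :
    fc (avg F w) k = avg (ex k) w 0 * fc F k := by
  have hc := hF.cont
  have h := fc_average (G := fun t u => F (u + t * w)) (by fun_prop) k
  simp only [avg, zero_add]
  exact h.trans (by simp only [fc_shift hF, intervalIntegral.integral_mul_const])

/-- The complex-linear extension of `firstVar` to directions with derivative `ψ eⱼ`, at a curve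
with unit tangent `f`. -/
def firstVarC (α : ℝ) (f : ℝ → Rn n) (j : Fin n) (ψ : ℝ → ℂ) (u w : ℝ) : ℂ :=
  ((|w| ^ (-α) : ℝ) : ℂ) * ((((‖avg f w u‖ ^ 2) ^ (-(α / 2)) - 1 : ℝ) : ℂ) *
      (comp f j (u + w) * ψ (u + w) + comp f j u * ψ u)
    - α * (((‖avg f w u‖ ^ 2) ^ (-(α / 2 + 1)) : ℝ) : ℂ) * (avg (comp f j) w u * avg ψ w u)
    + α * avg (fun x => comp f j x * ψ x) w u)

theorem avg_comp {f : ℝ → Rn n} (hf : Continuous f) (j : Fin n) (w u : ℝ) :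
    avg (comp f j) w u = comp (avg f w) j u := by
  have h := (EuclideanSpace.proj (𝕜 := ℝ) j).intervalIntegral_comp_comm (μ := volume)
    (Continuous.intervalIntegrable (by fun_prop : Continuous fun t => f (u + t * w)) 0 1)
  simp only [avg, comp, intervalIntegral.integral_ofReal]
  exact congrArg _ h

theorem sum_avg_comp_sq {f : ℝ → Rn n} (hf : Continuous f) (w u : ℝ) :
    ((‖avg f w u‖ ^ 2 : ℝ) : ℂ) = ∑ j, avg (comp f j) w u ^ 2 := by
  simp [avg_comp hf, EuclideanSpace.norm_sq_eq, comp]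

theorem avg_ofReal (φ : ℝ → ℝ) (w u : ℝ) :
    avg (fun x => (φ x : ℂ)) w u = ((avg φ w u : ℝ) : ℂ) :=
  intervalIntegral.integral_ofReal

theorem firstVar_single {γ h : ℝ → Rn n} (hγ : Continuous (deriv γ)) {ψ : ℝ → ℝ} {j : Fin n}
    (hh : ∀ u, deriv h u = ψ u • EuclideanSpace.single j 1) (α u w : ℝ) :
    (firstVar α γ h u w : ℂ) = firstVarC α (deriv γ) j (fun x => (ψ x : ℂ)) u w := by
  have h1 : avg (deriv h) w u = avg ψ w u • EuclideanSpace.single j (1:ℝ) := by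
    simp only [avg, hh, intervalIntegral.integral_smul_const]
  have h2 : ∀ (x : Rn n) (r : ℝ), ⟪x, r • EuclideanSpace.single j (1:ℝ)⟫ = x j * r := fun x r => by
    rw [real_inner_smul_right, EuclideanSpace.inner_single_right]; simp [mul_comm]
  have h3 : (fun x => comp (deriv γ) j x * (ψ x : ℂ)) = fun x => ((deriv γ x j * ψ x : ℝ) : ℂ) := by
    funext x; simp [comp]
  rw [firstVar, firstVarC, h3, avg_ofReal, avg_ofReal, avg_comp hγ, h1]
  simp only [hh, h2, comp]
  rw [show -(α / 2 + 1) = -(α / 2) - 1 by ring]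
  push_cast
  ring

theorem integral_firstVarC {f : ℝ → Rn n} (hf : ContPer f) (α : ℝ) (j : Fin n) (k : ℤ) {w : ℝ}
    (hne : ∀ u, avg f w u ≠ 0) :
    ∫ u in (0:ℝ)..1, firstVarC α f j (ex (-k)) u w = ((|w| ^ (-α) : ℝ) : ℂ) *
      (fc (fun u => comp f j u * (((‖avg f w u‖ ^ 2) ^ (-(α / 2)) - 1 : ℝ) : ℂ)) k
      + ex (-k) w *
        fc (fun u => comp f j (u + w) * (((‖avg f w u‖ ^ 2) ^ (-(α / 2)) - 1 : ℝ) : ℂ)) k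
      - α * starRingEnd ℂ (avg (ex k) w 0) *
        fc (fun u => avg (comp f j) w u * (((‖avg f w u‖ ^ 2) ^ (-(α / 2 + 1)) - 1 : ℝ) : ℂ)) k
      + ((α * (1 - ‖avg (ex k) w 0‖ ^ 2) : ℝ) : ℂ) * fc (comp f j) k) := by
  have hF := hf.comp j
  have c1 : Continuous (avg f w) := (hf.avg w).cont
  have cp : ∀ p : ℝ, Continuous fun u => (((‖avg f w u‖ ^ 2) ^ p - 1 : ℝ) : ℂ) := fun p => by
    refine Complex.continuous_ofReal.comp (Continuous.sub (Continuous.rpow_const (by fun_prop)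
      fun u => Or.inl ?_) continuous_const)
    have := hne u
    positivity
  have c2 := hF.cont
  have c3 := ex_continuous (-k)
  have c4 := (hF.avg w).cont
  have c5 := cp (-(α / 2))
  have c6 := cp (-(α / 2 + 1))
  have hcF : ContPer fun x => comp f j x * ex (-k) x := hF.mul (ContPer.ex _)
  have c7 := (hcF.avg w).cont
  have c8 := ex_continuous 0
  have e : ∀ u, firstVarC α f j (ex (-k)) u w = ((|w| ^ (-α) : ℝ) : ℂ) *
      (comp f j u * (((‖avg f w u‖ ^ 2) ^ (-(α / 2)) - 1 : ℝ) : ℂ) * ex (-k) u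
      + ex (-k) w * (comp f j (u + w) * (((‖avg f w u‖ ^ 2) ^ (-(α / 2)) - 1 : ℝ) : ℂ) * ex (-k) u)
      - α * starRingEnd ℂ (avg (ex k) w 0) * (avg (comp f j) w u *
        (((‖avg f w u‖ ^ 2) ^ (-(α / 2 + 1)) - 1 : ℝ) : ℂ) * ex (-k) u)
      - α * starRingEnd ℂ (avg (ex k) w 0) * (avg (comp f j) w u * ex (-k) u)
      + α * (avg (fun x => comp f j x * ex (-k) x) w u * ex 0 u)) := fun u => by
    rw [firstVarC, avg_ex, avg_ex_neg k w 0, ex_add, ex_zero_left]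
    push_cast
    ring
  have key : ∫ u in (0:ℝ)..1, firstVarC α f j (ex (-k)) u w = ((|w| ^ (-α) : ℝ) : ℂ) *
      (fc (fun u => comp f j u * (((‖avg f w u‖ ^ 2) ^ (-(α / 2)) - 1 : ℝ) : ℂ)) k
      + ex (-k) w *
        fc (fun u => comp f j (u + w) * (((‖avg f w u‖ ^ 2) ^ (-(α / 2)) - 1 : ℝ) : ℂ)) k
      - α * starRingEnd ℂ (avg (ex k) w 0) *
        fc (fun u => avg (comp f j) w u * (((‖avg f w u‖ ^ 2) ^ (-(α / 2 + 1)) - 1 : ℝ) : ℂ)) k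
      - α * starRingEnd ℂ (avg (ex k) w 0) * fc (avg (comp f j) w) k
      + α * fc (avg (fun x => comp f j x * ex (-k) x) w) 0) := by
    simp only [e]
    rw [intervalIntegral.integral_const_mul, intervalIntegral.integral_add,
      intervalIntegral.integral_sub, intervalIntegral.integral_sub, intervalIntegral.integral_add]
    · simp only [intervalIntegral.integral_const_mul]
      rfl
    all_goals exact Continuous.intervalIntegrable (by fun_prop) _ _
  have e0 : fc (fun x => comp f j x * ex (-k) x) 0 = fc (comp f j) k := by
    simp [fc, ex_zero_left]
  have e1 : avg (ex 0) w 0 = 1 := by simp [avg, ex_zero_left]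
  rw [key, fc_avg hF, fc_avg hcF, e0, e1]
  have e2 : starRingEnd ℂ (avg (ex k) w 0) * avg (ex k) w 0 =
      ((‖avg (ex k) w 0‖ ^ 2 : ℝ) : ℂ) := by
    rw [mul_comm, Complex.mul_conj, Complex.normSq_eq_norm_sq]
  push_cast at e2 ⊢
  linear_combination (-(((|w| ^ (-α) : ℝ) : ℂ) * α * fc (comp f j) k)) * e2

theorem gagliardoSq_lt_top_of_lipschitz {E : Type*} [NormedAddCommGroup E] {f : ℝ → E} {K s : ℝ}
    (hs : s < 1) (hf : ∀ x y, ‖f x - f y‖ ≤ K * |x - y|) : gagliardoSq s f < ⊤ := by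
  have h1 : ∀ u w, ENNReal.ofReal (‖f (u + w) - f u‖ ^ 2 / |w| ^ (1 + 2 * s)) ≤
      ENNReal.ofReal (K ^ 2 * |w| ^ (1 - 2 * s)) := fun u w => by
    refine ENNReal.ofReal_le_ofReal ?_
    rcases eq_or_ne w 0 with rfl | hw
    · simp
      positivity
    have hw := abs_pos.2 hw
    have h2 : ‖f (u + w) - f u‖ ^ 2 ≤ (K * |w|) ^ 2 := by
      have := hf (u + w) u
      rw [add_sub_cancel_left] at this
      gcongr
    rw [div_le_iff₀ (by positivity), mul_assoc, ← Real.rpow_add hw]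
    ring_nf at h2 ⊢
    exact_mod_cast h2
  have h2 : ∫⁻ w in Ioo (-(1:ℝ)/2) (1/2), ENNReal.ofReal (K ^ 2 * |w| ^ (1 - 2 * s)) < ⊤ :=
    ((integrable_abs_rpow (by linarith)).const_mul _).lintegral_lt_top
  calc gagliardoSq s f ≤ ∫⁻ _ in Ioc (0:ℝ) 1,
        ∫⁻ w in Ioo (-(1:ℝ)/2) (1/2), ENNReal.ofReal (K ^ 2 * |w| ^ (1 - 2 * s)) :=
      lintegral_mono fun u => lintegral_mono fun w => h1 u w
    _ < ⊤ := by simpa using h2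

/-- The trigonometric direction with derivative `L (e^{2πiku}) eⱼ`. -/
def trigDir (L : ℂ →L[ℝ] ℝ) (k : ℤ) (j : Fin n) (u : ℝ) : Rn n :=
  L (ex k u / (2 * Real.pi * Complex.I * k)) • EuclideanSpace.single j 1

section

variable {L : ℂ →L[ℝ] ℝ} {k : ℤ}

theorem hasDerivAt_trigDir (hk : k ≠ 0) (j : Fin n) (u : ℝ) :
    HasDerivAt (trigDir L k j) (L (ex k u) • EuclideanSpace.single j (1:ℝ)) u := by
  have h2 : (2 * Real.pi * Complex.I * k : ℂ) ≠ 0 := by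
    simp [hk, Real.pi_ne_zero, Complex.I_ne_zero]
  have h1 := (hasDerivAt_ex k u).div_const (2 * Real.pi * Complex.I * k)
  rw [mul_div_cancel_left₀ _ h2] at h1
  exact (L.hasFDerivAt.comp_hasDerivAt u h1).smul_const _

theorem deriv_trigDir (hk : k ≠ 0) (j : Fin n) :
    deriv (trigDir L k j) = fun u => L (ex k u) • EuclideanSpace.single j (1:ℝ) :=
  funext fun u => (hasDerivAt_trigDir hk j u).deriv

theorem contDiff_trigDir (hk : k ≠ 0) (j : Fin n) : ContDiff ℝ 1 (trigDir L k j) := by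
  refine contDiff_one_iff_deriv.2
    ⟨fun u => (hasDerivAt_trigDir hk j u).differentiableAt, ?_⟩
  rw [deriv_trigDir hk]
  have := ex_continuous k
  fun_prop

theorem periodic_trigDir (j : Fin n) : Function.Periodic (trigDir L k j) 1 := fun u => by
  simp only [trigDir, ex_periodic k u]

theorem norm_deriv_trigDir_le (hL : ∀ z, |L z| ≤ ‖z‖) (hk : k ≠ 0) (j : Fin n) (u : ℝ) :
    ‖deriv (trigDir L k j) u‖ ≤ 1 := by
  rw [deriv_trigDir hk, norm_smul, PiLp.norm_single, norm_one, mul_one]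
  exact (hL _).trans (norm_ex k u).le

theorem norm_deriv_trigDir_sub_le (hL : ∀ z, |L z| ≤ ‖z‖) (hk : k ≠ 0) (j : Fin n) (x y : ℝ) :
    ‖deriv (trigDir L k j) x - deriv (trigDir L k j) y‖ ≤ 2 * Real.pi * |(k : ℝ)| * |x - y| := by
  rw [deriv_trigDir hk, ← sub_smul, norm_smul, PiLp.norm_single, norm_one, mul_one,
    ← map_sub]
  exact (hL _).trans (norm_ex_sub_ex_le k x y)

end

/-- Stationary arc-length curves, with the uniform chord bound. -/
structure Stationary (α lam c : ℝ) (γ : ℝ → Rn n) : Prop where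
  contDiff : ContDiff ℝ 1 γ
  per : Function.Periodic γ 1
  arc : ArcLengthParam γ
  pos : 0 < c
  chord : ∀ w ∈ Icc (-(1/2):ℝ) (1/2), ∀ u, c ≤ ‖avg (deriv γ) w u‖
  weight : Integrable (fun p : ℝ × ℝ =>
    |p.2| ^ (-α) * (meanOsc (deriv γ) p.2 p.1 + p.2 ^ 2)) cellMeasure
  stat : ∀ h : ℝ → Rn n, MemH1 ((α - 1) / 2) h → ∃ d : ℝ, HasDirDeriv (oharaER α) γ h d ∧
    d + lam * ∫ u in Ioc (0:ℝ) 1, ⟪deriv γ u, deriv h u⟫ = 0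

namespace Stationary

variable {α lam c : ℝ} {γ : ℝ → Rn n}

theorem variation_trigDir (St : Stationary α lam c γ) {L : ℂ →L[ℝ] ℝ} (hL : ∀ z, |L z| ≤ ‖z‖)
    {k : ℤ} (hk : k ≠ 0) (j : Fin n) :
    Variation γ (trigDir L k j) c (1 + 2 * Real.pi * |(k : ℝ)|) where
  contDiff := St.contDiff
  per := St.per
  arc := St.arc
  contDiff_dir := contDiff_trigDir hk j
  per_dir := periodic_trigDir j
  norm_dir u := (norm_deriv_trigDir_le hL hk j u).trans (by
    have : 0 ≤ 2 * Real.pi * |(k : ℝ)| := by positivity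
    linarith)
  lip_dir x y := (norm_deriv_trigDir_sub_le hL hk j x y).trans (by gcongr; linarith)
  pos := St.pos
  chord := St.chord

theorem firstVarC_real (St : Stationary α lam c γ) (hα : α ∈ Ioo (2:ℝ) 3) {L : ℂ →L[ℝ] ℝ}
    (hL : ∀ z, |L z| ≤ ‖z‖) {k : ℤ} (hk : k ≠ 0) (j : Fin n) :
    Integrable (fun p : ℝ × ℝ =>
        firstVarC α (deriv γ) j (fun u => (L (ex k u) : ℂ)) p.1 p.2) cellMeasure ∧
      ∫ p, firstVarC α (deriv γ) j (fun u => (L (ex k u) : ℂ)) p.1 p.2 ∂cellMeasure +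
        lam * ∫ u in (0:ℝ)..1, comp (deriv γ) j u * L (ex k u) = 0 := by
  have V := St.variation_trigDir hL hk j
  have hα0 : 0 < α := by linarith [hα.1]
  obtain ⟨d, hd, h0⟩ := St.stat (trigDir L k j) ⟨V.per_dir, V.contDiff_dir,
    gagliardoSq_lt_top_of_lipschitz (by linarith [hα.2]) V.lip_dir⟩
  have hd := V.eq_integral_firstVar hα0 St.weight hd
  have hi := (V.hasDerivAt_oharaER hα0 St.weight).1
  have e : ∀ u w, (firstVar α γ (trigDir L k j) u w : ℂ) =
      firstVarC α (deriv γ) j (fun u => (L (ex k u) : ℂ)) u w := fun u w =>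
    firstVar_single V.continuous_deriv (fun u => (hasDerivAt_trigDir hk j u).deriv) α u w
  have e2 : ∀ u, comp (deriv γ) j u * (L (ex k u) : ℂ) =
      ((⟪deriv γ u, deriv (trigDir L k j) u⟫ : ℝ) : ℂ) := fun u => by
    rw [deriv_trigDir hk, real_inner_smul_right, EuclideanSpace.inner_single_right]
    simp [comp, mul_comm]
  simp only [← e, e2]
  refine ⟨hi.ofReal, ?_⟩
  have h1 : ∫ p, (firstVar α γ (trigDir L k j) p.1 p.2 : ℂ) ∂cellMeasure = d :=
    integral_ofReal.trans (congrArg _ hd.symm)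
  rw [h1, intervalIntegral.integral_ofReal, intervalIntegral.integral_of_le zero_le_one]
  exact_mod_cast h0

theorem firstVarC_ex (St : Stationary α lam c γ) (hα : α ∈ Ioo (2:ℝ) 3) {k : ℤ} (hk : k ≠ 0)
    (j : Fin n) :
    Integrable (fun p : ℝ × ℝ => firstVarC α (deriv γ) j (ex (-k)) p.1 p.2) cellMeasure ∧
      ∫ p, firstVarC α (deriv γ) j (ex (-k)) p.1 p.2 ∂cellMeasure +
        lam * fc (comp (deriv γ) j) k = 0 := by
  obtain ⟨i1, h1⟩ := St.firstVarC_real hα (L := Complex.reCLM) Complex.abs_re_le_norm hk j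
  obtain ⟨i2, h2⟩ := St.firstVarC_real hα (L := Complex.imCLM) Complex.abs_im_le_norm hk j
  have hc := contPer_deriv St.contDiff St.per
  have hF := (hc.comp j).cont
  have hk := ex_continuous k
  have er : ∀ u, ex (-k) u = (Complex.reCLM (ex k u) : ℂ) -
      Complex.I * (Complex.imCLM (ex k u) : ℂ) := fun u => by
    rw [ex_neg]; apply Complex.ext <;> simp
  have ea : ∀ (G : ℝ → ℂ), Continuous G → ∀ w u, avg (fun x => G x * ex (-k) x) w u =
      avg (fun x => G x * (Complex.reCLM (ex k x) : ℂ)) w u -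
        Complex.I * avg (fun x => G x * (Complex.imCLM (ex k x) : ℂ)) w u := fun G hG w u => by
    simp only [avg, ← intervalIntegral.integral_const_mul]
    rw [← intervalIntegral.integral_sub (Continuous.intervalIntegrable (by fun_prop) _ _)
      (Continuous.intervalIntegrable (by fun_prop) _ _)]
    refine intervalIntegral.integral_congr fun t _ => ?_
    simp only [er]
    ring
  have e : ∀ u w, firstVarC α (deriv γ) j (ex (-k)) u w =
      firstVarC α (deriv γ) j (fun u => (Complex.reCLM (ex k u) : ℂ)) u w -
      Complex.I * firstVarC α (deriv γ) j (fun u => (Complex.imCLM (ex k u) : ℂ)) u w :=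
    fun u w => by
    have h1 := ea (fun _ => 1) continuous_const w u
    simp only [one_mul] at h1
    have h1 : avg (ex (-k)) w u = _ := h1
    simp only [firstVarC]
    rw [ea _ hF, h1, er, er]
    ring
  have ef : fc (comp (deriv γ) j) k = (∫ u in (0:ℝ)..1, comp (deriv γ) j u *
      (Complex.reCLM (ex k u) : ℂ)) -
      Complex.I * ∫ u in (0:ℝ)..1, comp (deriv γ) j u * (Complex.imCLM (ex k u) : ℂ) := by
    simpa [avg, fc] using ea _ hF 1 0
  simp only [e]
  refine ⟨i1.sub (i2.const_mul _), ?_⟩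
  rw [integral_sub i1 (i2.const_mul _), integral_const_mul, ef]
  linear_combination h1 - Complex.I * h2

end Stationary

theorem one_fourth_le_one_sub_norm_avg_ex_sq {k : ℤ} {w : ℝ} (h : 2 / 5 ≤ |k * w|) :
    1 / 4 ≤ 1 - ‖avg (ex k) w 0‖ ^ 2 := by
  have h1 := norm_avg_ex_zero_mul_le k w
  have h0 := norm_nonneg (avg (ex k) w 0)
  have h2 : 6 / 5 ≤ Real.pi * |k * w| := by nlinarith [Real.pi_gt_three]
  have h3 : ‖avg (ex k) w 0‖ ≤ 5 / 6 := by nlinarith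
  nlinarith

/-- Coercivity of the multiplier `α ∫ |w|^{-α} (1 - |∫₀¹ e^{2πiktw} dt|²) dw ≳ |k|^{α-1}`
against a perturbation of order `|w|^{2θ}`. -/
theorem norm_mul_rpow_le_of_integral_eq_zero {α θ lam B : ℝ} (hα : 0 < α) (hθ : α - 2 * θ < 1)
    (hlam : 0 ≤ lam) (hB : 0 ≤ B) {k : ℤ} (hk : k ≠ 0) {J N : ℝ → ℂ} {m : ℂ}
    (hJ : ∀ w ∈ Ioo (-(1:ℝ)/2) (1/2), J w = ((|w| ^ (-α) : ℝ) : ℂ) *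
      (N w + ((α * (1 - ‖avg (ex k) w 0‖ ^ 2) : ℝ) : ℂ) * m))
    (hN : ∀ w ∈ Ioo (-(1:ℝ)/2) (1/2), ‖N w‖ ≤ |w| ^ (2 * θ) * B)
    (hi : IntegrableOn J (Ioo (-(1:ℝ)/2) (1/2)))
    (h0 : (∫ w in Ioo (-(1:ℝ)/2) (1/2), J w) + lam * m = 0) :
    α * |(k : ℝ)| ^ (α - 1) * ‖m‖ ≤
      40 * (∫ w in Ioo (-(1:ℝ)/2) (1/2), |w| ^ (2 * θ - α)) * B := by
  set C := ∫ w in Ioo (-(1:ℝ)/2) (1/2), |w| ^ (2 * θ - α) with hC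
  have hC0 : 0 ≤ C := integral_nonneg fun w => by positivity
  rcases eq_or_ne m 0 with rfl | hm
  · simp only [norm_zero, mul_zero]
    positivity
  have hm := norm_pos_iff.2 hm
  set K := |(k : ℝ)| with hK
  have hK1 : 1 ≤ K := by
    rw [hK]
    exact_mod_cast Int.one_le_abs hk
  have hK0 : 0 < K := by linarith
  set I : Set ℝ := Ico (2 / 5 / K) (1 / 2 / K) with hI
  have hIsub : I ⊆ Ioo (-(1:ℝ)/2) (1/2) := fun w hw => by
    have h1 : 0 < 2 / 5 / K := by positivity
    have h2 : 1 / 2 / K ≤ 1 / 2 := div_le_self (by norm_num) hK1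
    exact ⟨by linarith [hw.1], by linarith [hw.2]⟩
  set A := α * K ^ α * ‖m‖ ^ 2 / 4 with hA
  have hlow : ∀ w ∈ Ioo (-(1:ℝ)/2) (1/2),
      I.indicator (fun _ => A) w - |w| ^ (2 * θ - α) * (B * ‖m‖) ≤
        (J w * starRingEnd ℂ m).re := fun w hw => by
    rcases eq_or_ne w 0 with rfl | hw0
    · have h1 : (0:ℝ) ∉ I := fun h => by
        have : 0 < 2 / 5 / K := by positivity
        linarith [h.1]
      have h2 : J 0 = 0 := by rw [hJ _ hw, abs_zero, Real.zero_rpow (by linarith)]; simp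
      rw [h2, indicator_of_notMem h1, abs_zero]
      have : 0 ≤ (0:ℝ) ^ (2 * θ - α) * (B * ‖m‖) := by positivity
      simpa using this
    have hwp := abs_pos.2 hw0
    have e1 : (J w * starRingEnd ℂ m).re = |w| ^ (-α) * (N w * starRingEnd ℂ m).re +
        |w| ^ (-α) * (α * (1 - ‖avg (ex k) w 0‖ ^ 2)) * ‖m‖ ^ 2 := by
      rw [hJ w hw, mul_assoc, Complex.re_ofReal_mul, add_mul, Complex.add_re, mul_assoc,
        Complex.mul_conj, Complex.re_ofReal_mul, Complex.ofReal_re, Complex.normSq_eq_norm_sq]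
      ring
    have h1 : -(|w| ^ (2 * θ - α) * (B * ‖m‖)) ≤ |w| ^ (-α) * (N w * starRingEnd ℂ m).re := by
      have h2 : -(‖N w‖ * ‖m‖) ≤ (N w * starRingEnd ℂ m).re := by
        have := neg_le_of_abs_le (Complex.abs_re_le_norm (N w * starRingEnd ℂ m))
        rwa [norm_mul, RCLike.norm_conj] at this
      have h3 : |w| ^ (-α) * (‖N w‖ * ‖m‖) ≤ |w| ^ (-α) * (|w| ^ (2 * θ) * B * ‖m‖) := by
        gcongr
        exact hN w hw
      have h4 : |w| ^ (2 * θ - α) = |w| ^ (-α) * |w| ^ (2 * θ) := by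
        rw [← Real.rpow_add hwp]; ring_nf
      rw [h4]
      have h5 : 0 ≤ |w| ^ (-α) := by positivity
      nlinarith
    have h2 : I.indicator (fun _ => A) w ≤
        |w| ^ (-α) * (α * (1 - ‖avg (ex k) w 0‖ ^ 2)) * ‖m‖ ^ 2 := by
      by_cases hw : w ∈ I
      · rw [indicator_of_mem hw]
        have hw1 : 2 / 5 ≤ w * K := (div_le_iff₀ hK0).1 hw.1
        have hw2 : w * K < 1 / 2 := (lt_div_iff₀ hK0).1 hw.2
        have hwp : 0 < w := pos_of_mul_pos_left (by linarith) hK0.le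
        have h3 := one_fourth_le_one_sub_norm_avg_ex_sq (k := k) (w := w) (by
          rw [abs_mul, abs_of_pos hwp, mul_comm]; exact hw1)
        have h4 : K ^ α ≤ |w| ^ (-α) := by
          rw [abs_of_pos hwp, Real.rpow_neg hwp.le, ← Real.inv_rpow hwp.le]
          refine Real.rpow_le_rpow hK0.le ?_ hα.le
          rw [le_inv_comm₀ hK0 hwp, ← one_div, le_div_iff₀ hK0]
          linarith
        calc A = K ^ α * (α * (1 / 4)) * ‖m‖ ^ 2 := by rw [hA]; ring
          _ ≤ _ := by gcongr
      · rw [indicator_of_notMem hw]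
        have h3 := norm_avg_ex_le_one k w 0
        have h4 : 0 ≤ 1 - ‖avg (ex k) w 0‖ ^ 2 := by
          nlinarith [norm_nonneg (avg (ex k) w 0)]
        positivity
    linarith
  have hp : IntegrableOn (fun w : ℝ => |w| ^ (2 * θ - α)) (Ioo (-(1:ℝ)/2) (1/2)) :=
    integrable_abs_rpow (by linarith)
  have hind : IntegrableOn (I.indicator fun _ => A) (Ioo (-(1:ℝ)/2) (1/2)) :=
    (integrable_const A).indicator measurableSet_Ico
  have hg := hi.mul_const (starRingEnd ℂ m)
  have h1 := setIntegral_mono_on (hind.sub (hp.mul_const (B * ‖m‖))) hg.re measurableSet_Ioo hlow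
  have e1 : ∫ w in Ioo (-(1:ℝ)/2) (1/2), (J w * starRingEnd ℂ m).re = -(lam * ‖m‖ ^ 2) := by
    have h2 : ∫ w in Ioo (-(1:ℝ)/2) (1/2), (J w * starRingEnd ℂ m).re =
        (∫ w in Ioo (-(1:ℝ)/2) (1/2), J w * starRingEnd ℂ m).re := integral_re hg
    rw [h2, integral_mul_const, eq_neg_of_add_eq_zero_left h0, neg_mul, mul_assoc,
      Complex.mul_conj, Complex.neg_re, Complex.re_ofReal_mul, Complex.ofReal_re,
      Complex.normSq_eq_norm_sq]
  have e2 : ∫ w in Ioo (-(1:ℝ)/2) (1/2), I.indicator (fun _ => A) w = A / (10 * K) := by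
    rw [setIntegral_indicator measurableSet_Ico, inter_eq_right.2 hIsub, setIntegral_const,
      Measure.real, Real.volume_Ico, ENNReal.toReal_ofReal]
    · simp only [smul_eq_mul]
      field_simp
      ring
    · rw [← sub_div]
      positivity
  have h2 : A / (10 * K) - C * (B * ‖m‖) ≤ -(lam * ‖m‖ ^ 2) := by
    rw [← e1, ← e2, hC, ← integral_mul_const, ← integral_sub hind (hp.mul_const _)]
    exact h1
  have h3 : A / (10 * K) = α * K ^ (α - 1) * ‖m‖ * ‖m‖ / 40 := by
    rw [Real.rpow_sub_one hK0.ne', hA]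
    field_simp
    norm_num
  have h4 : 0 ≤ lam * ‖m‖ ^ 2 := by positivity
  refine le_of_mul_le_mul_right ?_ hm
  rw [h3] at h2
  linarith

theorem ne_top_of_hsum_lt_top {s : ℝ} {A : ℤ → ℝ≥0∞} (h : hsum s A < ⊤) (k : ℤ) : A k ≠ ⊤ := by
  intro hk
  have h1 := ENNReal.ne_top_of_tsum_ne_top h.ne k
  have h2 : wt k ^ s ≠ 0 := by simp [ENNReal.rpow_eq_zero_iff, wt_ne_zero, wt_ne_top]
  simp [hk, ENNReal.mul_top h2] at h1

namespace Stationary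

variable {α lam c : ℝ} {γ : ℝ → Rn n}

theorem exists_decay (St : Stationary α lam c γ) (hα : α ∈ Ioo (2:ℝ) 3) (hlam : 0 ≤ lam)
    {a : ℤ → ℝ≥0∞} (ha : ∀ j, Maj (comp (deriv γ) j) a) {s μ θ : ℝ} (hμ : 0 < μ)
    (hsμ : s + 1 / 2 < μ) (h0 : 0 ≤ θ) (h1 : θ ≤ 1) (hθ : α - 2 * θ < 1)
    (has : wsum (max s 0) a < ⊤) (hb : hsum μ (fracMaj θ a) < ⊤) :
    ∃ M : ℤ → ℝ≥0∞, hsum s M < ⊤ ∧ ∀ j, ∀ k : ℤ, k ≠ 0 →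
      ENNReal.ofReal (|(k : ℝ)| ^ (α - 1)) * ‖fc (comp (deriv γ) j) k‖ₑ ≤ M k := by
  have hα0 : 0 < α := by linarith [hα.1]
  have hf := contPer_deriv St.contDiff St.per
  have hunit : ∀ u, ∑ j, comp (deriv γ) j u ^ 2 = 1 := fun u => by
    have h := sum_avg_comp_sq hf.cont 0 u
    simp only [avg_zero] at h
    rw [← h, St.arc u]
    norm_num
  have hle : ∀ w u, ‖avg (deriv γ) w u‖ ≤ 1 := norm_avg_le fun u => (St.arc u).le
  have hc1 : c ≤ 1 := (St.chord 0 (by norm_num) 0).trans (hle 0 0)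
  have hc0 := St.pos
  have hρq : ∀ w ∈ Icc (-(1/2):ℝ) (1/2), ∀ u, |1 - ‖avg (deriv γ) w u‖ ^ 2| ≤ 1 - c ^ 2 :=
    fun w hw u => by
      have h2 := St.chord w hw u
      have h3 := hle w u
      rw [abs_le]
      constructor <;> nlinarith
  have key := exists_maj_rpow (F := comp (deriv γ)) (fun j => hf.comp j) hunit ha hμ hsμ h0 h1
    has hb (q := 1 - c ^ 2) (by nlinarith) (by nlinarith) (S := Icc (-(1/2):ℝ) (1/2))
    (ρ := fun w u => ‖avg (deriv γ) w u‖ ^ 2) (fun w _ u => sum_avg_comp_sq hf.cont w u) hρq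
  obtain ⟨M₁, hM₁, m₁⟩ := key (α / 2)
  obtain ⟨M₂, hM₂, m₂⟩ := key (α / 2 + 1)
  set C := ∫ w in Ioo (-(1:ℝ)/2) (1/2), |w| ^ (2 * θ - α)
  refine ⟨fun k => ENNReal.ofReal (40 * C / α) * (M₁ k + M₁ k + ENNReal.ofReal α * M₂ k), ?_,
    fun j k hk => ?_⟩
  · rw [hsum_const_mul]
    refine ENNReal.mul_lt_top (by finiteness) (hsum_add_lt_top (hsum_add_lt_top hM₁ hM₁) ?_)
    rw [hsum_const_mul]
    exact ENNReal.mul_lt_top (by finiteness) hM₂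
  have t₁ := ne_top_of_hsum_lt_top hM₁ k
  have t₂ := ne_top_of_hsum_lt_top hM₂ k
  set B := M₁ k + M₁ k + ENNReal.ofReal α * M₂ k with hB
  have hBt : B ≠ ⊤ := by finiteness
  set m := fc (comp (deriv γ) j) k with hm
  obtain ⟨hi, he⟩ := St.firstVarC_ex hα hk j
  have hF := hf.comp j
  have hest := norm_mul_rpow_le_of_integral_eq_zero (α := α) (θ := θ) (lam := lam)
    (B := B.toReal) hα0 hθ hlam ENNReal.toReal_nonneg hk
    (J := fun w => ∫ u in Ioc (0:ℝ) 1, firstVarC α (deriv γ) j (ex (-k)) u w)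
    (N := fun w =>
      fc (fun u => comp (deriv γ) j u *
        (((‖avg (deriv γ) w u‖ ^ 2) ^ (-(α / 2)) - 1 : ℝ) : ℂ)) k
      + ex (-k) w * fc (fun u => comp (deriv γ) j (u + w) *
        (((‖avg (deriv γ) w u‖ ^ 2) ^ (-(α / 2)) - 1 : ℝ) : ℂ)) k
      - α * starRingEnd ℂ (avg (ex k) w 0) * fc (fun u => avg (comp (deriv γ) j) w u *
        (((‖avg (deriv γ) w u‖ ^ 2) ^ (-(α / 2 + 1)) - 1 : ℝ) : ℂ)) k) (m := m)
    (fun w hw => ?_) (fun w hw => ?_) hi.integral_prod_right (by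
      rw [← he, cellMeasure, integral_prod_symm _ hi])
  · have h2 : α * (|(k : ℝ)| ^ (α - 1) * ‖m‖) ≤ 40 * C * B.toReal := by
      rwa [mul_assoc] at hest
    have h3 : |(k : ℝ)| ^ (α - 1) * ‖m‖ ≤ 40 * C / α * B.toReal := by
      rw [div_mul_eq_mul_div, le_div_iff₀ hα0]
      linarith
    have hC : 0 ≤ C := integral_nonneg fun w => by positivity
    rw [← ofReal_norm, ← ENNReal.ofReal_mul (by positivity)]
    refine (ENNReal.ofReal_le_ofReal h3).trans ?_
    rw [ENNReal.ofReal_mul (by positivity), ENNReal.ofReal_toReal hBt]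
  · have hw' : w ∈ Icc (-(1/2):ℝ) (1/2) := ⟨by linarith [hw.1], hw.2.le⟩
    rw [← intervalIntegral.integral_of_le zero_le_one, integral_firstVarC hf α j k fun u =>
      norm_pos_iff.1 (hc0.trans_le (St.chord w hw' u))]
  · have hw' : w ∈ Icc (-(1/2):ℝ) (1/2) := ⟨by linarith [hw.1], hw.2.le⟩
    have e₁ := m₁ w hw' _ hF (ha j) k
    have e₂ := m₁ w hw' _ (hF.shift w) ((ha j).shift hF w) k
    have e₃ := m₂ w hw' _ (hF.avg w) ((ha j).avg hF w) k
    rw [← ENNReal.ofReal_le_ofReal_iff (by positivity), ofReal_norm,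
      ENNReal.ofReal_mul (by positivity), ENNReal.ofReal_toReal hBt, hB, mul_add, mul_add]
    refine (enorm_sub_le).trans (add_le_add ((enorm_add_le _ _).trans (add_le_add e₁ ?_)) ?_)
    · rw [enorm_mul, ← ofReal_norm (ex _ _), norm_ex, ENNReal.ofReal_one, one_mul]
      exact e₂
    · rw [mul_assoc, enorm_mul, enorm_mul, mul_left_comm (ENNReal.ofReal _) (ENNReal.ofReal α),
        ← ofReal_norm (α : ℂ), Complex.norm_real, Real.norm_of_nonneg hα0.le]
      refine mul_le_mul' le_rfl ?_
      rw [← ofReal_norm (starRingEnd ℂ _), RCLike.norm_conj]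
      refine (mul_le_mul' (ENNReal.ofReal_le_one.2 (norm_avg_ex_le_one k w 0)) e₃).trans ?_
      rw [one_mul]

end Stationary

/-- A stationary point `γ ∈ H^{(α+1)/2+σ,2}` of `E^α + λL` (injective,
arc-length, `σ > 0`) belongs to `H^{α−1/2+σ̂,2}` for every `0 < σ̂ < σ`. -/
theorem statement17 {n : ℕ} (hn : 2 ≤ n) {α lam σ : ℝ} (hα : α ∈ Ioo (2:ℝ) 3)
    (hlam : 0 < lam) (hσ : 0 < σ)
    {γ : ℝ → Rn n} (hγ : MemHF ((α + 1) / 2 + σ) γ) (hinj : PerInjective γ)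
    (harc : ArcLengthParam γ)
    (hstat : ∀ h : ℝ → Rn n, MemH1 ((α - 1) / 2) h →
      ∃ d : ℝ, HasDirDeriv (oharaER α) γ h d ∧
        d + lam * ∫ u in Ioc (0:ℝ) 1, ⟪deriv γ u, deriv h u⟫ = 0) :
    ∀ σh ∈ Ioo (0:ℝ) σ, MemHF (α - 1/2 + σh) γ := by
  rintro σh ⟨hσ0, hσ1⟩
  obtain ⟨hα2, hα3⟩ := hα
  set ε := min ((σ - σh) / 2) ((3 - α) / 4) with hε
  have hε0 : 0 < ε := lt_min (by linarith) (by linarith)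
  have hε1 : ε ≤ (σ - σh) / 2 := min_le_left _ _
  have hε2 : ε ≤ (3 - α) / 4 := min_le_right _ _
  have hcd := contDiff_of_memHF (by linarith) hγ
  have hf := contPer_deriv hcd hγ.1
  have hsum_a : hsum ((α - 1) / 2 + σ) (compMaj (deriv γ)) < ⊤ :=
    hsum_compMaj_deriv_lt_top (by linarith) hcd (by convert hγ using 1; ring)
  have hb : hsum (σ - ε) (fracMaj ((α - 1) / 2 + ε) (compMaj (deriv γ))) < ⊤ :=
    hsum_fracMaj_lt_top (by linarith) (by convert hsum_a using 2; ring)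
  have has : wsum (max (σh - 1 / 2) 0) (compMaj (deriv γ)) < ⊤ := by
    refine wsum_lt_top_of_hsum ?_ hsum_a
    rw [← lt_sub_iff_add_lt]
    exact max_lt (by linarith) (by linarith)
  obtain ⟨c, hc0, hc⟩ := exists_chord_lower_bound hcd hγ.1 hinj harc
  obtain ⟨C, -, hC⟩ := exists_meanOsc_le hf (θ := (α - 1) / 2 + ε) (by linarith) (by linarith)
    (maj_compMaj _) ((tsum_le_wsum (le_max_right _ _) _).trans_lt has).ne
    ((hsum_mono_exp (by linarith) _).trans_lt hb)
  have St : Stationary α lam c γ :=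
    ⟨hcd, hγ.1, harc, hc0, hc, integrable_weight hf.cont hα3 (by linarith) hC, hstat⟩
  obtain ⟨M, hM, hdec⟩ := St.exists_decay ⟨hα2, hα3⟩ hlam.le (maj_compMaj _) (s := σh - 1 / 2)
    (by linarith) (by linarith) (by linarith) (by linarith) (by linarith) has hb
  refine memHF_of_hsum (by linarith) ⟨hγ.2.1, hγ.1⟩ fun j => ?_
  have hcoef : ∀ k, wt k ^ α * ‖fc (comp γ j) k‖ₑ ≤ ENNReal.ofReal (2 ^ α) * M k +
      if k = 0 then ‖fc (comp γ j) 0‖ₑ else 0 := fun k => by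
    rcases eq_or_ne k 0 with rfl | hk
    · simp [wt]
    have hk1 : 1 ≤ |(k : ℝ)| := by exact_mod_cast Int.one_le_abs hk
    have h1 : wt k ^ α ≤ ENNReal.ofReal (2 ^ α * |(k : ℝ)| ^ α) := by
      rw [wt_eq_ofReal, ENNReal.ofReal_rpow_of_pos (by positivity),
        ← Real.mul_rpow zero_le_two (abs_nonneg _)]
      apply ENNReal.ofReal_le_ofReal
      gcongr
      linarith
    have h2 : ENNReal.ofReal (|(k : ℝ)| ^ α) * ‖fc (comp γ j) k‖ₑ ≤
        ENNReal.ofReal (|(k : ℝ)| ^ (α - 1)) * ‖fc (comp (deriv γ) j) k‖ₑ := by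
      rw [← ofReal_norm, ← ofReal_norm, ← ENNReal.ofReal_mul (by positivity),
        ← ENNReal.ofReal_mul (by positivity), fc_comp_deriv hcd hγ.1, norm_mul]
      apply ENNReal.ofReal_le_ofReal
      have h3 : ‖(2 * Real.pi * Complex.I * k : ℂ)‖ = 2 * Real.pi * |(k : ℝ)| := by
        simp [abs_of_pos Real.pi_pos]
      have h4 : |(k : ℝ)| ^ α = |(k : ℝ)| ^ (α - 1) * |(k : ℝ)| := by
        rw [Real.rpow_sub_one (by positivity)]
        field_simp
      rw [h3, h4, mul_assoc]
      gcongr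
      nlinarith [Real.pi_gt_three]
    simp only [hk, if_false, add_zero]
    calc wt k ^ α * ‖fc (comp γ j) k‖ₑ
        ≤ ENNReal.ofReal (2 ^ α * |(k : ℝ)| ^ α) * ‖fc (comp γ j) k‖ₑ := by gcongr
      _ = ENNReal.ofReal (2 ^ α) *
          (ENNReal.ofReal (|(k : ℝ)| ^ α) * ‖fc (comp γ j) k‖ₑ) := by
        rw [ENNReal.ofReal_mul (by positivity), mul_assoc]
      _ ≤ _ := by gcongr; exact h2.trans (hdec j k hk)
  rw [show α - 1 / 2 + σh = σh - 1 / 2 + α by ring, ← hsum_wt_mul]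
  refine (hsum_mono hcoef).trans_lt (hsum_add_lt_top ?_ ?_)
  · rw [hsum_const_mul]
    exact ENNReal.mul_lt_top (by finiteness) hM
  · rw [hsum, tsum_eq_single 0 fun k hk => by simp [hk]]
    simp [wt]

end
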